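/- Let α ∈ (0,π), w ∈ (0,π), and L ∈ (0,∞), and let u : P(α,w,L) → ℝ be a translator with boundary value −∞ at every point of the horizontal sides of P(α,w,L) and +∞ at every point of the nonhorizontal sides. Then the gradient map p ↦ ∇u(p) is a bijection from P(α,w,L) onto ℝ². (Equivalently: the Gauss map of the graph of u is a diffeomorphism onto the open upper hemisphere of S².) -/

import Mathlib

/-!
Write `P` for the parallelogram, `W = √(1 + |∇u|²)`, and recall that the translator equation is
`div (∇u / W) = 1 / W`.

*Differences have no saddles.* Fix `h` transversal to the sides and consider
`f(x) = u(x + h) - u(x)` on `P ∩ (P - h)`. It tends to `+∞` along one connected part of the boundary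
and to `-∞` along another, and these exhaust the boundary except for two points. A component of
`{f > c}` reaching the boundary only at the exceptional points is impossible unless `f` is constant:
the field `∇v / W(v) - ∇u / W(u)`, `v = u(· + h)`, weighted by a cutoff of `f - c` times `exp v`, is
bounded with nonnegative divergence, and two points carry no flux of a bounded field (`flux_lemma`,
`flux_grad_eq`). Hence super- and sublevel sets of `f` are connected (`superlevel_preconnected`,
`level_conn`), and in the plane this excludes saddles (`curves_cross`, `no_saddle`).

*Equal gradients imply equal Hessians.* If `∇u(p + h) = ∇u(p)`, the difference of the Hessians is
trace free with respect to a positive form, so it is zero or indefinite; indefinite would be a saddle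
of `f`. Nontransversal `h` are perturbed (`hess_eq_generic`, `hess_eq`). Infinitesimally, a kernel
vector of the Hessian also annihilates the third derivative (`third_kernel`).

*The Hessian is nondegenerate.* The determinant `D` of the Hessian satisfies a linear elliptic
equation near its zeros (`det_equation`) and by `third_kernel` its gradient vanishes wherever `D`
does, so by the Hopf lemma its zero set is open (`hopf`, `vanish_near`, `det_vanish`). If `D`
vanished identically, the kernel direction would be constant (`kernel_all`) and some `u(x + h) - u(x)`
would be constant, contradicting the infinite boundary values (`not_const_shift`). Thus `D` never
vanishes (`det_ne`).

*Injectivity.* If `∇u(p + h) = ∇u(p)`, equality of Hessians and the inverse function theorem give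
`∇u(x + h) = ∇u(x)` near `p`, hence on all of `P ∩ (P - h)`, so `h = 0` by `not_const_shift`
(`grad_inj`).

*Surjectivity.* On `{|∇u - A| < 1}` the equation bounds `|D²u|²` by a constant plus a multiple of
`|D|`, whose integral there is at most the area of a disc because `∇u` is injective; so the Hessian
is square integrable (`lintegral_hess_lt`). If a value is missed, there are a boundary point `e` and a
vector `A` such that every small circle about `e` meets `{|∇u - A| < 1/2}` (`exists_bad_point`). Such
a circle leaves `P` through an open side, where `u` is infinite, so the gradient does not stay
within distance `1` of `A` and travels at least `1/2` along the circle (`arc_lower`, `circle_lower`).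
By Cauchy–Schwarz and polar coordinates the energy is at least a multiple of `∫ dr / r`, a
contradiction (`energy_infinite`).
-/

open Real Filter MeasureTheory Set

noncomputable section

/-- Partial derivative with respect to the first variable. -/
def pdx (u : ℝ × ℝ → ℝ) (p : ℝ × ℝ) : ℝ := fderiv ℝ u p (1, 0)

/-- Partial derivative with respect to the second variable. -/
def pdy (u : ℝ × ℝ → ℝ) (p : ℝ × ℝ) : ℝ := fderiv ℝ u p (0, 1)

/-- `u` is a smooth solution of the translator equation
`(1 + u_y²)u_xx − 2u_x u_y u_xy + (1 + u_x²)u_yy = 1 + u_x² + u_y²` on `Ω`. -/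
def IsTranslatorOn (Ω : Set (ℝ × ℝ)) (u : ℝ × ℝ → ℝ) : Prop :=
  ContDiffOn ℝ (⊤ : ℕ∞) u Ω ∧
  ∀ p ∈ Ω,
    (1 + (pdy u p) ^ 2) * pdx (pdx u) p
      - 2 * pdx u p * pdy u p * pdy (pdx u) p
      + (1 + (pdx u p) ^ 2) * pdy (pdy u) p
    = 1 + (pdx u p) ^ 2 + (pdy u p) ^ 2

/-- The open parallelogram `P(α, w, L)`. -/
def Pgram (α w L : ℝ) : Set (ℝ × ℝ) :=
  {p | 0 < p.2 ∧ p.2 < w ∧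
       p.2 * Real.cos α / Real.sin α < p.1 ∧
       p.1 < L + p.2 * Real.cos α / Real.sin α}

/-- `u` is a translator on `P(α,w,L)` with boundary value `−∞` at every point of the
horizontal sides and `+∞` at every point of the nonhorizontal sides. -/
def ScherkBVP (α w L : ℝ) (u : ℝ × ℝ → ℝ) : Prop :=
  IsTranslatorOn (Pgram α w L) u ∧
  (∀ x : ℝ, 0 < x → x < L →
      Tendsto u (nhdsWithin (x, 0) (Pgram α w L)) atBot) ∧
  (∀ x : ℝ, w * Real.cos α / Real.sin α < x → x < L + w * Real.cos α / Real.sin α →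
      Tendsto u (nhdsWithin (x, w) (Pgram α w L)) atBot) ∧
  (∀ y : ℝ, 0 < y → y < w →
      Tendsto u (nhdsWithin (y * Real.cos α / Real.sin α, y) (Pgram α w L)) atTop) ∧
  (∀ y : ℝ, 0 < y → y < w →
      Tendsto u (nhdsWithin (L + y * Real.cos α / Real.sin α, y) (Pgram α w L)) atTop)

/-- The region `Ω(α, w)`: a "parallelogram" whose right-hand side is at infinity. -/
def OmegaReg (α w : ℝ) : Set (ℝ × ℝ) :=
  {p | 0 < p.2 ∧ p.2 < w ∧ p.2 * Real.cos α / Real.sin α < p.1}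

/-- `u` is a translator on `Ω(α,w)` with boundary value `−∞` at every point of the two
horizontal edges and `+∞` at every point of the nonhorizontal edge. -/
def ScherkenoidBVP (α w : ℝ) (u : ℝ × ℝ → ℝ) : Prop :=
  IsTranslatorOn (OmegaReg α w) u ∧
  (∀ x : ℝ, 0 < x → Tendsto u (nhdsWithin (x, 0) (OmegaReg α w)) atBot) ∧
  (∀ x : ℝ, w * Real.cos α / Real.sin α < x →
      Tendsto u (nhdsWithin (x, w) (OmegaReg α w)) atBot) ∧
  (∀ y : ℝ, 0 < y → y < w →
      Tendsto u (nhdsWithin (y * Real.cos α / Real.sin α, y) (OmegaReg α w)) atTop)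

/-- The full strip `ℝ × (0, w)`. -/
def TStrip (w : ℝ) : Set (ℝ × ℝ) := {p | 0 < p.2 ∧ p.2 < w}

/-- The half strip `(0,∞) × (0, w)`. -/
def THalfStrip (w : ℝ) : Set (ℝ × ℝ) := {p | 0 < p.1 ∧ 0 < p.2 ∧ p.2 < w}

/-- A pitchfork function of width `w`: a translator on `ℝ × (0,w)` with boundary value
`+∞` at `(x,0)` for `x < 0`, `−∞` at `(x,0)` for `x > 0`, and `−∞` at `(x,w)` for all `x`. -/
def IsPitchfork (w : ℝ) (u : ℝ × ℝ → ℝ) : Prop :=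
  IsTranslatorOn (TStrip w) u ∧
  (∀ x : ℝ, x < 0 → Tendsto u (nhdsWithin (x, 0) (TStrip w)) atTop) ∧
  (∀ x : ℝ, 0 < x → Tendsto u (nhdsWithin (x, 0) (TStrip w)) atBot) ∧
  (∀ x : ℝ, Tendsto u (nhdsWithin (x, w) (TStrip w)) atBot)

/-- The downward-tilted grim reaper `g_w` of width `w ≥ π`, normalized by `g_w(0,w/2) = 0`. -/
def grimTilt (w : ℝ) (p : ℝ × ℝ) : ℝ :=
  (w / π) ^ 2 * Real.log (Real.sin (π * p.2 / w)) - p.1 * Real.sqrt ((w / π) ^ 2 - 1)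


/-! ### Plane topology: crossing curves and saddles -/

/-- A continuous function without zeros on the unit square has a continuous logarithm there. -/
lemma exists_log_on_square {f : ℝ × ℝ → ℂ} (hf : Continuous f)
    (h0 : ∀ s ∈ Icc (0:ℝ) 1, ∀ t ∈ Icc (0:ℝ) 1, f (s, t) ≠ 0) :
    ∃ g : ℝ × ℝ → ℂ, Continuous g ∧
      ∀ s ∈ Icc (0:ℝ) 1, ∀ t ∈ Icc (0:ℝ) 1, Complex.exp (g (s, t)) = f (s, t) := by
  let c : ℝ → ℝ := fun x => max 0 (min x 1)
  have hc : Continuous c := by fun_prop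
  have hcm : ∀ x, c x ∈ Icc (0:ℝ) 1 := fun x =>
    ⟨le_max_left _ _, max_le zero_le_one (min_le_right _ _)⟩
  have hcx : ∀ x ∈ Icc (0:ℝ) 1, c x = x := by
    intro x hx
    simp [c, hx.1, hx.2]
  let F : C(ℝ × ℝ, ℂ) := ⟨fun p => f (c p.1, c p.2), by fun_prop⟩
  have hF : ∀ a, F a ∈ ({0}ᶜ : Set ℂ) := fun a => by
    simpa [F] using h0 _ (hcm a.1) _ (hcm a.2)
  obtain ⟨g, ⟨-, hg⟩, -⟩ := Complex.isCoveringMapOn_exp.existsUnique_continuousMap_lifts F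
    (a₀ := (0, 0)) (e₀ := Complex.log (F (0, 0))) (Complex.exp_log (hF _)) hF
  refine ⟨g, g.continuous, fun s hs t ht => ?_⟩
  have := congrFun hg (s, t)
  simpa [F, hcx s hs, hcx t ht] using this

/-- The change of a continuous logarithm over `[0,1]` depends only on the function, up to
a constant factor. -/
lemma log_change_unique {g₁ g₂ : ℝ → ℂ} (h₁ : Continuous g₁) (h₂ : Continuous g₂) {k : ℂ}
    (h : ∀ t ∈ Icc (0:ℝ) 1, Complex.exp (g₁ t) = k * Complex.exp (g₂ t)) :
    g₁ 1 - g₁ 0 = g₂ 1 - g₂ 0 := by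
  have h0 : (0:ℝ) ∈ Icc (0:ℝ) 1 := by simp
  have h1 : (1:ℝ) ∈ Icc (0:ℝ) 1 := by simp
  let d : ℝ → ℂ := fun t => (g₁ t - g₂ t) - (g₁ 0 - g₂ 0)
  have hd : Continuous d := by fun_prop
  have hk : ∀ t ∈ Icc (0:ℝ) 1, Complex.exp (d t) = 1 := by
    intro t ht
    have e1 := h t ht
    have e0 := h 0 h0
    simp only [d, Complex.exp_sub]
    rw [e1, e0]
    have hk : k ≠ 0 := by
      rintro rfl
      simp at e0
    have := Complex.exp_ne_zero (g₂ t)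
    have := Complex.exp_ne_zero (g₂ 0)
    field_simp
  have hsub : MapsTo d (Icc 0 1) (AddSubgroup.zmultiples (2 * (π:ℂ) * Complex.I) : Set ℂ) := by
    intro t ht
    obtain ⟨n, hn⟩ := Complex.exp_eq_one_iff.1 (hk t ht)
    exact ⟨n, by simp [hn]⟩
  have hdisc : DiscreteTopology (AddSubgroup.zmultiples (2 * (π:ℂ) * Complex.I) : Set ℂ) :=
    NormedSpace.discreteTopology_zmultiples _
  obtain ⟨y, -, hy⟩ := isPreconnected_Icc.eqOn_const_of_mapsTo (T := 
    (AddSubgroup.zmultiples (2 * (π:ℂ) * Complex.I) : Set ℂ)) ⟨hdisc⟩ hd.continuousOn hsub ⟨0, ⟨0, by simp⟩⟩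
  have := (hy h1).trans (hy h0).symm
  simp only [d] at this
  linear_combination this

/-- A quarter turn changes the logarithm by `iπ/2`; the reference value for the winding argument in
`curves_cross`. -/
lemma log_change_aux : Complex.log (1 + Complex.I) - Complex.log (1 - Complex.I)
    = (π / 2 : ℝ) * Complex.I := by
  have h1 : (1 + Complex.I) = (√2 : ℝ) * (Complex.cos (π / 4 : ℝ) + Complex.sin (π / 4 : ℝ) * Complex.I) := by
    rw [← Complex.ofReal_cos, ← Complex.ofReal_sin, Real.cos_pi_div_four, Real.sin_pi_div_four]
    have : (√2 : ℂ) * √2 = 2 := by norm_cast; exact Real.mul_self_sqrt (by norm_num)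
    push_cast
    linear_combination (-(1 + Complex.I) / 2) * this
  have h2 : (1 - Complex.I) = (√2 : ℝ) * (Complex.cos (-(π / 4) : ℝ) + Complex.sin (-(π / 4) : ℝ) * Complex.I) := by
    rw [← Complex.ofReal_cos, ← Complex.ofReal_sin, Real.cos_neg, Real.sin_neg, Real.cos_pi_div_four, Real.sin_pi_div_four]
    have : (√2 : ℂ) * √2 = 2 := by norm_cast; exact Real.mul_self_sqrt (by norm_num)
    push_cast
    linear_combination (-(1 - Complex.I) / 2) * this
  have hs : (0:ℝ) < √2 := by positivity
  have hp := Real.pi_pos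
  have e1 : (1 + Complex.I).arg = π / 4 := by
    rw [h1, Complex.arg_mul_cos_add_sin_mul_I hs ⟨by linarith, by linarith⟩]
  have e2 : (1 - Complex.I).arg = -(π / 4) := by
    rw [h2, Complex.arg_mul_cos_add_sin_mul_I hs ⟨by linarith, by linarith⟩]
  have e3 : ‖1 + Complex.I‖ = ‖1 - Complex.I‖ := by
    simp [Complex.norm_def, Complex.normSq_apply]
  rw [Complex.log, Complex.log, e1, e2, e3]
  push_cast; ring

/-- Two curves in the plane joining opposite ends of the two arms of a cross, the first avoiding
the vertical arm and the second avoiding the horizontal arm, must meet. -/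
lemma curves_cross {γ₁ γ₂ : ℝ → ℂ} (h₁ : Continuous γ₁) (h₂ : Continuous γ₂)
    (a0 : γ₁ 0 = 1) (a1 : γ₁ 1 = -1) (b0 : γ₂ 0 = Complex.I) (b1 : γ₂ 1 = -Complex.I)
    (hne : ∀ s ∈ Icc (0:ℝ) 1, ∀ t ∈ Icc (0:ℝ) 1, γ₁ s ≠ γ₂ t)
    (hy : ∀ s ∈ Icc (0:ℝ) 1, ∀ y ∈ Icc (-1:ℝ) 1, γ₁ s ≠ y * Complex.I)
    (hx : ∀ s ∈ Icc (0:ℝ) 1, ∀ x ∈ Icc (-1:ℝ) 1, γ₂ s ≠ x) : False := by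
  have h0 : (0:ℝ) ∈ Icc (0:ℝ) 1 := by simp
  have h1 : (1:ℝ) ∈ Icc (0:ℝ) 1 := by simp
  have hm : ∀ t ∈ Icc (0:ℝ) 1, 2 * t - 1 ∈ Icc (-1:ℝ) 1 := fun t ht =>
    ⟨by linarith [ht.1], by linarith [ht.2]⟩
  obtain ⟨A, hA, eA⟩ := exists_log_on_square (f := fun p => γ₁ p.1 - γ₂ p.2) (by fun_prop)
    fun s hs t ht => sub_ne_zero.2 (hne s hs t ht)
  obtain ⟨B, hB, eB⟩ := exists_log_on_square
    (f := fun p => γ₁ p.1 - ((2 * p.2 - 1 : ℝ) : ℂ) * Complex.I) (by fun_prop)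
    fun s hs t ht => sub_ne_zero.2 (hy s hs _ (hm t ht))
  obtain ⟨C, hC, eC⟩ := exists_log_on_square
    (f := fun p => ((2 * p.1 - 1 : ℝ) : ℂ) - γ₂ p.2) (by fun_prop)
    fun s hs t ht => sub_ne_zero.2 (hx t ht _ (hm s hs)).symm
  simp only at eA eB eC
  have slit : ∀ t : ℝ, (1 + ((t:ℝ):ℂ) * Complex.I) ∈ Complex.slitPlane := fun t => by
    left; simp
  have ec := log_change_unique (g₁ := fun s => A (s, 0)) (g₂ := fun s => B (s, 1)) (k := 1)
    (by fun_prop) (by fun_prop) (fun t ht => by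
      rw [eA t ht 0 h0, eB t ht 1 h1, b0]; norm_num)
  have ed := log_change_unique (g₁ := fun s => A (s, 1)) (g₂ := fun s => B (s, 0)) (k := 1)
    (by fun_prop) (by fun_prop) (fun t ht => by
      rw [eA t ht 1 h1, eB t ht 0 h0, b1]; norm_num)
  have ea := log_change_unique (g₁ := fun s => A (0, s)) (g₂ := fun s => C (1, s)) (k := 1)
    (by fun_prop) (by fun_prop) (fun t ht => by
      rw [eA 0 h0 t ht, eC 1 h1 t ht, a0]; norm_num)
  have eb := log_change_unique (g₁ := fun s => A (1, s)) (g₂ := fun s => C (0, s)) (k := 1)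
    (by fun_prop) (by fun_prop) (fun t ht => by
      rw [eA 1 h1 t ht, eC 0 h0 t ht, a1]; norm_num)
  have cont : ∀ k : ℝ, Continuous fun t : ℝ =>
      Complex.log (1 + ((k * (2 * t - 1) : ℝ) : ℂ) * Complex.I) := fun k =>
    Continuous.clog (by fun_prop) fun t => slit _
  have f0 := log_change_unique (g₁ := fun t => B (0, t)) (k := 1) (by fun_prop) (cont (-1))
    (fun t ht => by
      rw [eB 0 h0 t ht, Complex.exp_log (Complex.slitPlane_ne_zero (slit _)), a0]; push_cast; ring)
  have f1 := log_change_unique (g₁ := fun t => B (1, t)) (k := -1) (by fun_prop) (cont 1)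
    (fun t ht => by
      rw [eB 1 h1 t ht, Complex.exp_log (Complex.slitPlane_ne_zero (slit _)), a1]; push_cast; ring)
  have f2 := log_change_unique (g₁ := fun t => C (t, 0)) (k := -Complex.I) (by fun_prop) (cont 1)
    (fun t ht => by
      rw [eC t ht 0 h0, Complex.exp_log (Complex.slitPlane_ne_zero (slit _)), b0]; push_cast
      linear_combination (2*t-1) * Complex.I_sq )
  have f3 := log_change_unique (g₁ := fun t => C (t, 1)) (k := Complex.I) (by fun_prop) (cont (-1))
    (fun t ht => by
      rw [eC t ht 1 h1, Complex.exp_log (Complex.slitPlane_ne_zero (slit _)), b1]; push_cast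
      linear_combination (2*t-1) * Complex.I_sq)
  have key := log_change_aux
  norm_num [← sub_eq_add_neg] at f0 f1 f2 f3
  have hpi : (2 * π : ℂ) * Complex.I = 0 := by
    push_cast at key
    linear_combination (-1 : ℂ) * ec + ed + ea - eb - f1 + f0 + f3 - f2 - 4 * key
  simp [Real.pi_ne_zero] at hpi

/-- A continuous function on an open planar set whose super- and sublevel sets at level `c` are
both connected has no saddle at level `c`. -/
lemma no_saddle {D : Set (ℝ × ℝ)} {f : ℝ × ℝ → ℝ} {c : ℝ} (hD : IsOpen D)
    (hf : ContinuousOn f D) (h1 : IsPreconnected {x ∈ D | c < f x})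
    (h2 : IsPreconnected {x ∈ D | f x < c}) {p e₁ e₂ : ℝ × ℝ} (hc : f p = c)
    (hdet : e₁.1 * e₂.2 - e₁.2 * e₂.1 ≠ 0)
    (he₁ : ∀ s : ℝ, s ≠ 0 → |s| ≤ 1 → p + s • e₁ ∈ D ∧ c < f (p + s • e₁))
    (he₂ : ∀ s : ℝ, s ≠ 0 → |s| ≤ 1 → p + s • e₂ ∈ D ∧ f (p + s • e₂) < c) : False := by
  have o1 : IsOpen {x ∈ D | c < f x} := hf.isOpen_inter_preimage hD isOpen_Ioi
  have o2 : IsOpen {x ∈ D | f x < c} := hf.isOpen_inter_preimage hD isOpen_Iio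
  let d := e₁.1 * e₂.2 - e₁.2 * e₂.1
  let Φ : ℝ × ℝ → ℂ := fun x =>
    (((x.1 - p.1) * e₂.2 - (x.2 - p.2) * e₂.1) / d : ℝ) +
      ((e₁.1 * (x.2 - p.2) - e₁.2 * (x.1 - p.1)) / d : ℝ) * Complex.I
  have hΦ : Continuous Φ := by fun_prop
  have hd : d ≠ 0 := hdet
  have Φe1 : ∀ s : ℝ, Φ (p + s • e₁) = s := by
    intro s
    simp only [Φ]
    have a1 : (((p + s • e₁).1 - p.1) * e₂.2 - ((p + s • e₁).2 - p.2) * e₂.1) / d = s := by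
      simp; field_simp; simp only [d]; try ring
    have a2 : (e₁.1 * ((p + s • e₁).2 - p.2) - e₁.2 * ((p + s • e₁).1 - p.1)) / d = 0 := by
      simp; left; ring
    rw [a1, a2]; simp
  have Φe2 : ∀ s : ℝ, Φ (p + s • e₂) = s * Complex.I := by
    intro s
    simp only [Φ]
    have a1 : (((p + s • e₂).1 - p.1) * e₂.2 - ((p + s • e₂).2 - p.2) * e₂.1) / d = 0 := by
      simp; left; ring
    have a2 : (e₁.1 * ((p + s • e₂).2 - p.2) - e₁.2 * ((p + s • e₂).1 - p.1)) / d = s := by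
      simp; field_simp; simp only [d]; try ring
    rw [a1, a2]; simp
  have inj : Function.Injective Φ := by
    intro x y hxy
    have r := congrArg Complex.re hxy
    have i := congrArg Complex.im hxy
    simp [Φ] at r i
    rw [div_left_inj' hd] at r i
    ext
    · apply mul_left_cancel₀ hd
      simp only [d]; linear_combination e₁.1 * r + e₂.1 * i
    · apply mul_left_cancel₀ hd
      simp only [d]; linear_combination e₁.2 * r + e₂.2 * i
  have p1 : JoinedIn {x ∈ D | c < f x} (p + (1:ℝ) • e₁) (p + (-1:ℝ) • e₁) :=
    ((o1.isConnected_iff_isPathConnected).1 ⟨⟨_, he₁ 1 (by simp) (by simp)⟩, h1⟩).joinedIn _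
      (he₁ 1 (by simp) (by simp)) _ (he₁ (-1) (by simp) (by simp))
  have p2 : JoinedIn {x ∈ D | f x < c} (p + (1:ℝ) • e₂) (p + (-1:ℝ) • e₂) :=
    ((o2.isConnected_iff_isPathConnected).1 ⟨⟨_, he₂ 1 (by simp) (by simp)⟩, h2⟩).joinedIn _
      (he₂ 1 (by simp) (by simp)) _ (he₂ (-1) (by simp) (by simp))
  obtain ⟨γ₁, hγ₁⟩ := p1
  obtain ⟨γ₂, hγ₂⟩ := p2
  have m1 : ∀ s ∈ Icc (0:ℝ) 1, c < f (γ₁.extend s) := fun s hs => by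
    rw [Path.extend_apply _ hs]; exact (hγ₁ _).2
  have m2 : ∀ s ∈ Icc (0:ℝ) 1, f (γ₂.extend s) < c := fun s hs => by
    rw [Path.extend_apply _ hs]; exact (hγ₂ _).2
  refine curves_cross (γ₁ := fun s => Φ (γ₁.extend s)) (γ₂ := fun s => Φ (γ₂.extend s))
    (hΦ.comp γ₁.continuous_extend) (hΦ.comp γ₂.continuous_extend) ?_ ?_ ?_ ?_ ?_ ?_ ?_
  · simp only [Path.extend_zero, Φe1]; simp
  · simp only [Path.extend_one, Φe1]; simp
  · simp only [Path.extend_zero, Φe2]; simp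
  · simp only [Path.extend_one, Φe2]; simp
  · intro s hs t ht h
    have := m1 s hs
    rw [inj h] at this
    exact absurd this (m2 t ht).le.not_gt
  · intro s hs y hy h
    have h' : γ₁.extend s = p + y • e₂ := inj (h.trans (Φe2 y).symm)
    have := m1 s hs
    rw [h'] at this
    rcases eq_or_ne y 0 with rfl | hy0
    · simp [hc] at this
    · exact absurd this (he₂ y hy0 (abs_le.2 hy)).2.le.not_gt
  · intro s hs y hy h
    have h' : γ₂.extend s = p + y • e₁ := inj (h.trans (Φe1 y).symm)
    have := m2 s hs
    rw [h'] at this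
    rcases eq_or_ne y 0 with rfl | hy0
    · simp [hc] at this
    · exact absurd this (he₁ y hy0 (abs_le.2 hy)).2.le.not_gt

/-! ### Flux of bounded planar fields with two singular points -/

/-- A cutoff vanishing on the ball of radius `ε` about `e`, equal to `1` beyond distance `2ε`, with
gradient `O(1/ε)` uniformly in `e` and `ε`. -/
lemma exists_puncture_cutoff : ∃ K : ℝ, 0 < K ∧ ∀ (e : ℝ × ℝ) (ε : ℝ), 0 < ε →
    ∃ φ : ℝ × ℝ → ℝ, ContDiff ℝ 1 φ ∧ (∀ x, 0 ≤ φ x) ∧ (∀ x, φ x ≤ 1) ∧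
      (∀ x ∈ Metric.closedBall e ε, φ x = 0) ∧ (∀ x, 2 * ε ≤ dist x e → φ x = 1) ∧
      (∀ x, ‖fderiv ℝ φ x‖ ≤ K / ε) := by
  let b : ContDiffBump (0 : ℝ × ℝ) := ⟨1, 2, by norm_num, by norm_num⟩
  have hb : ContDiff ℝ 1 b := b.contDiff
  obtain ⟨K, hK⟩ := (hb.continuous_fderiv one_ne_zero).bounded_above_of_compact_support
    (b.hasCompactSupport.fderiv (𝕜 := ℝ))
  refine ⟨|K| + 1, by positivity, fun e ε hε => ?_⟩
  refine ⟨fun x => 1 - b (ε⁻¹ • (x - e)), by fun_prop, fun x => ?_, fun x => ?_, fun x hx => ?_,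
    fun x hx => ?_, fun x => ?_⟩
  · linarith [b.le_one (x := ε⁻¹ • (x - e))]
  · linarith [b.nonneg (x := ε⁻¹ • (x - e))]
  · beta_reduce
    rw [b.one_of_mem_closedBall, sub_self]
    rw [mem_closedBall_zero_iff, norm_smul, ← dist_eq_norm, norm_inv, Real.norm_of_nonneg hε.le]
    rw [Metric.mem_closedBall] at hx
    show ε⁻¹ * dist x e ≤ 1
    rw [inv_mul_le_iff₀ hε]; linarith
  · beta_reduce
    rw [b.zero_of_le_dist, sub_zero]
    rw [dist_zero_right, norm_smul, ← dist_eq_norm, norm_inv, Real.norm_of_nonneg hε.le]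
    show 2 ≤ ε⁻¹ * dist x e
    rw [le_inv_mul_iff₀ hε]; linarith
  · have h1 : HasFDerivAt (fun x : ℝ × ℝ => ε⁻¹ • (x - e))
        (ε⁻¹ • (ContinuousLinearMap.id ℝ (ℝ × ℝ))) x :=
      ((hasFDerivAt_id x).sub_const e).const_smul ε⁻¹
    have h2 := ((hb.differentiable one_ne_zero (ε⁻¹ • (x - e))).hasFDerivAt.comp x h1).const_sub 1
    have h3 : fderiv ℝ (fun x => 1 - b (ε⁻¹ • (x - e))) x = _ := h2.fderiv
    rw [h3, norm_neg, ContinuousLinearMap.comp_smul, ContinuousLinearMap.comp_id, norm_smul, norm_inv,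
      Real.norm_of_nonneg hε.le, div_eq_inv_mul]
    gcongr
    exact (hK _).trans ((le_abs_self K).trans (by linarith))

lemma integral_fderiv_eq_zero {Y : ℝ × ℝ → ℝ} (hY : ContDiff ℝ 1 Y) (hs : HasCompactSupport Y)
    (v : ℝ × ℝ) : ∫ x, fderiv ℝ Y x v = 0 := by
  have hc : Continuous fun x => fderiv ℝ Y x v :=
    (hY.continuous_fderiv one_ne_zero).clm_apply continuous_const
  have hs' : HasCompactSupport fun x => fderiv ℝ Y x v := hs.fderiv_apply (𝕜 := ℝ) v
  have := integral_mul_fderiv_eq_neg_fderiv_mul_of_integrable (μ := volume)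
    (f := fun _ : ℝ × ℝ => (1:ℝ)) (g := Y) (v := v) (by simp)
    (by simpa using hc.integrable_of_hasCompactSupport hs')
    (by simpa using hY.continuous.integrable_of_hasCompactSupport hs)
    (fun _ _ => by fun_prop) (fun x _ => hY.differentiable one_ne_zero x)
  simpa using this

lemma contDiff_mul_of_vanish {χ F : ℝ × ℝ → ℝ} {E : Set (ℝ × ℝ)} (hE : IsClosed E)
    (hχ : ContDiff ℝ 1 χ) (h0 : ∀ e ∈ E, ∀ᶠ x in nhds e, χ x = 0) (hF : ContDiffOn ℝ 1 F Eᶜ) :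
    ContDiff ℝ 1 fun x => χ x * F x := by
  rw [contDiff_iff_contDiffAt]
  intro x
  by_cases hx : x ∈ E
  · apply (contDiffAt_const (c := (0:ℝ))).congr_of_eventuallyEq
    filter_upwards [h0 x hx] with y hy
    simp [hy]
  · exact hχ.contDiffAt.mul (hF.contDiffAt (hE.isOpen_compl.mem_nhds hx))

lemma continuous_mul_of_vanish {χ F : ℝ × ℝ → ℝ} {E : Set (ℝ × ℝ)} (hE : IsClosed E)
    (hχ : Continuous χ) (h0 : ∀ e ∈ E, ∀ᶠ x in nhds e, χ x = 0) (hF : ContinuousOn F Eᶜ) :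
    Continuous fun x => χ x * F x := by
  rw [continuous_iff_continuousAt]
  intro x
  by_cases hx : x ∈ E
  · apply (continuousAt_const (y := (0:ℝ))).congr
    filter_upwards [h0 x hx] with y hy
    simp [hy]
  · exact hχ.continuousAt.mul (hF.continuousAt (hE.isOpen_compl.mem_nhds hx))

/-- Flux lemma: a bounded planar vector field with bounded support, `C¹` off two points and with
nonnegative divergence there, is divergence free. The two points have zero capacity for bounded
fields: a cutoff at scale `ε` has gradient `O(1/ε)` on a set of area `O(ε²)`. -/
lemma flux_lemma {Z₁ Z₂ : ℝ × ℝ → ℝ} {e₁ e₂ : ℝ × ℝ} {C R : ℝ}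
    (hb : ∀ x, |Z₁ x| ≤ C ∧ |Z₂ x| ≤ C) (hs : ∀ x, R < ‖x‖ → Z₁ x = 0 ∧ Z₂ x = 0)
    (h₁ : ContDiffOn ℝ 1 Z₁ {e₁, e₂}ᶜ) (h₂ : ContDiffOn ℝ 1 Z₂ {e₁, e₂}ᶜ)
    (hdiv : ∀ x ∈ ({e₁, e₂}ᶜ : Set (ℝ × ℝ)), 0 ≤ pdx Z₁ x + pdy Z₂ x) :
    ∀ x ∈ ({e₁, e₂}ᶜ : Set (ℝ × ℝ)), pdx Z₁ x + pdy Z₂ x = 0 := by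
  intro x₀ hx₀
  by_contra hne
  set E : Set (ℝ × ℝ) := {e₁, e₂} with hE
  have hEc : IsClosed E := (Set.toFinite E).isClosed
  have hEo : IsOpen Eᶜ := hEc.isOpen_compl
  have hpos : 0 < pdx Z₁ x₀ + pdy Z₂ x₀ := lt_of_le_of_ne (hdiv x₀ hx₀) (Ne.symm hne)
  have hC : 0 ≤ C := (abs_nonneg _).trans (hb x₀).1
  have c₁ : ContinuousOn (pdx Z₁) Eᶜ :=
    (h₁.continuousOn_fderiv_of_isOpen hEo le_rfl).clm_apply continuousOn_const
  have c₂ : ContinuousOn (pdy Z₂) Eᶜ :=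
    (h₂.continuousOn_fderiv_of_isOpen hEo le_rfl).clm_apply continuousOn_const
  -- a ball around `x₀` on which the divergence is bounded below
  set δ := (pdx Z₁ x₀ + pdy Z₂ x₀) / 2 with hδ
  have hδ0 : 0 < δ := by positivity
  have hev : ∀ᶠ x in nhds x₀, δ < pdx Z₁ x + pdy Z₂ x ∧ x ∈ Eᶜ := by
    refine Filter.Eventually.and ?_ (hEo.mem_nhds hx₀)
    exact ((c₁.add c₂).continuousAt (hEo.mem_nhds hx₀)).eventually (lt_mem_nhds (by
      simp only [Pi.add_apply, hδ]; linarith))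
  obtain ⟨ρ, hρ, hball⟩ := Metric.eventually_nhds_iff_ball.1 hev
  obtain ⟨K, hK, hcut⟩ := exists_puncture_cutoff
  set V := (volume (Metric.closedBall (0 : ℝ × ℝ) 1)).toReal with hV
  set κ := δ * (volume (Metric.ball x₀ (ρ / 2))).toReal with hκ
  have hκ0 : 0 < κ := mul_pos hδ0 (ENNReal.toReal_pos
    (Metric.measure_ball_pos _ _ (by positivity)).ne' measure_ball_lt_top.ne)
  have hvolb : ∀ (e : ℝ × ℝ) (ε : ℝ), 0 < ε →
      (volume (Metric.closedBall e (2 * ε))).toReal = 4 * ε ^ 2 * V := by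
    intro e ε hε
    rw [Measure.addHaar_closedBall' _ _ (by positivity), ENNReal.toReal_mul, ENNReal.toReal_ofReal
      (by positivity)]
    have : Module.finrank ℝ (ℝ × ℝ) = 2 := by simp
    rw [this, hV]; ring
  -- choose the cutoff scale
  obtain ⟨ε, hε, hε1, hε2⟩ : ∃ ε : ℝ, 0 < ε ∧ ε < ρ / 4 ∧ 32 * C * K * V * ε < κ := by
    have hV0 : 0 ≤ V := ENNReal.toReal_nonneg
    refine ⟨min (ρ / 8) (κ / (2 * (32 * C * K * V + 1))), by positivity, ?_, ?_⟩
    · exact (min_le_left _ _).trans_lt (by linarith)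
    · calc 32 * C * K * V * min (ρ / 8) (κ / (2 * (32 * C * K * V + 1)))
          ≤ 32 * C * K * V * (κ / (2 * (32 * C * K * V + 1))) := by
            gcongr; exact min_le_right _ _
        _ < κ := by
            have : 0 ≤ 32 * C * K * V := by positivity
            rw [mul_div_assoc', div_lt_iff₀ (by positivity)]
            nlinarith
  obtain ⟨φ₁, s₁, n₁, l₁, z₁, o₁, d₁⟩ := hcut e₁ ε hε
  obtain ⟨φ₂, s₂, n₂, l₂, z₂, o₂, d₂⟩ := hcut e₂ ε hε
  set χ : ℝ × ℝ → ℝ := fun x => φ₁ x * φ₂ x with hχ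
  have sχ : ContDiff ℝ 1 χ := s₁.mul s₂
  have χ0 : ∀ e ∈ E, ∀ᶠ x in nhds e, χ x = 0 := by
    rintro e (rfl | rfl)
    · filter_upwards [Metric.closedBall_mem_nhds e hε] with x hx
      simp [hχ, z₁ x hx]
    · filter_upwards [Metric.closedBall_mem_nhds e hε] with x hx
      simp [hχ, z₂ x hx]
  have dχ : ∀ x v, fderiv ℝ χ x v = φ₁ x * fderiv ℝ φ₂ x v + φ₂ x * fderiv ℝ φ₁ x v := by
    intro x v
    have := (((s₁.differentiable one_ne_zero) x).hasFDerivAt.mul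
      ((s₂.differentiable one_ne_zero) x).hasFDerivAt).fderiv
    have h' : fderiv ℝ χ x = _ := this
    rw [h']; simp
  have dχ0 : ∀ v, ∀ e ∈ E, ∀ᶠ x in nhds e, fderiv ℝ χ x v = 0 := by
    intro v e he
    filter_upwards [(χ0 e he).eventually_nhds] with x hx
    have : χ =ᶠ[nhds x] fun _ => (0:ℝ) := hx
    rw [this.fderiv_eq]; simp
  have cχ : ∀ v, Continuous fun x => fderiv ℝ χ x v := fun v =>
    (sχ.continuous_fderiv one_ne_zero).clm_apply continuous_const
  set S := Metric.closedBall e₁ (2 * ε) ∪ Metric.closedBall e₂ (2 * ε) with hS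
  have dχS : ∀ v, ∀ x ∉ S, fderiv ℝ χ x v = 0 := by
    intro v x hx
    have : χ =ᶠ[nhds x] fun _ => (1:ℝ) := by
      have hSo : IsOpen Sᶜ := (Metric.isClosed_closedBall.union Metric.isClosed_closedBall).isOpen_compl
      filter_upwards [hSo.mem_nhds hx] with y hy
      simp only [hS, mem_compl_iff, mem_union, Metric.mem_closedBall, not_or, not_le] at hy
      simp [hχ, o₁ y hy.1.le, o₂ y hy.2.le]
    rw [this.fderiv_eq]; simp
  have dχb : ∀ v : ℝ × ℝ, ‖v‖ ≤ 1 → ∀ x, |fderiv ℝ χ x v| ≤ 2 * (K / ε) := by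
    intro v hv x
    rw [dχ]
    have a1 : |fderiv ℝ φ₁ x v| ≤ K / ε := by
      rw [← Real.norm_eq_abs]
      exact ((fderiv ℝ φ₁ x).le_of_opNorm_le_of_le (d₁ x) hv).trans (by simp)
    have a2 : |fderiv ℝ φ₂ x v| ≤ K / ε := by
      rw [← Real.norm_eq_abs]
      exact ((fderiv ℝ φ₂ x).le_of_opNorm_le_of_le (d₂ x) hv).trans (by simp)
    calc _ ≤ |φ₁ x * fderiv ℝ φ₂ x v| + |φ₂ x * fderiv ℝ φ₁ x v| := abs_add_le _ _
      _ ≤ 1 * (K / ε) + 1 * (K / ε) := by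
        rw [abs_mul, abs_mul, abs_of_nonneg (n₁ x), abs_of_nonneg (n₂ x)]
        gcongr
        exacts [l₁ x, l₂ x]
      _ = _ := by ring
  have y₁ := contDiff_mul_of_vanish hEc sχ χ0 h₁
  have y₂ := contDiff_mul_of_vanish hEc sχ χ0 h₂
  have cs : ∀ F : ℝ × ℝ → ℝ, (∀ x, R < ‖x‖ → F x = 0) → HasCompactSupport F := by
    intro F hF
    refine HasCompactSupport.intro (isCompact_closedBall (0 : ℝ × ℝ) R) fun x hx => hF x ?_
    simpa using hx
  have k₁ : HasCompactSupport fun x => χ x * Z₁ x := cs _ fun x hx => by simp [(hs x hx).1]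
  have k₂ : HasCompactSupport fun x => χ x * Z₂ x := cs _ fun x hx => by simp [(hs x hx).2]
  have i₁ := integral_fderiv_eq_zero y₁ k₁ (1, 0)
  have i₂ := integral_fderiv_eq_zero y₂ k₂ (0, 1)
  set h : ℝ × ℝ → ℝ := fun x => fderiv ℝ χ x (1, 0) * Z₁ x + fderiv ℝ χ x (0, 1) * Z₂ x with hh
  have hcont : Continuous h :=
    (continuous_mul_of_vanish hEc (cχ _) (dχ0 _) h₁.continuousOn).add
      (continuous_mul_of_vanish hEc (cχ _) (dχ0 _) h₂.continuousOn)
  have hsupp : HasCompactSupport h := cs _ fun x hx => by simp [hh, (hs x hx).1, (hs x hx).2]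
  have h_integ : Integrable h := hcont.integrable_of_hasCompactSupport hsupp
  set g : ℝ × ℝ → ℝ := fun x => χ x * (pdx Z₁ x + pdy Z₂ x) with hg
  have hgcont : Continuous g := continuous_mul_of_vanish hEc sχ.continuous χ0 (c₁.add c₂)
  have hsum : ∀ x, g x + h x = fderiv ℝ (fun x => χ x * Z₁ x) x (1, 0)
      + fderiv ℝ (fun x => χ x * Z₂ x) x (0, 1) := by
    intro x
    by_cases hx : x ∈ E
    · have e1 : (fun x => χ x * Z₁ x) =ᶠ[nhds x] fun _ => (0:ℝ) := by
        filter_upwards [χ0 x hx] with y hy; simp [hy]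
      have e2 : (fun x => χ x * Z₂ x) =ᶠ[nhds x] fun _ => (0:ℝ) := by
        filter_upwards [χ0 x hx] with y hy; simp [hy]
      rw [e1.fderiv_eq, e2.fderiv_eq]
      simp [hg, hh, (χ0 x hx).self_of_nhds, (dχ0 _ x hx).self_of_nhds]
    · have q1 := ((sχ.differentiable one_ne_zero x).hasFDerivAt.mul
        ((h₁.contDiffAt (hEo.mem_nhds hx)).differentiableAt one_ne_zero).hasFDerivAt).fderiv
      have q2 := ((sχ.differentiable one_ne_zero x).hasFDerivAt.mul
        ((h₂.contDiffAt (hEo.mem_nhds hx)).differentiableAt one_ne_zero).hasFDerivAt).fderiv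
      have q1' : fderiv ℝ (fun x => χ x * Z₁ x) x = _ := q1
      have q2' : fderiv ℝ (fun x => χ x * Z₂ x) x = _ := q2
      rw [q1', q2']
      simp [hg, hh, pdx, pdy]; ring
  have j₁ : Integrable fun x => fderiv ℝ (fun x => χ x * Z₁ x) x (1, 0) :=
    ((y₁.continuous_fderiv one_ne_zero).clm_apply continuous_const).integrable_of_hasCompactSupport
      (k₁.fderiv_apply (𝕜 := ℝ) _)
  have j₂ : Integrable fun x => fderiv ℝ (fun x => χ x * Z₂ x) x (0, 1) :=
    ((y₂.continuous_fderiv one_ne_zero).clm_apply continuous_const).integrable_of_hasCompactSupport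
      (k₂.fderiv_apply (𝕜 := ℝ) _)
  have hgint : Integrable g := by
    have := (j₁.add j₂).sub h_integ
    refine this.congr (Filter.Eventually.of_forall fun x => ?_)
    simp [← hsum x]
  have htot : ∫ x, g x = - ∫ x, h x := by
    have : ∫ x, (g x + h x) = 0 := by
      simp_rw [hsum]
      rw [integral_add j₁ j₂, i₁, i₂, add_zero]
    rw [integral_add hgint h_integ] at this
    linarith
  have hSfin : volume S < ⊤ := by
    refine (measure_union_le _ _).trans_lt (ENNReal.add_lt_top.2 ⟨?_, ?_⟩) <;>
      exact measure_closedBall_lt_top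
  have hub : |∫ x, h x| ≤ 32 * C * K * V * ε := by
    have hrestr : ∫ x, h x = ∫ x in S, h x := by
      rw [setIntegral_eq_integral_of_forall_compl_eq_zero]
      intro x hx
      simp [hh, dχS _ x hx]
    have hle : ∀ x ∈ S, ‖h x‖ ≤ 4 * C * (K / ε) := by
      intro x _
      have b1 := dχb (1, 0) (by simp [Prod.norm_def]) x
      have b2 := dχb (0, 1) (by simp [Prod.norm_def]) x
      calc ‖h x‖ ≤ |fderiv ℝ χ x (1, 0) * Z₁ x| + |fderiv ℝ χ x (0, 1) * Z₂ x| := abs_add_le _ _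
        _ ≤ 2 * (K / ε) * C + 2 * (K / ε) * C := by
          rw [abs_mul, abs_mul]
          gcongr
          exacts [(hb x).1, (hb x).2]
        _ = _ := by ring
    have := norm_setIntegral_le_of_norm_le_const hSfin hle
    rw [hrestr, ← Real.norm_eq_abs]
    refine this.trans ?_
    have hm : volume.real S ≤ 8 * ε ^ 2 * V := by
      refine (measureReal_union_le _ _).trans ?_
      simp only [Measure.real]
      rw [hvolb e₁ ε hε, hvolb e₂ ε hε]; linarith
    calc 4 * C * (K / ε) * volume.real S ≤ 4 * C * (K / ε) * (8 * ε ^ 2 * V) := by gcongr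
      _ = _ := by field_simp; ring
  have hg0 : ∀ x, 0 ≤ g x := by
    intro x
    by_cases hx : x ∈ E
    · simp [hg, (χ0 x hx).self_of_nhds]
    · exact mul_nonneg (mul_nonneg (n₁ x) (n₂ x)) (hdiv x hx)
  have hlb : κ ≤ ∫ x, g x := by
    have h1 : ∫ x in Metric.ball x₀ (ρ / 2), g x ≤ ∫ x, g x :=
      setIntegral_le_integral hgint (Filter.Eventually.of_forall hg0)
    have h2 : ∫ x in Metric.ball x₀ (ρ / 2), δ ≤ ∫ x in Metric.ball x₀ (ρ / 2), g x := by
      refine setIntegral_mono_on (by simp [measure_ball_lt_top]) hgint.integrableOn measurableSet_ball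
        fun x hx => ?_
      have hxb : x ∈ Metric.ball x₀ ρ := Metric.ball_subset_ball (by linarith) hx
      have far : ∀ e ∈ E, 2 * ε ≤ dist x e := by
        intro e he
        by_contra hlt
        push Not at hlt
        have : e ∈ Metric.ball x₀ ρ := by
          rw [Metric.mem_ball] at hx ⊢
          have := dist_triangle_left e x₀ x
          linarith
        exact (hball e this).2 he
      have : χ x = 1 := by
        simp [hχ, o₁ x (far e₁ (by simp [hE])), o₂ x (far e₂ (by simp [hE]))]
      simp only [hg, this, one_mul]
      exact (hball x hxb).1.le
    rw [setIntegral_const, smul_eq_mul] at h2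
    have : κ = volume.real (Metric.ball x₀ (ρ / 2)) * δ := by rw [hκ, mul_comm]; rfl
    linarith
  have := abs_le.1 hub
  linarith

/-! ### Partial derivatives and the divergence form of the equation -/

/-- `F` is differentiable at `x` with partial derivatives `a`, `b`. -/
def HasPd (F : ℝ × ℝ → ℝ) (x : ℝ × ℝ) (a b : ℝ) : Prop :=
  HasFDerivAt F (a • ContinuousLinearMap.fst ℝ ℝ ℝ + b • ContinuousLinearMap.snd ℝ ℝ ℝ) x

namespace HasPd
variable {F G : ℝ × ℝ → ℝ} {x : ℝ × ℝ} {a b a' b' : ℝ}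

lemma pdx_eq (h : HasPd F x a b) : pdx F x = a := by
  have := HasFDerivAt.fderiv h
  simp [pdx, this]

lemma pdy_eq (h : HasPd F x a b) : pdy F x = b := by
  have := HasFDerivAt.fderiv h
  simp [pdy, this]

lemma congr_vals (h : HasPd F x a b) (h1 : a = a') (h2 : b = b') : HasPd F x a' b' := by
  subst h1 h2; exact h

lemma add (h : HasPd F x a b) (h' : HasPd G x a' b') :
    HasPd (fun y => F y + G y) x (a + a') (b + b') := by
  exact HasFDerivAt.congr_fderiv (HasFDerivAt.add h h') (by ext <;> simp)

lemma sub (h : HasPd F x a b) (h' : HasPd G x a' b') :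
    HasPd (fun y => F y - G y) x (a - a') (b - b') := by
  exact HasFDerivAt.congr_fderiv (HasFDerivAt.sub h h') (by ext <;> simp)

lemma mul (h : HasPd F x a b) (h' : HasPd G x a' b') :
    HasPd (fun y => F y * G y) x (a * G x + F x * a') (b * G x + F x * b') := by
  exact HasFDerivAt.congr_fderiv (HasFDerivAt.mul h h') (by ext <;> simp <;> ring)

lemma comp_real {φ : ℝ → ℝ} {c : ℝ} (hφ : HasDerivAt φ c (F x)) (h : HasPd F x a b) :
    HasPd (fun y => φ (F y)) x (c * a) (c * b) := by
  exact HasFDerivAt.congr_fderiv (hφ.comp_hasFDerivAt x h) (by ext <;> simp)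

lemma const (c : ℝ) : HasPd (fun _ => c) x 0 0 := by
  exact HasFDerivAt.congr_fderiv (hasFDerivAt_const c x) (by ext <;> simp)

lemma fst : HasPd (fun y => y.1) x 1 0 := by
  exact HasFDerivAt.congr_fderiv (hasFDerivAt_fst (𝕜 := ℝ) (p := x)) (by ext <;> simp)

lemma snd : HasPd (fun y => y.2) x 0 1 := by
  exact HasFDerivAt.congr_fderiv (hasFDerivAt_snd (𝕜 := ℝ) (p := x)) (by ext <;> simp)

lemma of_differentiableAt (h : DifferentiableAt ℝ F x) : HasPd F x (pdx F x) (pdy F x) := by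
  exact h.hasFDerivAt.congr_fderiv (by ext <;> simp [pdx, pdy])

lemma congr_of_eventuallyEq (h : HasPd F x a b) (he : G =ᶠ[nhds x] F) : HasPd G x a b :=
  HasFDerivAt.congr_of_eventuallyEq h he

end HasPd

lemma fderiv_apply_eq {F : ℝ × ℝ → ℝ} {x : ℝ × ℝ} (v : ℝ × ℝ) :
    fderiv ℝ F x v = v.1 * pdx F x + v.2 * pdy F x := by
  have : v = v.1 • ((1, 0) : ℝ × ℝ) + v.2 • ((0, 1) : ℝ × ℝ) := by ext <;> simp
  rw [this, map_add, map_smul, map_smul]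
  simp [pdx, pdy]

lemma fderiv_eq_zero_of_pd {F : ℝ × ℝ → ℝ} {x : ℝ × ℝ} (h1 : pdx F x = 0) (h2 : pdy F x = 0) :
    fderiv ℝ F x = 0 := by
  ext <;> simp_all [pdx, pdy]

section smooth
variable {Ω : Set (ℝ × ℝ)} {u : ℝ × ℝ → ℝ}

lemma contDiffOn_pdx (hΩ : IsOpen Ω) (hu : ContDiffOn ℝ (⊤ : ℕ∞) u Ω) :
    ContDiffOn ℝ (⊤ : ℕ∞) (pdx u) Ω :=
  (hu.fderiv_of_isOpen hΩ (m := (⊤ : ℕ∞)) (by simp)).clm_apply contDiffOn_const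

lemma contDiffOn_pdy (hΩ : IsOpen Ω) (hu : ContDiffOn ℝ (⊤ : ℕ∞) u Ω) :
    ContDiffOn ℝ (⊤ : ℕ∞) (pdy u) Ω :=
  (hu.fderiv_of_isOpen hΩ (m := (⊤ : ℕ∞)) (by simp)).clm_apply contDiffOn_const

lemma hasPd_of_contDiffOn (hΩ : IsOpen Ω) (hu : ContDiffOn ℝ (⊤ : ℕ∞) u Ω) {x} (hx : x ∈ Ω) :
    HasPd u x (pdx u x) (pdy u x) :=
  HasPd.of_differentiableAt ((hu.contDiffAt (hΩ.mem_nhds hx)).differentiableAt (by simp))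

lemma pd_symm (hΩ : IsOpen Ω) (hu : ContDiffOn ℝ (⊤ : ℕ∞) u Ω) {x} (hx : x ∈ Ω) :
    pdx (pdy u) x = pdy (pdx u) x := by
  have hc : ContDiffAt ℝ (⊤ : ℕ∞) u x := hu.contDiffAt (hΩ.mem_nhds hx)
  have hsymm : IsSymmSndFDerivAt ℝ u x := hc.isSymmSndFDerivAt (by
    simp only [minSmoothness_of_isRCLikeNormedField]; exact WithTop.coe_le_coe.2 (le_top : (2 : ℕ∞) ≤ ⊤))
  have hd : DifferentiableAt ℝ (fderiv ℝ u) x :=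
    (hc.fderiv_right (m := (⊤ : ℕ∞)) (by simp)).differentiableAt (by simp)
  have key : ∀ v w : ℝ × ℝ, fderiv ℝ (fun y => fderiv ℝ u y v) x w
      = fderiv ℝ (fderiv ℝ u) x w v := by
    intro v w
    have := (hd.hasFDerivAt.clm_apply (hasFDerivAt_const v x)).fderiv
    rw [this]; simp
  show fderiv ℝ (fun y => fderiv ℝ u y (0, 1)) x (1, 0)
    = fderiv ℝ (fun y => fderiv ℝ u y (1, 0)) x (0, 1)
  rw [key, key, hsymm.eq]

/-- The area element `√(1 + |∇u|²)`. -/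
def areaW (u : ℝ × ℝ → ℝ) (x : ℝ × ℝ) : ℝ := √(1 + pdx u x ^ 2 + pdy u x ^ 2)

lemma areaW_pos (u : ℝ × ℝ → ℝ) (x : ℝ × ℝ) : 0 < areaW u x := Real.sqrt_pos.2 (by positivity)

lemma areaW_sq (u : ℝ × ℝ → ℝ) (x : ℝ × ℝ) :
    areaW u x ^ 2 = 1 + pdx u x ^ 2 + pdy u x ^ 2 := Real.sq_sqrt (by positivity)

lemma one_le_areaW (u : ℝ × ℝ → ℝ) (x : ℝ × ℝ) : 1 ≤ areaW u x := by
  nlinarith [areaW_sq u x, areaW_pos u x, sq_nonneg (pdx u x), sq_nonneg (pdy u x)]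

lemma abs_pdx_le_areaW (u : ℝ × ℝ → ℝ) (x : ℝ × ℝ) : |pdx u x| ≤ areaW u x := by
  apply abs_le_of_sq_le_sq _ (areaW_pos u x).le
  rw [areaW_sq]; nlinarith [sq_nonneg (pdy u x)]

lemma abs_pdy_le_areaW (u : ℝ × ℝ → ℝ) (x : ℝ × ℝ) : |pdy u x| ≤ areaW u x := by
  apply abs_le_of_sq_le_sq _ (areaW_pos u x).le
  rw [areaW_sq]; nlinarith [sq_nonneg (pdx u x)]

/-- The translator equation in divergence form: `div (∇u / W) = 1 / W`. -/
lemma translator_div (hΩ : IsOpen Ω) (hu : IsTranslatorOn Ω u) {x} (hx : x ∈ Ω) :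
    ∃ a b c d, HasPd (fun y => pdx u y * (areaW u y)⁻¹) x a b ∧
      HasPd (fun y => pdy u y * (areaW u y)⁻¹) x c d ∧ a + d = (areaW u x)⁻¹ := by
  have hp := hasPd_of_contDiffOn hΩ (contDiffOn_pdx hΩ hu.1) hx
  have hq := hasPd_of_contDiffOn hΩ (contDiffOn_pdy hΩ hu.1) hx
  have hsy := pd_symm hΩ hu.1 hx
  have heq := hu.2 x hx
  have hW := areaW_pos u x
  have hW2 := areaW_sq u x
  set W := areaW u x with hWd
  have hφ : HasDerivAt (fun t : ℝ => (√t)⁻¹) (-(1 / (2 * W)) / W ^ 2)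
      (1 + pdx u x * pdx u x + pdy u x * pdy u x) := by
    have e : 1 + pdx u x * pdx u x + pdy u x * pdy u x = 1 + pdx u x ^ 2 + pdy u x ^ 2 := by ring
    have h0 : HasDerivAt (fun t : ℝ => √t) (1 / (2 * W))
        (1 + pdx u x * pdx u x + pdy u x * pdy u x) := by
      rw [e]
      exact Real.hasDerivAt_sqrt (by positivity)
    have := h0.inv (by rw [e]; exact hW.ne')
    rw [e] at this ⊢
    exact this
  have hN := (((HasPd.const (x := x) 1).add (hp.mul hp)).add (hq.mul hq))
  have hWi := (HasPd.comp_real (F := fun y => 1 + pdx u y * pdx u y + pdy u y * pdy u y)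
    hφ hN).congr_of_eventuallyEq (G := fun y => (areaW u y)⁻¹)
      (Eventually.of_forall fun y => by simp only [areaW]; ring_nf)
  refine ⟨_, _, _, _, hp.mul hWi, hq.mul hWi, ?_⟩
  rw [← hWd, hsy]
  field_simp
  set p := pdx u x
  set q := pdy u x
  linear_combination 2 * heq + 2 * (pdx (pdx u) x + pdy (pdy u) x - 1) * hW2
end smooth

/-! ### Flux comparison of two translators -/

open Topology in
/-- `flux_lemma` on an open set `U`: a bounded field that vanishes near every boundary point of `U`
except `e₁`, `e₂` is extended by zero. -/
lemma flux_on {U : Set (ℝ × ℝ)} (hU : IsOpen U) {R : ℝ} (hR : ∀ x ∈ U, ‖x‖ ≤ R)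
    {e₁ e₂ : ℝ × ℝ} {Z₁ Z₂ : ℝ × ℝ → ℝ} {C : ℝ}
    (hb : ∀ x ∈ U, |Z₁ x| ≤ C ∧ |Z₂ x| ≤ C)
    (h₁ : ContDiffOn ℝ 1 Z₁ U) (h₂ : ContDiffOn ℝ 1 Z₂ U)
    (he₁ : e₁ ∉ U) (he₂ : e₂ ∉ U)
    (hv : ∀ b, b ∉ U → b ≠ e₁ → b ≠ e₂ → ∀ᶠ x in 𝓝 b, x ∈ U → Z₁ x = 0 ∧ Z₂ x = 0)
    (hdiv : ∀ x ∈ U, 0 ≤ pdx Z₁ x + pdy Z₂ x) :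
    ∀ x ∈ U, pdx Z₁ x + pdy Z₂ x = 0 := by
  have hin : ∀ (Z : ℝ × ℝ → ℝ), ∀ x ∈ U, U.indicator Z =ᶠ[𝓝 x] Z := fun Z x hx => by
    filter_upwards [hU.mem_nhds hx] with y hy
    simp [hy]
  have hout : ∀ x ∉ U, x ≠ e₁ → x ≠ e₂ →
      U.indicator Z₁ =ᶠ[𝓝 x] (fun _ => 0) ∧ U.indicator Z₂ =ᶠ[𝓝 x] (fun _ => 0) := by
    intro x hx h1 h2
    constructor
    all_goals
      filter_upwards [hv x hx h1 h2] with y hy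
      by_cases hyU : y ∈ U
      · simp [hyU, hy hyU]
      · simp [hyU]
  have key := flux_lemma (Z₁ := U.indicator Z₁) (Z₂ := U.indicator Z₂) (e₁ := e₁) (e₂ := e₂)
    (C := max C 0) (R := R) ?_ ?_ ?_ ?_ ?_
  · intro x hx
    have hx' : x ∈ ({e₁, e₂} : Set (ℝ × ℝ))ᶜ := by
      simp only [mem_compl_iff, mem_insert_iff, mem_singleton_iff, not_or]
      exact ⟨fun h => he₁ (h ▸ hx), fun h => he₂ (h ▸ hx)⟩
    have := key x hx'
    simpa only [pdx, pdy, (hin Z₁ x hx).fderiv_eq, (hin Z₂ x hx).fderiv_eq] using this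
  · intro x
    by_cases hx : x ∈ U
    · simpa [hx] using ⟨Or.inl (hb x hx).1, Or.inl (hb x hx).2⟩
    · simp [hx]
  · intro x hx
    have : x ∉ U := fun h => absurd (hR x h) (not_le.2 hx)
    simp [this]
  · intro x hx
    simp only [mem_compl_iff, mem_insert_iff, mem_singleton_iff, not_or] at hx
    apply ContDiffAt.contDiffWithinAt
    by_cases hxU : x ∈ U
    · exact (h₁.contDiffAt (hU.mem_nhds hxU)).congr_of_eventuallyEq (hin Z₁ x hxU)
    · exact contDiffAt_const.congr_of_eventuallyEq (hout x hxU hx.1 hx.2).1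
  · intro x hx
    simp only [mem_compl_iff, mem_insert_iff, mem_singleton_iff, not_or] at hx
    apply ContDiffAt.contDiffWithinAt
    by_cases hxU : x ∈ U
    · exact (h₂.contDiffAt (hU.mem_nhds hxU)).congr_of_eventuallyEq (hin Z₂ x hxU)
    · exact contDiffAt_const.congr_of_eventuallyEq (hout x hxU hx.1 hx.2).2
  · intro x hx
    simp only [mem_compl_iff, mem_insert_iff, mem_singleton_iff, not_or] at hx
    by_cases hxU : x ∈ U
    · simpa only [pdx, pdy, (hin Z₁ x hxU).fderiv_eq, (hin Z₂ x hxU).fderiv_eq] using hdiv x hxU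
    · simp only [pdx, pdy, (hout x hxU hx.1 hx.2).1.fderiv_eq, (hout x hxU hx.1 hx.2).2.fderiv_eq]
      simp

section smooth
variable {Ω : Set (ℝ × ℝ)} {u : ℝ × ℝ → ℝ}

lemma contDiffOn_areaW_inv (hΩ : IsOpen Ω) (hu : ContDiffOn ℝ (⊤ : ℕ∞) u Ω) :
    ContDiffOn ℝ (⊤ : ℕ∞) (fun y => (areaW u y)⁻¹) Ω := by
  apply ContDiffOn.inv
  · apply ContDiffOn.sqrt
    · exact (contDiffOn_const.add ((contDiffOn_pdx hΩ hu).pow 2)).add ((contDiffOn_pdy hΩ hu).pow 2)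
    · intro x _; positivity
  · intro x _; exact (areaW_pos u x).ne'

lemma contDiffOn_X1 (hΩ : IsOpen Ω) (hu : ContDiffOn ℝ (⊤ : ℕ∞) u Ω) :
    ContDiffOn ℝ (⊤ : ℕ∞) (fun y => pdx u y * (areaW u y)⁻¹) Ω :=
  (contDiffOn_pdx hΩ hu).mul (contDiffOn_areaW_inv hΩ hu)

lemma contDiffOn_X2 (hΩ : IsOpen Ω) (hu : ContDiffOn ℝ (⊤ : ℕ∞) u Ω) :
    ContDiffOn ℝ (⊤ : ℕ∞) (fun y => pdy u y * (areaW u y)⁻¹) Ω :=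
  (contDiffOn_pdy hΩ hu).mul (contDiffOn_areaW_inv hΩ hu)

lemma abs_X1_le (u : ℝ × ℝ → ℝ) (x : ℝ × ℝ) : |pdx u x * (areaW u x)⁻¹| ≤ 1 := by
  rw [abs_mul, abs_inv, abs_of_pos (areaW_pos u x), ← div_eq_mul_inv]
  exact (div_le_one (areaW_pos u x)).2 (abs_pdx_le_areaW u x)

lemma abs_X2_le (u : ℝ × ℝ → ℝ) (x : ℝ × ℝ) : |pdy u x * (areaW u x)⁻¹| ≤ 1 := by
  rw [abs_mul, abs_inv, abs_of_pos (areaW_pos u x), ← div_eq_mul_inv]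
  exact (div_le_one (areaW_pos u x)).2 (abs_pdy_le_areaW u x)

end smooth

lemma smoothTransition_hasDerivAt (t : ℝ) :
    HasDerivAt Real.smoothTransition (deriv Real.smoothTransition t) t :=
  ((Real.smoothTransition.contDiff (n := 1)).differentiable one_ne_zero t).hasDerivAt

lemma smoothTransition_deriv_nonneg (t : ℝ) : 0 ≤ deriv Real.smoothTransition t :=
  Real.smoothTransition.monotone.deriv_nonneg

lemma abs_smoothTransition_le (t : ℝ) : |Real.smoothTransition t| ≤ 1 := by
  rw [abs_of_nonneg (Real.smoothTransition.nonneg t)]; exact Real.smoothTransition.le_one t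

/-- Maximum principle with one exceptional point: a translator on `U` that is at most `M` near every
boundary point other than `e` is at most `M`. The field is `∇u/W`, cut off below height `M`. -/
lemma flux_upper_bound {D U : Set (ℝ × ℝ)} (hD : IsOpen D) {u : ℝ × ℝ → ℝ}
    (hu : IsTranslatorOn D u) (hU : IsOpen U) (hUD : U ⊆ D) {R : ℝ} (hR : ∀ x ∈ U, ‖x‖ ≤ R)
    {e : ℝ × ℝ} (he : e ∉ U) {M : ℝ}
    (hv : ∀ b, b ∉ U → b ≠ e → ∀ᶠ x in nhds b, x ∈ U → u x ≤ M) :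
    ∀ x ∈ U, u x ≤ M := by
  have hu' : ContDiffOn ℝ (⊤ : ℕ∞) u U := hu.1.mono hUD
  have hS : ContDiffOn ℝ (⊤ : ℕ∞) (fun y => Real.smoothTransition (u y - M)) U :=
    Real.smoothTransition.contDiff.comp_contDiffOn (hu'.sub contDiffOn_const)
  have hcalc : ∀ x ∈ U,
      pdx (fun y => Real.smoothTransition (u y - M) * (pdx u y * (areaW u y)⁻¹)) x
      + pdy (fun y => Real.smoothTransition (u y - M) * (pdy u y * (areaW u y)⁻¹)) x
      = deriv Real.smoothTransition (u x - M) * ((pdx u x ^ 2 + pdy u x ^ 2) * (areaW u x)⁻¹)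
        + Real.smoothTransition (u x - M) * (areaW u x)⁻¹ := by
    intro x hx
    obtain ⟨a, b, c, d, h1, h2, h3⟩ := translator_div hD hu (hUD hx)
    have hS' := HasPd.comp_real (F := fun y => u y - M) (smoothTransition_hasDerivAt _)
      ((hasPd_of_contDiffOn hU hu' hx).sub (HasPd.const M))
    rw [(hS'.mul h1).pdx_eq, (hS'.mul h2).pdy_eq, ← h3]
    ring
  have key := flux_on hU hR (e₁ := e) (e₂ := e) (C := 1)
    (Z₁ := fun y => Real.smoothTransition (u y - M) * (pdx u y * (areaW u y)⁻¹))
    (Z₂ := fun y => Real.smoothTransition (u y - M) * (pdy u y * (areaW u y)⁻¹))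
    ?_ ((hS.mul (contDiffOn_X1 hU hu')).of_le (by simp))
    ((hS.mul (contDiffOn_X2 hU hu')).of_le (by simp)) he he ?_ ?_
  · intro x hx
    by_contra hlt
    have h0 := key x hx
    rw [hcalc x hx] at h0
    have hW := inv_pos.2 (areaW_pos u x)
    have h1 := smoothTransition_deriv_nonneg (u x - M)
    have h2 : 0 < Real.smoothTransition (u x - M) := Real.smoothTransition.pos_of_pos (by linarith)
    have : 0 ≤ deriv Real.smoothTransition (u x - M) *
      ((pdx u x ^ 2 + pdy u x ^ 2) * (areaW u x)⁻¹) := by positivity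
    nlinarith [mul_pos h2 hW]
  · intro x _
    constructor
    · rw [abs_mul]
      exact mul_le_one₀ (abs_smoothTransition_le _) (abs_nonneg _) (abs_X1_le u x)
    · rw [abs_mul]
      exact mul_le_one₀ (abs_smoothTransition_le _) (abs_nonneg _) (abs_X2_le u x)
  · intro b hb h1 _
    filter_upwards [hv b hb h1] with x hx hxU
    have : Real.smoothTransition (u x - M) = 0 :=
      Real.smoothTransition.zero_of_nonpos (by linarith [hx hxU])
    simp [this]
  · intro x hx
    rw [hcalc x hx]
    have hW := inv_pos.2 (areaW_pos u x)
    have h1 := smoothTransition_deriv_nonneg (u x - M)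
    have h2 := Real.smoothTransition.nonneg (u x - M)
    positivity

/-- `W(p)W(q) - 1 - p·q ≥ 0`, with equality only for `p = q`. -/
lemma N_nonneg {p₁ p₂ q₁ q₂ V W : ℝ} (hV : 0 < V) (hW : 0 < W) (hV2 : V ^ 2 = 1 + p₁ ^ 2 + p₂ ^ 2)
    (hW2 : W ^ 2 = 1 + q₁ ^ 2 + q₂ ^ 2) :
    0 ≤ V * W - 1 - (p₁ * q₁ + p₂ * q₂) ∧
    (V * W - 1 - (p₁ * q₁ + p₂ * q₂) = 0 → p₁ = q₁ ∧ p₂ = q₂) := by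
  have h : (V * W) ^ 2 = (1 + p₁ * q₁ + p₂ * q₂) ^ 2 + (p₁ - q₁) ^ 2 + (p₂ - q₂) ^ 2
      + (p₁ * q₂ - p₂ * q₁) ^ 2 := by
    rw [mul_pow, hV2, hW2]; ring
  constructor
  · have := abs_le_of_sq_le_sq' (a := 1 + p₁ * q₁ + p₂ * q₂) (b := V * W)
      (by rw [h]; nlinarith [sq_nonneg (p₁ - q₁), sq_nonneg (p₂ - q₂), sq_nonneg (p₁ * q₂ - p₂ * q₁)])
      (by positivity)
    linarith [this.2]
  · intro h0
    have e : V * W = 1 + p₁ * q₁ + p₂ * q₂ := by linarith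
    rw [e] at h
    have h1 : (p₁ - q₁) ^ 2 = 0 := by
      nlinarith [sq_nonneg (p₁ - q₁), sq_nonneg (p₂ - q₂), sq_nonneg (p₁ * q₂ - p₂ * q₁)]
    have h2 : (p₂ - q₂) ^ 2 = 0 := by
      nlinarith [sq_nonneg (p₁ - q₁), sq_nonneg (p₂ - q₂), sq_nonneg (p₁ * q₂ - p₂ * q₁)]
    exact ⟨by linarith [pow_eq_zero_iff (two_ne_zero) |>.1 h1],
      by linarith [pow_eq_zero_iff (two_ne_zero) |>.1 h2]⟩

/-- If `c < u - v` on `U`, with boundary values at most `c` except at `e₁`, `e₂`, then `∇u = ∇v` on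
`U`. With `S` a smooth transition, the field `S(u - v - c - δ) eᵘ (∇u/W(u) - ∇v/W(v))` is bounded
because `u ≤ K`, and its divergence is a nonnegative multiple of the quantity in `N_nonneg`. -/
lemma flux_grad_eq {D U : Set (ℝ × ℝ)} (hD : IsOpen D) {u v : ℝ × ℝ → ℝ}
    (hu : IsTranslatorOn D u) (hv : IsTranslatorOn D v) (hU : IsOpen U) (hUD : U ⊆ D)
    {R : ℝ} (hR : ∀ x ∈ U, ‖x‖ ≤ R) {e₁ e₂ : ℝ × ℝ} (he₁ : e₁ ∉ U) (he₂ : e₂ ∉ U) {c K : ℝ}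
    (hK : ∀ x ∈ U, u x ≤ K) (hc : ∀ x ∈ U, c < u x - v x)
    (hb : ∀ δ, 0 < δ → ∀ b, b ∉ U → b ≠ e₁ → b ≠ e₂ → ∀ᶠ x in nhds b, x ∈ U → u x - v x ≤ c + δ) :
    ∀ x ∈ U, pdx u x = pdx v x ∧ pdy u x = pdy v x := by
  intro x₀ hx₀
  set δ := (u x₀ - v x₀ - c) / 2 with hδ
  have hδ0 : 0 < δ := by have := hc x₀ hx₀; linarith
  have hu' : ContDiffOn ℝ (⊤ : ℕ∞) u U := hu.1.mono hUD
  have hv' : ContDiffOn ℝ (⊤ : ℕ∞) v U := hv.1.mono hUD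
  set φ : ℝ × ℝ → ℝ := fun y => Real.smoothTransition (u y - v y - (c + δ)) * Real.exp (u y) with hφ
  have hS : ContDiffOn ℝ (⊤ : ℕ∞) φ U :=
    (Real.smoothTransition.contDiff.comp_contDiffOn ((hu'.sub hv').sub contDiffOn_const)).mul hu'.exp
  set S := Real.smoothTransition
  have hcalc : ∀ x ∈ U,
      pdx (fun y => φ y * (pdx u y * (areaW u y)⁻¹ - pdx v y * (areaW v y)⁻¹)) x
      + pdy (fun y => φ y * (pdy u y * (areaW u y)⁻¹ - pdy v y * (areaW v y)⁻¹)) x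
      = Real.exp (u x) * ((areaW u x * areaW v x - 1 - (pdx u x * pdx v x + pdy u x * pdy v x)) *
        (S (u x - v x - (c + δ)) * (areaW v x)⁻¹ +
        deriv S (u x - v x - (c + δ)) * ((areaW u x)⁻¹ + (areaW v x)⁻¹))) := by
    intro x hx
    obtain ⟨a, b, c1, d, h1, h2, h3⟩ := translator_div hD hu (hUD hx)
    obtain ⟨a', b', c', d', h1', h2', h3'⟩ := translator_div hD hv (hUD hx)
    have hux := hasPd_of_contDiffOn hU hu' hx
    have hvx := hasPd_of_contDiffOn hU hv' hx
    have hS' := (HasPd.comp_real (F := fun y => u y - v y - (c + δ)) (smoothTransition_hasDerivAt _)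
      ((hux.sub hvx).sub (HasPd.const (c + δ)))).mul (HasPd.comp_real (Real.hasDerivAt_exp _) hux)
    have e1 := (hS'.mul (h1.sub h1')).pdx_eq
    have e2 := (hS'.mul (h2.sub h2')).pdy_eq
    rw [e1, e2]
    have hV := areaW_pos u x
    have hW := areaW_pos v x
    have hV2 := areaW_sq u x
    have hW2 := areaW_sq v x
    have ea : a = (areaW u x)⁻¹ - d := by linarith
    have ea' : a' = (areaW v x)⁻¹ - d' := by linarith
    rw [ea, ea']
    generalize areaW u x = V at *
    generalize areaW v x = W at *
    generalize pdx u x = p₁ at *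
    generalize pdy u x = p₂ at *
    generalize pdx v x = q₁ at *
    generalize pdy v x = q₂ at *
    generalize Real.exp (u x) = E at *
    simp only [S]
    generalize deriv Real.smoothTransition (u x - v x - (c + δ)) = T at *
    generalize Real.smoothTransition (u x - v x - (c + δ)) = T0 at *
    field_simp
    linear_combination (-(E * W * T0) - E * T * W) * hV2 - E * T * V * hW2
  have key := flux_on hU hR (e₁ := e₁) (e₂ := e₂) (C := Real.exp K * 2)
    (Z₁ := fun y => φ y * (pdx u y * (areaW u y)⁻¹ - pdx v y * (areaW v y)⁻¹))
    (Z₂ := fun y => φ y * (pdy u y * (areaW u y)⁻¹ - pdy v y * (areaW v y)⁻¹))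
    ?_ ((hS.mul ((contDiffOn_X1 hU hu').sub (contDiffOn_X1 hU hv'))).of_le (by simp))
    ((hS.mul ((contDiffOn_X2 hU hu').sub (contDiffOn_X2 hU hv'))).of_le (by simp)) he₁ he₂ ?_ ?_
  · have h0 := key x₀ hx₀
    rw [hcalc x₀ hx₀] at h0
    obtain ⟨hN, hN'⟩ := N_nonneg (areaW_pos u x₀) (areaW_pos v x₀) (areaW_sq u x₀) (areaW_sq v x₀)
    apply hN'
    have hW := inv_pos.2 (areaW_pos v x₀)
    have hV := inv_pos.2 (areaW_pos u x₀)
    have h1 := smoothTransition_deriv_nonneg (u x₀ - v x₀ - (c + δ))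
    have h2 : 0 < S (u x₀ - v x₀ - (c + δ)) :=
      Real.smoothTransition.pos_of_pos (by have := hc x₀ hx₀; linarith)
    have h3 : 0 < S (u x₀ - v x₀ - (c + δ)) * (areaW v x₀)⁻¹ +
        deriv S (u x₀ - v x₀ - (c + δ)) * ((areaW u x₀)⁻¹ + (areaW v x₀)⁻¹) := by positivity
    rcases mul_eq_zero.1 h0 with h | h
    · exact absurd h (Real.exp_pos _).ne'
    · exact (mul_eq_zero.1 h).resolve_right h3.ne'
  · intro x hx
    have hφb : |φ x| ≤ Real.exp K := by
      rw [hφ]; simp only [abs_mul, abs_of_pos (Real.exp_pos _)]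
      calc _ ≤ 1 * Real.exp K := mul_le_mul (abs_smoothTransition_le _)
            (Real.exp_le_exp.2 (hK x hx)) (Real.exp_pos _).le zero_le_one
        _ = _ := one_mul _
    constructor
    · rw [abs_mul]
      refine mul_le_mul hφb ((abs_sub _ _).trans ?_) (abs_nonneg _) (Real.exp_pos _).le
      linarith [abs_X1_le u x, abs_X1_le v x]
    · rw [abs_mul]
      refine mul_le_mul hφb ((abs_sub _ _).trans ?_) (abs_nonneg _) (Real.exp_pos _).le
      linarith [abs_X2_le u x, abs_X2_le v x]
  · intro b hbU h1 h2
    filter_upwards [hb δ hδ0 b hbU h1 h2] with x hx hxU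
    have : φ x = 0 := by
      have hz : S (u x - v x - (c + δ)) = 0 :=
        Real.smoothTransition.zero_of_nonpos (by linarith [hx hxU])
      rw [hφ]; simp only
      rw [hz, zero_mul]
    simp [this]
  · intro x hx
    rw [hcalc x hx]
    obtain ⟨hN, -⟩ := N_nonneg (areaW_pos u x) (areaW_pos v x) (areaW_sq u x) (areaW_sq v x)
    have hW := inv_pos.2 (areaW_pos v x)
    have hV := inv_pos.2 (areaW_pos u x)
    have h1 := smoothTransition_deriv_nonneg (u x - v x - (c + δ))
    have h2 : 0 ≤ S (u x - v x - (c + δ)) := Real.smoothTransition.nonneg _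
    have hE := Real.exp_pos (u x)
    positivity

open Topology Metric in
/-- Let `U ⊆ D` be such that `u - v ≤ c` on the part of its boundary in `D`, and let its closure meet
the complement of `D` at most in `e` and `e'`. Then `u` is bounded above on `U` near `e` as soon as
one of `u`, `v` is bounded above on `D` near `e`. -/
lemma bdd_near {D U : Set (ℝ × ℝ)} (hD : IsOpen D) {u v : ℝ × ℝ → ℝ}
    (hu : IsTranslatorOn D u) (hU : IsOpen U) (hUD : U ⊆ D)
    {R : ℝ} (hR : ∀ x ∈ U, ‖x‖ ≤ R) {e e' : ℝ × ℝ} (he : e ∉ U) (hee : e ≠ e') {c : ℝ}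
    (hb1 : ∀ b ∈ D, b ∈ closure U → b ∉ U → u b - v b ≤ c)
    (hb2 : ∀ b ∉ D, b ≠ e → b ≠ e' → b ∉ closure U)
    (hM : ∃ M, (∀ᶠ x in 𝓝[D] e, u x ≤ M) ∨ (∀ᶠ x in 𝓝[D] e, v x ≤ M)) :
    ∃ r > 0, ∃ M', ∀ x ∈ U, x ∈ ball e r → u x ≤ M' := by
  obtain ⟨M, hM | hM⟩ := hM
  · obtain ⟨r, hr, h⟩ := Metric.mem_nhdsWithin_iff.1 hM
    exact ⟨r, hr, M, fun x hx hxr => h ⟨hxr, hUD hx⟩⟩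
  · obtain ⟨r₀, hr₀, h⟩ := Metric.mem_nhdsWithin_iff.1 hM
    have hd : 0 < dist e' e := dist_pos.2 hee.symm
    set r := min r₀ (dist e' e) / 2 with hrd
    have hr : 0 < r := by positivity
    have hr1 : r < r₀ := by
      have : min r₀ (dist e' e) ≤ r₀ := min_le_left _ _
      linarith
    have hr2 : r < dist e' e := by
      have : min r₀ (dist e' e) ≤ dist e' e := min_le_right _ _
      linarith
    have huc : ContinuousOn u D := hu.1.continuousOn
    have hK : IsCompact (closure U ∩ sphere e r) :=
      (isCompact_sphere e r).inter_left isClosed_closure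
    have hKD : closure U ∩ sphere e r ⊆ D := by
      rintro b ⟨hb, hbs⟩
      by_contra hbD
      refine hb2 b hbD ?_ ?_ hb
      · rintro rfl; simp at hbs; linarith
      · rintro rfl; rw [mem_sphere] at hbs; linarith
    obtain ⟨M₁, hM₁⟩ := hK.bddAbove_image (huc.mono hKD)
    refine ⟨r, hr, max M₁ (M + c) + 1, fun x hx hxr => ?_⟩
    refine flux_upper_bound hD hu (hU.inter isOpen_ball) (inter_subset_left.trans hUD)
      (fun y hy => hR y hy.1) (e := e) (fun h => he h.1) (M := max M₁ (M + c) + 1) ?_ x ⟨hx, hxr⟩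
    intro b hb hbe
    by_cases hbc : b ∈ closure U
    swap
    · filter_upwards [isClosed_closure.isOpen_compl.mem_nhds hbc] with y hy hyU
      exact absurd (subset_closure hyU.1) hy
    by_cases hbr : b ∈ closedBall e r
    swap
    · filter_upwards [isClosed_closedBall.isOpen_compl.mem_nhds hbr] with y hy hyU
      exact absurd (ball_subset_closedBall hyU.2) hy
    have hbD : b ∈ D := by
      by_contra hbD
      refine hb2 b hbD hbe ?_ hbc
      rintro rfl; rw [mem_closedBall] at hbr; linarith
    have hlt : u b < max M₁ (M + c) + 1 := by
      by_cases hs : b ∈ sphere e r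
      · have := hM₁ (mem_image_of_mem u ⟨hbc, hs⟩)
        have := le_max_left M₁ (M + c)
        linarith
      · have hbb : b ∈ ball e r := by
          rw [mem_closedBall] at hbr; rw [mem_sphere] at hs
          exact mem_ball.2 (lt_of_le_of_ne hbr hs)
        have h1 := hb1 b hbD hbc (fun h => hb ⟨h, hbb⟩)
        have h2 : v b ≤ M := h ⟨ball_subset_ball hr1.le hbb, hbD⟩
        have := le_max_right M₁ (M + c)
        linarith
    filter_upwards [(huc.continuousAt (hD.mem_nhds hbD)).eventually_lt_const hlt] with y hy _
    exact hy.le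

open Topology Metric in
/-- A connected open part `U` of `{c < u - v}` with `u - v ≤ c` on its boundary in `D`, and whose
closure leaves `D` at most in the two exceptional points, is all of `D`: by `flux_grad_eq` the
difference `u - v` is constant on `U`, so it cannot descend to `c` at a boundary point in `D`. -/
lemma flux_contra {D U : Set (ℝ × ℝ)} (hD : IsOpen D) (hDc : IsPreconnected D) {u v : ℝ × ℝ → ℝ}
    (hu : IsTranslatorOn D u) (hv : IsTranslatorOn D v) (hU : IsOpen U) (hUD : U ⊆ D)
    (hUc : IsPreconnected U) (hUne : U.Nonempty)
    {R : ℝ} (hR : ∀ x ∈ D, ‖x‖ ≤ R) {e e' : ℝ × ℝ} (he : e ∉ D) (he' : e' ∉ D) (hee : e ≠ e') {c : ℝ}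
    (hc : ∀ x ∈ U, c < u x - v x)
    (hb1 : ∀ b ∈ D, b ∈ closure U → b ∉ U → u b - v b ≤ c)
    (hb2 : ∀ b ∉ D, b ≠ e → b ≠ e' → b ∉ closure U)
    (hM : ∃ M, (∀ᶠ x in 𝓝[D] e, u x ≤ M) ∨ (∀ᶠ x in 𝓝[D] e, v x ≤ M))
    (hM' : ∃ M, (∀ᶠ x in 𝓝[D] e', u x ≤ M) ∨ (∀ᶠ x in 𝓝[D] e', v x ≤ M)) :
    D ⊆ U := by
  have hUR : ∀ x ∈ U, ‖x‖ ≤ R := fun x hx => hR x (hUD hx)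
  obtain ⟨r, hr, M, h1⟩ := bdd_near hD hu hU hUD hUR (fun h => he (hUD h)) hee hb1 hb2 hM
  obtain ⟨r', hr', M', h1'⟩ := bdd_near hD hu hU hUD hUR (fun h => he' (hUD h)) hee.symm hb1
    (fun b h h1 h2 => hb2 b h h2 h1) hM'
  have huc : ContinuousOn u D := hu.1.continuousOn
  have hvc : ContinuousOn v D := hv.1.continuousOn
  have hK : IsCompact (closure U ∩ ((ball e r)ᶜ ∩ (ball e' r')ᶜ)) := by
    apply Metric.isCompact_of_isClosed_isBounded
    · exact isClosed_closure.inter (isOpen_ball.isClosed_compl.inter isOpen_ball.isClosed_compl)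
    · refine (Bornology.IsBounded.closure ?_).subset inter_subset_left
      exact isBounded_iff_forall_norm_le.2 ⟨R, hUR⟩
  have hKD : closure U ∩ ((ball e r)ᶜ ∩ (ball e' r')ᶜ) ⊆ D := by
    rintro b ⟨hb, hb1, hb3⟩
    by_contra hbD
    refine hb2 b hbD ?_ ?_ hb
    · rintro rfl; exact hb1 (mem_ball_self hr)
    · rintro rfl; exact hb3 (mem_ball_self hr')
  obtain ⟨M₁, hM₁⟩ := hK.bddAbove_image (huc.mono hKD)
  have hbd : ∀ x ∈ U, u x ≤ max M₁ (max M M') := by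
    intro x hx
    by_cases hx1 : x ∈ ball e r
    · exact (h1 x hx hx1).trans ((le_max_left _ _).trans (le_max_right _ _))
    by_cases hx2 : x ∈ ball e' r'
    · exact (h1' x hx hx2).trans ((le_max_right _ _).trans (le_max_right _ _))
    exact (hM₁ (mem_image_of_mem u ⟨subset_closure hx, hx1, hx2⟩)).trans (le_max_left _ _)
  have hg := flux_grad_eq hD hu hv hU hUD hUR (e₁ := e) (e₂ := e') (fun h => he (hUD h))
    (fun h => he' (hUD h)) hbd hc ?_
  swap
  · intro δ hδ b hb hbe hbe'
    by_cases hbc : b ∈ closure U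
    swap
    · filter_upwards [isClosed_closure.isOpen_compl.mem_nhds hbc] with y hy hyU
      exact absurd (subset_closure hyU) hy
    have hbD : b ∈ D := by
      by_contra hbD
      exact hb2 b hbD hbe hbe' hbc
    have hlt : u b - v b < c + δ := by linarith [hb1 b hbD hbc hb]
    filter_upwards [((huc.sub hvc).continuousAt (hD.mem_nhds hbD)).eventually_lt_const hlt]
      with y hy _
    exact hy.le
  obtain ⟨x₀, hx₀⟩ := hUne
  have hconst : ∀ x ∈ U, u x - v x = u x₀ - v x₀ := by
    intro x hx
    have hdf : ∀ y ∈ U, HasPd (fun y => u y - v y) y (pdx u y - pdx v y) (pdy u y - pdy v y) :=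
      fun y hy => (hasPd_of_contDiffOn hD hu.1 (hUD hy)).sub (hasPd_of_contDiffOn hD hv.1 (hUD hy))
    refine hU.is_const_of_fderiv_eq_zero (f := fun y => u y - v y) hUc
      (fun y hy => (HasFDerivAt.differentiableAt (hdf y hy)).differentiableWithinAt) ?_ hx hx₀
    intro y hy
    apply fderiv_eq_zero_of_pd
    · rw [(hdf y hy).pdx_eq, (hg y hy).1, sub_self]
    · rw [(hdf y hy).pdy_eq, (hg y hy).2, sub_self]
  refine hDc.subset_of_closure_inter_subset hU ⟨x₀, hUD hx₀, hx₀⟩ ?_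
  rintro b ⟨hbc, hbD⟩
  by_contra hbU
  have h2 := hb1 b hbD hbc hbU
  have h3 : u b - v b = u x₀ - v x₀ := by
    have hcont : ContinuousWithinAt (fun y => u y - v y) U b :=
      ((huc.sub hvc) b hbD).mono hUD
    have := hcont.mem_closure_image hbc
    have hsub : (fun y => u y - v y) '' U ⊆ {u x₀ - v x₀} := by
      rintro _ ⟨y, hy, rfl⟩; exact hconst y hy
    have := closure_mono hsub this
    simpa using this
  linarith [hc x₀ hx₀]

/-! ### Connected superlevel sets of a difference of translators -/

open Topology Metric in
/-- Superlevel sets of the difference of two translators on a convex domain are connected if the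
difference tends to `+∞` along a connected part `Cp` of the boundary and to `-∞` along the rest,
up to two exceptional points near each of which one of the translators is bounded above. -/
lemma superlevel_preconnected {D Cp Cm : Set (ℝ × ℝ)} (hD : IsOpen D) (hDc : Convex ℝ D)
    {u v : ℝ × ℝ → ℝ} (hu : IsTranslatorOn D u) (hv : IsTranslatorOn D v)
    {R : ℝ} (hR : ∀ x ∈ D, ‖x‖ ≤ R) {e e' : ℝ × ℝ} (he : e ∉ D) (he' : e' ∉ D) (hee : e ≠ e')
    (hCp : IsPreconnected Cp) (hCpD : Cp ⊆ closure D)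
    (hfr : closure D ⊆ D ∪ (Cp ∪ Cm ∪ {e, e'}))
    (hp : ∀ b ∈ Cp, Tendsto (fun x => u x - v x) (𝓝[D] b) atTop)
    (hm : ∀ b ∈ Cm, Tendsto (fun x => u x - v x) (𝓝[D] b) atBot)
    (hM : ∃ M, (∀ᶠ x in 𝓝[D] e, u x ≤ M) ∨ (∀ᶠ x in 𝓝[D] e, v x ≤ M))
    (hM' : ∃ M, (∀ᶠ x in 𝓝[D] e', u x ≤ M) ∨ (∀ᶠ x in 𝓝[D] e', v x ≤ M)) (c : ℝ) :
    IsPreconnected {x ∈ D | c < u x - v x} := by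
  set A := {x ∈ D | c < u x - v x} with hA
  have hfc : ContinuousOn (fun x => u x - v x) D := hu.1.continuousOn.sub hv.1.continuousOn
  have hAo : IsOpen A := by
    have := hfc.isOpen_inter_preimage hD (isOpen_Ioi (a := c))
    exact this
  have hAD : A ⊆ D := fun x hx => hx.1
  -- near a point of `Cp` all of `D` lies in `A`
  have hnear : ∀ b ∈ Cp, ∃ r > 0, D ∩ ball b r ⊆ A := by
    intro b hb
    obtain ⟨r, hr, h⟩ := Metric.mem_nhdsWithin_iff.1 ((hp b hb).eventually_gt_atTop c)
    exact ⟨r, hr, fun x hx => ⟨hx.1, h ⟨hx.2, hx.1⟩⟩⟩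
  have hcomp : ∀ x ∈ A, (∀ b ∈ Cp, b ∉ closure (connectedComponentIn A x)) →
      D ⊆ connectedComponentIn A x := by
    intro x hx hno
    refine flux_contra hD hDc.isPreconnected hu hv hAo.connectedComponentIn
      ((connectedComponentIn_subset A x).trans hAD) isPreconnected_connectedComponentIn
      ⟨x, mem_connectedComponentIn hx⟩ hR he he' hee
      (fun y hy => (connectedComponentIn_subset A x hy).2) ?_ ?_ hM hM'
    · intro b hbD hbc hbU
      by_contra hlt
      have hbA : b ∈ A := ⟨hbD, not_le.1 hlt⟩
      have hopen : IsOpen (connectedComponentIn A b) := hAo.connectedComponentIn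
      obtain ⟨y, hy1, hy2⟩ := mem_closure_iff.1 hbc _ hopen (mem_connectedComponentIn hbA)
      have e1 := connectedComponentIn_eq hy1
      have e2 := connectedComponentIn_eq hy2
      exact hbU (e2.trans e1.symm ▸ mem_connectedComponentIn hbA)
    · intro b hbD h1 h2 hbc
      have hbcD : b ∈ closure D :=
        closure_mono ((connectedComponentIn_subset A x).trans hAD) hbc
      rcases hfr hbcD with h | (h | h) | h
      · exact hbD h
      · exact hno b h hbc
      · obtain ⟨r, hr, h⟩ := Metric.mem_nhdsWithin_iff.1 ((hm b h).eventually_lt_atBot c)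
        obtain ⟨y, hy1, hy2⟩ := mem_closure_iff.1 hbc _ isOpen_ball (mem_ball_self hr)
        have hyA := connectedComponentIn_subset A x hy2
        exact lt_asymm hyA.2 (h ⟨hy1, hyA.1⟩)
      · simp only [mem_insert_iff, mem_singleton_iff] at h
        tauto
  -- a component touching `Cp` contains a neighbourhood in `D` of every point of `Cp`,
  -- because `Cp` is connected
  have hall : ∀ x ∈ A, (∃ b ∈ Cp, b ∈ closure (connectedComponentIn A x)) →
      ∀ b ∈ Cp, ∃ r > 0, D ∩ ball b r ⊆ connectedComponentIn A x := by
    rintro x hx ⟨b₀, hb₀, hb₀c⟩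
    set V := connectedComponentIn A x with hV
    have hup : ∀ b ∈ Cp, ∀ r > 0, D ∩ ball b r ⊆ A → (D ∩ ball b r ∩ V).Nonempty →
        D ∩ ball b r ⊆ V := by
      rintro b hb r hr hsub ⟨y, hy, hyV⟩
      have h1 := ((hDc.inter (convex_ball b r)).isPreconnected).subset_connectedComponentIn hy hsub
      rwa [← connectedComponentIn_eq hyV] at h1
    have hdisj : ∀ b ∈ Cp, b ∉ closure (A \ V) := by
      by_contra hcon
      push Not at hcon
      obtain ⟨b₁, hb₁, hb₁c⟩ := hcon
      obtain ⟨b, hb, hbV, hbV'⟩ := isPreconnected_closed_iff.1 hCp _ _ isClosed_closure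
        (isClosed_closure (s := A \ V)) (fun b hb => by
          rw [← closure_union, union_sdiff_self]
          obtain ⟨r, hr, hs⟩ := hnear b hb
          refine mem_closure_iff_nhds.2 fun t ht => ?_
          obtain ⟨y, hy, hyD⟩ := mem_closure_iff_nhds.1 (hCpD hb) _
            (inter_mem ht (ball_mem_nhds b hr))
          exact ⟨y, hy.1, Or.inr (hs ⟨hyD, hy.2⟩)⟩) ⟨b₀, hb₀, hb₀c⟩ ⟨b₁, hb₁, hb₁c⟩
      obtain ⟨r, hr, hs⟩ := hnear b hb
      obtain ⟨y, hy1, hy2⟩ := mem_closure_iff.1 hbV _ isOpen_ball (mem_ball_self hr)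
      have hsub := hup b hb r hr hs ⟨y, ⟨hAD (connectedComponentIn_subset A x hy2), hy1⟩, hy2⟩
      obtain ⟨z, hz1, hz2⟩ := mem_closure_iff.1 hbV' _ isOpen_ball (mem_ball_self hr)
      exact hz2.2 (hsub ⟨hAD hz2.1, hz1⟩)
    intro b hb
    obtain ⟨r, hr, hs⟩ := hnear b hb
    obtain ⟨r', hr', hs'⟩ := Metric.mem_nhds_iff.1
      (isClosed_closure.isOpen_compl.mem_nhds (hdisj b hb))
    refine ⟨min r r', by positivity, fun y hy => ?_⟩
    by_contra hyV
    exact hs' (ball_subset_ball (min_le_right _ _) hy.2)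
      (subset_closure ⟨hs ⟨hy.1, ball_subset_ball (min_le_left _ _) hy.2⟩, hyV⟩)
  apply isPreconnected_of_forall_pair
  intro x hx y hy
  by_cases h1 : ∃ b ∈ Cp, b ∈ closure (connectedComponentIn A x)
  · by_cases h2 : ∃ b ∈ Cp, b ∈ closure (connectedComponentIn A y)
    · obtain ⟨b, hb, hbc⟩ := id h1
      obtain ⟨r, hr, hr1⟩ := hall x hx h1 b hb
      obtain ⟨r', hr', hr1'⟩ := hall y hy h2 b hb
      obtain ⟨z, hz1, hz2⟩ := mem_closure_iff.1 (hCpD hb) _ isOpen_ball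
        (mem_ball_self (show 0 < min r r' by positivity))
      have e1 := connectedComponentIn_eq (hr1 ⟨hz2, ball_subset_ball (min_le_left _ _) hz1⟩)
      have e2 := connectedComponentIn_eq (hr1' ⟨hz2, ball_subset_ball (min_le_right _ _) hz1⟩)
      refine ⟨connectedComponentIn A x, connectedComponentIn_subset A x,
        mem_connectedComponentIn hx, ?_, isPreconnected_connectedComponentIn⟩
      rw [e1, ← e2]; exact mem_connectedComponentIn hy
    · push Not at h2
      exact ⟨connectedComponentIn A y, connectedComponentIn_subset A y, hcomp y hy h2 (hAD hx),
        mem_connectedComponentIn hy, isPreconnected_connectedComponentIn⟩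
  · push Not at h1
    exact ⟨connectedComponentIn A x, connectedComponentIn_subset A x,
      mem_connectedComponentIn hx, hcomp x hx h1 (hAD hy), isPreconnected_connectedComponentIn⟩

open Topology

/-! ### Scherk translators and their translates -/

/-- The parallelogram `0 < y < w`, `0 < x - κ y < L`. -/
def Pk (κ w L : ℝ) : Set (ℝ × ℝ) := {p | 0 < p.2 ∧ p.2 < w ∧ κ * p.2 < p.1 ∧ p.1 < L + κ * p.2}

/-- A Scherk translator on `Pk κ w L`: boundary value `-∞` on the horizontal and `+∞` on the
nonhorizontal sides. -/
structure Sch (κ w L : ℝ) (u : ℝ × ℝ → ℝ) : Prop where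
  hw : 0 < w
  hL : 0 < L
  tr : IsTranslatorOn (Pk κ w L) u
  bot : ∀ b : ℝ × ℝ, (b.2 = 0 ∨ b.2 = w) → κ * b.2 < b.1 → b.1 < L + κ * b.2 →
    Tendsto u (nhdsWithin b (Pk κ w L)) atBot
  top : ∀ b : ℝ × ℝ, 0 < b.2 → b.2 < w → (b.1 = κ * b.2 ∨ b.1 = L + κ * b.2) →
    Tendsto u (nhdsWithin b (Pk κ w L)) atTop

lemma isOpen_Pk (κ w L : ℝ) : IsOpen (Pk κ w L) := by
  have h1 : IsOpen {p : ℝ × ℝ | 0 < p.2} := isOpen_lt (by fun_prop) (by fun_prop)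
  have h2 : IsOpen {p : ℝ × ℝ | p.2 < w} := isOpen_lt (by fun_prop) (by fun_prop)
  have h3 : IsOpen {p : ℝ × ℝ | κ * p.2 < p.1} := isOpen_lt (by fun_prop) (by fun_prop)
  have h4 : IsOpen {p : ℝ × ℝ | p.1 < L + κ * p.2} := isOpen_lt (by fun_prop) (by fun_prop)
  exact h1.inter (h2.inter (h3.inter h4))

lemma convex_Pk (κ w L : ℝ) : Convex ℝ (Pk κ w L) := by
  rintro x ⟨h1, h2, h3, h4⟩ y ⟨g1, g2, g3, g4⟩ a b ha hb hab
  simp only [Pk, mem_ofPred_eq, Prod.snd_add, Prod.fst_add, Prod.smul_snd, Prod.smul_fst, smul_eq_mul]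
  obtain rfl : b = 1 - a := by linarith
  rcases eq_or_lt_of_le ha with rfl | ha'
  · simp only [zero_mul, sub_zero, one_mul, zero_add]
    exact ⟨g1, g2, g3, g4⟩
  · refine ⟨?_, ?_, ?_, ?_⟩ <;> nlinarith

lemma norm_Pk_le {κ w L : ℝ} {x : ℝ × ℝ} (hx : x ∈ Pk κ w L) :
    ‖x‖ ≤ w + |κ| * w + L := by
  obtain ⟨h1, h2, h3, h4⟩ := hx
  have hk1 := neg_abs_le κ
  have hk2 := le_abs_self κ
  have hk := abs_nonneg κ
  have e1 : κ * x.2 ≤ |κ| * w := by nlinarith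
  have e2 : -(|κ| * w) ≤ κ * x.2 := by nlinarith
  have e3 : 0 ≤ |κ| * w := by nlinarith
  rw [Prod.norm_def, Real.norm_eq_abs, Real.norm_eq_abs]
  apply max_le
  · rw [abs_le]; constructor <;> linarith
  · rw [abs_le]; constructor <;> linarith

namespace Sch
variable {κ w L : ℝ} {u : ℝ × ℝ → ℝ}

lemma contAt (hs : Sch κ w L u) {b : ℝ × ℝ} (hb : b ∈ Pk κ w L) : ContinuousAt u b :=
  hs.tr.1.continuousOn.continuousAt ((isOpen_Pk κ w L).mem_nhds hb)

/-- `u` is bounded below near every point of the closed parallelogram off the horizontal lines. -/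
lemma lb (hs : Sch κ w L u) {b : ℝ × ℝ} (h1 : 0 < b.2) (h2 : b.2 < w) (h3 : κ * b.2 ≤ b.1)
    (h4 : b.1 ≤ L + κ * b.2) : ∃ M, ∀ᶠ x in 𝓝[Pk κ w L] b, M ≤ u x := by
  rcases eq_or_lt_of_le h3 with h3 | h3
  · exact ⟨0, (hs.top b h1 h2 (Or.inl h3.symm)).eventually_ge_atTop 0⟩
  rcases eq_or_lt_of_le h4 with h4 | h4
  · exact ⟨0, (hs.top b h1 h2 (Or.inr h4)).eventually_ge_atTop 0⟩
  refine ⟨u b - 1, nhdsWithin_le_nhds ?_⟩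
  have := (hs.contAt (b := b) ⟨h1, h2, h3, h4⟩).eventually_const_lt (show u b - 1 < u b by linarith)
  exact this.mono fun x hx => hx.le

/-- `u` is bounded above near every point of the closed parallelogram off the slanted lines. -/
lemma ub (hs : Sch κ w L u) {b : ℝ × ℝ} (h1 : 0 ≤ b.2) (h2 : b.2 ≤ w) (h3 : κ * b.2 < b.1)
    (h4 : b.1 < L + κ * b.2) : ∃ M, ∀ᶠ x in 𝓝[Pk κ w L] b, u x ≤ M := by
  rcases eq_or_lt_of_le h1 with h1 | h1
  · exact ⟨0, (hs.bot b (Or.inl h1.symm) h3 h4).eventually_le_atBot 0⟩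
  rcases eq_or_lt_of_le h2 with h2 | h2
  · exact ⟨0, (hs.bot b (Or.inr h2) h3 h4).eventually_le_atBot 0⟩
  refine ⟨u b + 1, nhdsWithin_le_nhds ?_⟩
  have := (hs.contAt (b := b) ⟨h1, h2, h3, h4⟩).eventually_lt_const (show u b < u b + 1 by linarith)
  exact this.mono fun x hx => hx.le

/-- The common domain of `u` and its translate by `h`. -/
def _root_.Dh (κ w L : ℝ) (h : ℝ × ℝ) : Set (ℝ × ℝ) := {x | x ∈ Pk κ w L ∧ x + h ∈ Pk κ w L}

lemma _root_.isOpen_Dh (κ w L : ℝ) (h : ℝ × ℝ) : IsOpen (Dh κ w L h) :=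
  (isOpen_Pk κ w L).inter ((isOpen_Pk κ w L).preimage (continuous_id.add continuous_const))

lemma _root_.convex_Dh (κ w L : ℝ) (h : ℝ × ℝ) : Convex ℝ (Dh κ w L h) := by
  refine (convex_Pk κ w L).inter ?_
  have := (convex_Pk κ w L).translate_preimage_left h
  exact this

lemma tendsto_self (h b : ℝ × ℝ) : Tendsto (fun x => x) (𝓝[Dh κ w L h] b) (𝓝[Pk κ w L] b) :=
  tendsto_id.mono_left (nhdsWithin_mono _ fun _ hx => hx.1)

lemma tendsto_shift (h b : ℝ × ℝ) :
    Tendsto (fun x => x + h) (𝓝[Dh κ w L h] b) (𝓝[Pk κ w L] (b + h)) := by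
  apply tendsto_nhdsWithin_of_tendsto_nhds_of_eventually_within
  · exact ((continuous_id.add continuous_const).tendsto b).mono_left nhdsWithin_le_nhds
  · filter_upwards [self_mem_nhdsWithin] with x hx using hx.2

lemma top_of_bot (h b : ℝ × ℝ) (h1 : Tendsto u (𝓝[Pk κ w L] b) atBot)
    (h2 : ∃ M, ∀ᶠ x in 𝓝[Pk κ w L] (b + h), M ≤ u x) :
    Tendsto (fun x => u (x + h) - u x) (𝓝[Dh κ w L h] b) atTop := by
  obtain ⟨M, hM⟩ := h2
  have e1 := h1.comp (tendsto_self h b)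
  have e2 := (tendsto_shift h b).eventually hM
  simp only [sub_eq_add_neg]
  exact tendsto_atTop_add_left_of_le' _ M e2 (tendsto_neg_atBot_atTop.comp e1)

lemma top_of_top (h b : ℝ × ℝ) (h1 : Tendsto u (𝓝[Pk κ w L] (b + h)) atTop)
    (h2 : ∃ M, ∀ᶠ x in 𝓝[Pk κ w L] b, u x ≤ M) :
    Tendsto (fun x => u (x + h) - u x) (𝓝[Dh κ w L h] b) atTop := by
  obtain ⟨M, hM⟩ := h2
  have e1 := h1.comp (tendsto_shift h b)
  have e2 := (tendsto_self h b).eventually hM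
  simp only [sub_eq_add_neg]
  exact tendsto_atTop_add_right_of_le' _ (-M) e1 (e2.mono fun x hx => by linarith)

lemma bot_of_bot (h b : ℝ × ℝ) (h1 : Tendsto u (𝓝[Pk κ w L] (b + h)) atBot)
    (h2 : ∃ M, ∀ᶠ x in 𝓝[Pk κ w L] b, M ≤ u x) :
    Tendsto (fun x => u (x + h) - u x) (𝓝[Dh κ w L h] b) atBot := by
  obtain ⟨M, hM⟩ := h2
  have e1 := h1.comp (tendsto_shift h b)
  have e2 := (tendsto_self h b).eventually hM
  simp only [sub_eq_add_neg]
  exact tendsto_atBot_add_right_of_ge' _ (-M) e1 (e2.mono fun x hx => by linarith)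

lemma bot_of_top (h b : ℝ × ℝ) (h1 : Tendsto u (𝓝[Pk κ w L] b) atTop)
    (h2 : ∃ M, ∀ᶠ x in 𝓝[Pk κ w L] (b + h), u x ≤ M) :
    Tendsto (fun x => u (x + h) - u x) (𝓝[Dh κ w L h] b) atBot := by
  obtain ⟨M, hM⟩ := h2
  have e1 := h1.comp (tendsto_self h b)
  have e2 := (tendsto_shift h b).eventually hM
  simp only [sub_eq_add_neg]
  exact tendsto_atBot_add_left_of_ge' _ M e2 (tendsto_neg_atTop_atBot.comp e1)

end Sch

lemma pdx_shift (u : ℝ × ℝ → ℝ) (h x : ℝ × ℝ) : pdx (fun y => u (y + h)) x = pdx u (x + h) := by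
  simp only [pdx, fderiv_comp_add_right]

lemma pdy_shift (u : ℝ × ℝ → ℝ) (h x : ℝ × ℝ) : pdy (fun y => u (y + h)) x = pdy u (x + h) := by
  simp only [pdy, fderiv_comp_add_right]

lemma IsTranslatorOn.shift {Ω Ω' : Set (ℝ × ℝ)} {u : ℝ × ℝ → ℝ} (hu : IsTranslatorOn Ω u)
    (h : ℝ × ℝ) (hΩ : ∀ x ∈ Ω', x + h ∈ Ω) : IsTranslatorOn Ω' (fun y => u (y + h)) := by
  have e1 : pdx (fun y => u (y + h)) = fun y => pdx u (y + h) := funext (pdx_shift u h)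
  have e2 : pdy (fun y => u (y + h)) = fun y => pdy u (y + h) := funext (pdy_shift u h)
  constructor
  · exact hu.1.comp (by fun_prop) hΩ
  · intro p hp
    rw [e1, e2, pdx_shift, pdy_shift, pdy_shift]
    exact hu.2 _ (hΩ p hp)

lemma IsTranslatorOn.mono {Ω Ω' : Set (ℝ × ℝ)} {u : ℝ × ℝ → ℝ} (hu : IsTranslatorOn Ω u)
    (hΩ : Ω' ⊆ Ω) : IsTranslatorOn Ω' u := ⟨hu.1.mono hΩ, fun p hp => hu.2 p (hΩ hp)⟩

/-! ### Level sets of differences for transversal translations -/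

section rect
variable {κ a b d : ℝ}

/-- The open parallelogram `0 < y < d`, `a < x - κ y < b`. -/
def oRect (κ a b d : ℝ) : Set (ℝ × ℝ) :=
  {x | 0 < x.2 ∧ x.2 < d ∧ a < x.1 - κ * x.2 ∧ x.1 - κ * x.2 < b}

/-- The closed parallelogram `0 ≤ y ≤ d`, `a ≤ x - κ y ≤ b`. -/
def cRect (κ a b d : ℝ) : Set (ℝ × ℝ) :=
  {x | 0 ≤ x.2 ∧ x.2 ≤ d ∧ a ≤ x.1 - κ * x.2 ∧ x.1 - κ * x.2 ≤ b}

lemma closure_oRect_subset : closure (oRect κ a b d) ⊆ cRect κ a b d := by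
  refine closure_minimal (fun x hx => ⟨hx.1.le, hx.2.1.le, hx.2.2.1.le, hx.2.2.2.le⟩) ?_
  have h1 : IsClosed {p : ℝ × ℝ | 0 ≤ p.2} := isClosed_le (by fun_prop) (by fun_prop)
  have h2 : IsClosed {p : ℝ × ℝ | p.2 ≤ d} := isClosed_le (by fun_prop) (by fun_prop)
  have h3 : IsClosed {p : ℝ × ℝ | a ≤ p.1 - κ * p.2} := isClosed_le (by fun_prop) (by fun_prop)
  have h4 : IsClosed {p : ℝ × ℝ | p.1 - κ * p.2 ≤ b} := isClosed_le (by fun_prop) (by fun_prop)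
  exact h1.inter (h2.inter (h3.inter h4))

lemma cRect_subset_closure (hne : (oRect κ a b d).Nonempty) :
    cRect κ a b d ⊆ closure (oRect κ a b d) := by
  rintro x ⟨h1, h2, h3, h4⟩
  obtain ⟨p, g1, g2, g3, g4⟩ := hne
  have ht : Tendsto (fun t : ℝ => x + t • (p - x)) (𝓝[>] 0) (𝓝 x) := by
    have : Continuous (fun t : ℝ => x + t • (p - x)) := by fun_prop
    have := this.tendsto 0
    simp only [zero_smul, add_zero] at this
    exact this.mono_left nhdsWithin_le_nhds
  refine mem_closure_of_tendsto ht ?_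
  filter_upwards [Ioo_mem_nhdsGT (zero_lt_one' ℝ)] with t ht
  obtain ⟨t0, t1⟩ := ht
  simp only [oRect, mem_ofPred_eq, Prod.snd_add, Prod.fst_add, Prod.smul_snd, Prod.smul_fst,
    smul_eq_mul, Prod.fst_sub, Prod.snd_sub]
  refine ⟨?_, ?_, ?_, ?_⟩
  · nlinarith
  · nlinarith
  · nlinarith [mul_pos t0 (sub_pos.2 g3), mul_nonneg (sub_pos.2 t1).le (sub_nonneg.2 h3)]
  · nlinarith [mul_pos t0 (sub_pos.2 g4), mul_nonneg (sub_pos.2 t1).le (sub_nonneg.2 h4)]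

/-- The image of a product of intervals under the shear `(ξ, y) ↦ (ξ + κ y, y)` is connected. -/
lemma preconn_shear {I J : Set ℝ} (hI : IsPreconnected I) (hJ : IsPreconnected J) :
    IsPreconnected {x : ℝ × ℝ | x.1 - κ * x.2 ∈ I ∧ x.2 ∈ J} := by
  have h := (hI.prod hJ).image (fun z : ℝ × ℝ => (z.1 + κ * z.2, z.2)) (by fun_prop)
  convert h using 1
  ext x
  constructor
  · rintro ⟨h1, h2⟩
    exact ⟨(x.1 - κ * x.2, x.2), ⟨h1, h2⟩, by ext <;> simp⟩
  · rintro ⟨z, ⟨h1, h2⟩, rfl⟩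
    simpa using ⟨h1, h2⟩

end rect

namespace Sch
variable {κ w L : ℝ} {u : ℝ × ℝ → ℝ}

/-- `superlevel_preconnected` applied to the pair (translate of `u`, `u`) and to the reversed pair,
which turns sublevel sets into superlevel sets. -/
lemma level_aux (hs : Sch κ w L u) (h : ℝ × ℝ) {Cp Cm : Set (ℝ × ℝ)} {e e' : ℝ × ℝ}
    (he : e ∉ Dh κ w L h) (he' : e' ∉ Dh κ w L h) (hee : e ≠ e')
    (hCp : IsPreconnected Cp) (hCm : IsPreconnected Cm) (hCpD : Cp ⊆ closure (Dh κ w L h))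
    (hCmD : Cm ⊆ closure (Dh κ w L h))
    (hfr : closure (Dh κ w L h) ⊆ Dh κ w L h ∪ (Cp ∪ Cm ∪ {e, e'}))
    (hp : ∀ b ∈ Cp, Tendsto (fun x => u (x + h) - u x) (𝓝[Dh κ w L h] b) atTop)
    (hm : ∀ b ∈ Cm, Tendsto (fun x => u (x + h) - u x) (𝓝[Dh κ w L h] b) atBot)
    (hM : ∃ M, (∀ᶠ x in 𝓝[Pk κ w L] (e + h), u x ≤ M) ∨ (∀ᶠ x in 𝓝[Pk κ w L] e, u x ≤ M))
    (hM' : ∃ M, (∀ᶠ x in 𝓝[Pk κ w L] (e' + h), u x ≤ M) ∨ (∀ᶠ x in 𝓝[Pk κ w L] e', u x ≤ M))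
    (c : ℝ) :
    IsPreconnected {x ∈ Dh κ w L h | c < u (x + h) - u x} ∧
    IsPreconnected {x ∈ Dh κ w L h | u (x + h) - u x < c} := by
  have t1 : IsTranslatorOn (Dh κ w L h) (fun x => u (x + h)) := hs.tr.shift h fun x hx => hx.2
  have t2 : IsTranslatorOn (Dh κ w L h) u := hs.tr.mono fun x hx => hx.1
  have hR : ∀ x ∈ Dh κ w L h, ‖x‖ ≤ w + |κ| * w + L := fun x hx => norm_Pk_le hx.1
  have key : ∀ e : ℝ × ℝ,
      (∃ M, (∀ᶠ x in 𝓝[Pk κ w L] (e + h), u x ≤ M) ∨ (∀ᶠ x in 𝓝[Pk κ w L] e, u x ≤ M)) →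
      ∃ M, (∀ᶠ x in 𝓝[Dh κ w L h] e, u (x + h) ≤ M) ∨ (∀ᶠ x in 𝓝[Dh κ w L h] e, u x ≤ M) := by
    rintro e ⟨M, hM | hM⟩
    · exact ⟨M, Or.inl ((tendsto_shift h e).eventually hM)⟩
    · exact ⟨M, Or.inr ((tendsto_self h e).eventually hM)⟩
  constructor
  · exact superlevel_preconnected (isOpen_Dh κ w L h) (convex_Dh κ w L h) t1 t2 hR he he' hee hCp
      hCpD hfr hp hm (key e hM) (key e' hM') c
  · have := superlevel_preconnected (isOpen_Dh κ w L h) (convex_Dh κ w L h) t2 t1 hR he he' hee hCm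
      hCmD (by rwa [union_comm Cm]) (fun b hb => ?_) (fun b hb => ?_)
      (by simpa only [or_comm] using key e hM) (by simpa only [or_comm] using key e' hM') (-c)
    · convert this using 4
      constructor <;> intro <;> linarith
    · have := tendsto_neg_atBot_atTop.comp (hm b hb)
      exact this.congr fun x => by simp
    · have := tendsto_neg_atTop_atBot.comp (hp b hb)
      exact this.congr fun x => by simp

/-- For a translation vector `h` transversal to all sides of the parallelogram, all strict super-
and sublevel sets of `x ↦ u (x + h) - u x` are connected. -/
lemma level_conn (hs : Sch κ w L u) {h : ℝ × ℝ} (hk : 0 < h.2) (hη : h.1 - κ * h.2 ≠ 0)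
    (hne : (Dh κ w L h).Nonempty) (c : ℝ) :
    IsPreconnected {x ∈ Dh κ w L h | c < u (x + h) - u x} ∧
    IsPreconnected {x ∈ Dh κ w L h | u (x + h) - u x < c} := by
  set k := h.2 with hkd
  set η := h.1 - κ * k with hηd
  have hh1 : h.1 = η + κ * k := by rw [hηd]; ring
  have hw := hs.hw
  have hL := hs.hL
  rcases lt_or_gt_of_ne hη with hη | hη
  · have hD : Dh κ w L h = oRect κ (-η) L (w - k) := by
      ext x
      simp only [Dh, Pk, oRect, mem_ofPred_eq, Prod.snd_add, Prod.fst_add, ← hkd, hh1]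
      constructor
      · rintro ⟨⟨h1, h2, h3, h4⟩, g1, g2, g3, g4⟩
        refine ⟨?_, ?_, ?_, ?_⟩ <;> linarith
      · rintro ⟨h1, h2, h3, h4⟩
        refine ⟨⟨?_, ?_, ?_, ?_⟩, ?_, ?_, ?_, ?_⟩ <;> linarith
    have hne' := hne
    rw [hD] at hne'
    have hkw : k < w := by obtain ⟨x, h1, h2, h3, h4⟩ := hne'; linarith
    have hηL : -η < L := by obtain ⟨x, h1, h2, h3, h4⟩ := hne'; linarith
    have hcl : closure (Dh κ w L h) = cRect κ (-η) L (w - k) := by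
      rw [hD]; exact Subset.antisymm closure_oRect_subset (cRect_subset_closure hne')
    refine hs.level_aux h
      (Cp := {x | x.1 - κ * x.2 ∈ Ico (-η) L ∧ x.2 ∈ ({0} : Set ℝ)} ∪
        {x | x.1 - κ * x.2 ∈ ({-η} : Set ℝ) ∧ x.2 ∈ Ico 0 (w - k)})
      (Cm := {x | x.1 - κ * x.2 ∈ Ioc (-η) L ∧ x.2 ∈ ({w - k} : Set ℝ)} ∪
        {x | x.1 - κ * x.2 ∈ ({L} : Set ℝ) ∧ x.2 ∈ Ioc 0 (w - k)})
      (e := (L, 0)) (e' := (-η + κ * (w - k), w - k)) ?_ ?_ ?_ ?_ ?_ ?_ ?_ ?_ ?_ ?_ ?_ ?_ c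
    · rw [hD]; rintro ⟨h1, -⟩; simp at h1
    · rw [hD]; rintro ⟨-, h1, -⟩; simp at h1
    · intro h; have := congrArg Prod.snd h; simp at this; linarith
    · refine IsPreconnected.union (-η, 0) ?_ ?_ (preconn_shear isPreconnected_Ico
        isPreconnected_singleton) (preconn_shear isPreconnected_singleton isPreconnected_Ico)
      · simp [hηL]
      · simp [hkw]
    · refine IsPreconnected.union (L + κ * (w - k), w - k) ?_ ?_ (preconn_shear isPreconnected_Ioc
        isPreconnected_singleton) (preconn_shear isPreconnected_singleton isPreconnected_Ioc)
      · simp; linarith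
      · simp [hkw]
    · rw [hcl]
      rintro x (⟨⟨h1, h2⟩, h3⟩ | ⟨h1, h2, h3⟩)
      · rw [mem_singleton_iff] at h3
        exact ⟨by linarith, by linarith, by linarith, by linarith⟩
      · rw [mem_singleton_iff] at h1
        exact ⟨by linarith, by linarith, by linarith, by linarith⟩
    · rw [hcl]
      rintro x (⟨⟨h1, h2⟩, h3⟩ | ⟨h1, h2, h3⟩)
      · rw [mem_singleton_iff] at h3
        exact ⟨by linarith, by linarith, by linarith, by linarith⟩
      · rw [mem_singleton_iff] at h1
        exact ⟨by linarith, by linarith, by linarith, by linarith⟩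
    · rw [hcl, hD]
      rintro x ⟨h1, h2, h3, h4⟩
      rcases eq_or_lt_of_le h1 with h1 | h1
      · rcases eq_or_lt_of_le h4 with h4 | h4
        · refine Or.inr (Or.inr (Or.inl ?_))
          ext
          · simp only; rw [← h1] at h4; linarith
          · exact h1.symm
        · exact Or.inr (Or.inl (Or.inl (Or.inl ⟨⟨h3, h4⟩, h1.symm⟩)))
      rcases eq_or_lt_of_le h2 with h2 | h2
      · rcases eq_or_lt_of_le h3 with h3 | h3
        · refine Or.inr (Or.inr (Or.inr ?_))
          ext
          · simp only; rw [h2] at h3; linarith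
          · exact h2
        · exact Or.inr (Or.inl (Or.inr (Or.inl ⟨⟨h3, h4⟩, h2⟩)))
      rcases eq_or_lt_of_le h3 with h3 | h3
      · exact Or.inr (Or.inl (Or.inl (Or.inr ⟨h3.symm, h1.le, h2⟩)))
      rcases eq_or_lt_of_le h4 with h4 | h4
      · exact Or.inr (Or.inl (Or.inr (Or.inr ⟨h4, h1, h2.le⟩)))
      exact Or.inl ⟨h1, h2, h3, h4⟩
    · rintro x (⟨⟨h1, h2⟩, h3⟩ | ⟨h1, h2, h3⟩)
      · rw [mem_singleton_iff] at h3
        apply top_of_bot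
        · apply hs.bot x (Or.inl h3) <;> linarith
        · apply hs.lb <;> simp only [Prod.snd_add, Prod.fst_add, ← hkd, hh1] <;> linarith
      · rw [mem_singleton_iff] at h1
        apply top_of_top
        · refine hs.top _ ?_ ?_ (Or.inl ?_) <;>
            simp only [Prod.snd_add, Prod.fst_add, ← hkd, hh1] <;> linarith
        · apply hs.ub <;> linarith
    · rintro x (⟨⟨h1, h2⟩, h3⟩ | ⟨h1, h2, h3⟩)
      · rw [mem_singleton_iff] at h3
        apply bot_of_bot
        · refine hs.bot _ (Or.inr ?_) ?_ ?_ <;>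
            simp only [Prod.snd_add, Prod.fst_add, ← hkd, hh1] <;> linarith
        · apply hs.lb <;> linarith
      · rw [mem_singleton_iff] at h1
        apply bot_of_top
        · refine hs.top _ ?_ ?_ (Or.inr ?_) <;> linarith
        · apply hs.ub <;> simp only [Prod.snd_add, Prod.fst_add, ← hkd, hh1] <;> linarith
    · obtain ⟨M, hM⟩ := hs.ub (b := (L, 0) + h)
        (by simp only [Prod.snd_add, ← hkd]; linarith)
        (by simp only [Prod.snd_add, ← hkd]; linarith)
        (by simp only [Prod.snd_add, Prod.fst_add, ← hkd, hh1]; linarith)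
        (by simp only [Prod.snd_add, Prod.fst_add, ← hkd, hh1]; linarith)
      exact ⟨M, Or.inl hM⟩
    · obtain ⟨M, hM⟩ := hs.ub (b := (-η + κ * (w - k), w - k))
        (by simp only; linarith) (by simp only; linarith) (by simp only; linarith)
        (by simp only; linarith)
      exact ⟨M, Or.inr hM⟩
  · have hD : Dh κ w L h = oRect κ 0 (L - η) (w - k) := by
      ext x
      simp only [Dh, Pk, oRect, mem_ofPred_eq, Prod.snd_add, Prod.fst_add, ← hkd, hh1]
      constructor
      · rintro ⟨⟨h1, h2, h3, h4⟩, g1, g2, g3, g4⟩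
        refine ⟨?_, ?_, ?_, ?_⟩ <;> linarith
      · rintro ⟨h1, h2, h3, h4⟩
        refine ⟨⟨?_, ?_, ?_, ?_⟩, ?_, ?_, ?_, ?_⟩ <;> linarith
    have hne' := hne
    rw [hD] at hne'
    have hkw : k < w := by obtain ⟨x, h1, h2, h3, h4⟩ := hne'; linarith
    have hηL : η < L := by obtain ⟨x, h1, h2, h3, h4⟩ := hne'; linarith
    have hcl : closure (Dh κ w L h) = cRect κ 0 (L - η) (w - k) := by
      rw [hD]; exact Subset.antisymm closure_oRect_subset (cRect_subset_closure hne')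
    refine hs.level_aux h
      (Cp := {x | x.1 - κ * x.2 ∈ Ioc 0 (L - η) ∧ x.2 ∈ ({0} : Set ℝ)} ∪
        {x | x.1 - κ * x.2 ∈ ({L - η} : Set ℝ) ∧ x.2 ∈ Ico 0 (w - k)})
      (Cm := {x | x.1 - κ * x.2 ∈ Ico 0 (L - η) ∧ x.2 ∈ ({w - k} : Set ℝ)} ∪
        {x | x.1 - κ * x.2 ∈ ({0} : Set ℝ) ∧ x.2 ∈ Ioc 0 (w - k)})
      (e := (0, 0)) (e' := (L - η + κ * (w - k), w - k)) ?_ ?_ ?_ ?_ ?_ ?_ ?_ ?_ ?_ ?_ ?_ ?_ c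
    · rw [hD]; rintro ⟨h1, -⟩; simp at h1
    · rw [hD]; rintro ⟨-, h1, -⟩; simp at h1
    · intro h; have := congrArg Prod.snd h; simp at this; linarith
    · refine IsPreconnected.union (L - η, 0) ?_ ?_ (preconn_shear isPreconnected_Ioc
        isPreconnected_singleton) (preconn_shear isPreconnected_singleton isPreconnected_Ico)
      · simp [hηL]
      · simp [hkw]
    · refine IsPreconnected.union (κ * (w - k), w - k) ?_ ?_ (preconn_shear isPreconnected_Ico
        isPreconnected_singleton) (preconn_shear isPreconnected_singleton isPreconnected_Ioc)
      · simp [hηL]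
      · simp [hkw]
    · rw [hcl]
      rintro x (⟨⟨h1, h2⟩, h3⟩ | ⟨h1, h2, h3⟩)
      · rw [mem_singleton_iff] at h3
        exact ⟨by linarith, by linarith, by linarith, by linarith⟩
      · rw [mem_singleton_iff] at h1
        exact ⟨by linarith, by linarith, by linarith, by linarith⟩
    · rw [hcl]
      rintro x (⟨⟨h1, h2⟩, h3⟩ | ⟨h1, h2, h3⟩)
      · rw [mem_singleton_iff] at h3
        exact ⟨by linarith, by linarith, by linarith, by linarith⟩
      · rw [mem_singleton_iff] at h1
        exact ⟨by linarith, by linarith, by linarith, by linarith⟩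
    · rw [hcl, hD]
      rintro x ⟨h1, h2, h3, h4⟩
      rcases eq_or_lt_of_le h1 with h1 | h1
      · rcases eq_or_lt_of_le h3 with h3 | h3
        · refine Or.inr (Or.inr (Or.inl ?_))
          ext
          · simp only; rw [← h1] at h3; linarith
          · exact h1.symm
        · exact Or.inr (Or.inl (Or.inl (Or.inl ⟨⟨h3, h4⟩, h1.symm⟩)))
      rcases eq_or_lt_of_le h2 with h2 | h2
      · rcases eq_or_lt_of_le h4 with h4 | h4
        · refine Or.inr (Or.inr (Or.inr ?_))
          ext
          · simp only; rw [h2] at h4; linarith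
          · exact h2
        · exact Or.inr (Or.inl (Or.inr (Or.inl ⟨⟨h3, h4⟩, h2⟩)))
      rcases eq_or_lt_of_le h3 with h3 | h3
      · exact Or.inr (Or.inl (Or.inr (Or.inr ⟨h3.symm, h1, h2.le⟩)))
      rcases eq_or_lt_of_le h4 with h4 | h4
      · exact Or.inr (Or.inl (Or.inl (Or.inr ⟨h4, h1.le, h2⟩)))
      exact Or.inl ⟨h1, h2, h3, h4⟩
    · rintro x (⟨⟨h1, h2⟩, h3⟩ | ⟨h1, h2, h3⟩)
      · rw [mem_singleton_iff] at h3
        apply top_of_bot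
        · apply hs.bot x (Or.inl h3) <;> linarith
        · apply hs.lb <;> simp only [Prod.snd_add, Prod.fst_add, ← hkd, hh1] <;> linarith
      · rw [mem_singleton_iff] at h1
        apply top_of_top
        · refine hs.top _ ?_ ?_ (Or.inr ?_) <;>
            simp only [Prod.snd_add, Prod.fst_add, ← hkd, hh1] <;> linarith
        · apply hs.ub <;> linarith
    · rintro x (⟨⟨h1, h2⟩, h3⟩ | ⟨h1, h2, h3⟩)
      · rw [mem_singleton_iff] at h3
        apply bot_of_bot
        · refine hs.bot _ (Or.inr ?_) ?_ ?_ <;>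
            simp only [Prod.snd_add, Prod.fst_add, ← hkd, hh1] <;> linarith
        · apply hs.lb <;> linarith
      · rw [mem_singleton_iff] at h1
        apply bot_of_top
        · refine hs.top _ ?_ ?_ (Or.inl ?_) <;> linarith
        · apply hs.ub <;> simp only [Prod.snd_add, Prod.fst_add, ← hkd, hh1] <;> linarith
    · obtain ⟨M, hM⟩ := hs.ub (b := (0, 0) + h)
        (by simp only [Prod.snd_add, ← hkd]; linarith)
        (by simp only [Prod.snd_add, ← hkd]; linarith)
        (by simp only [Prod.snd_add, Prod.fst_add, ← hkd, hh1]; linarith)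
        (by simp only [Prod.snd_add, Prod.fst_add, ← hkd, hh1]; linarith)
      exact ⟨M, Or.inl hM⟩
    · obtain ⟨M, hM⟩ := hs.ub (b := (L - η + κ * (w - k), w - k))
        (by simp only; linarith) (by simp only; linarith) (by simp only; linarith)
        (by simp only; linarith)
      exact ⟨M, Or.inr hM⟩

/-- `x ↦ u (x + h) - u x` has no saddle for transversal `h`. -/
lemma no_saddle_generic (hs : Sch κ w L u) {h : ℝ × ℝ} (hk : h.2 ≠ 0) (hη : h.1 - κ * h.2 ≠ 0)
    {p e₁ e₂ : ℝ × ℝ} (hdet : e₁.1 * e₂.2 - e₁.2 * e₂.1 ≠ 0)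
    (he₁ : ∀ s : ℝ, s ≠ 0 → |s| ≤ 1 → p + s • e₁ ∈ Dh κ w L h ∧
      u (p + h) - u p < u (p + s • e₁ + h) - u (p + s • e₁))
    (he₂ : ∀ s : ℝ, s ≠ 0 → |s| ≤ 1 → p + s • e₂ ∈ Dh κ w L h ∧
      u (p + s • e₂ + h) - u (p + s • e₂) < u (p + h) - u p) : False := by
  have cont : ∀ h : ℝ × ℝ, ContinuousOn (fun x => u (x + h) - u x) (Dh κ w L h) := fun h =>
    (hs.tr.1.continuousOn.comp (by fun_prop) fun x hx => hx.2).sub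
      (hs.tr.1.continuousOn.mono fun x hx => hx.1)
  rcases lt_or_gt_of_ne hk with hk | hk
  · have hne : (Dh κ w L (-h)).Nonempty := by
      obtain ⟨h1, h2⟩ := (he₁ 1 one_ne_zero (by simp)).1
      exact ⟨_, h2, by simpa using h1⟩
    obtain ⟨l1, l2⟩ := hs.level_conn (h := -h) (by simpa using hk)
      (by simp only [Prod.fst_neg, Prod.snd_neg]; intro h0; apply hη; linarith) hne (u p - u (p + h))
    refine no_saddle (isOpen_Dh κ w L (-h)) (cont _) l1 l2 (p := p + h) (e₁ := e₂) (e₂ := e₁)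
      (by simp) (by intro h0; apply hdet; linarith) ?_ ?_
    · intro s hs0 hs1
      obtain ⟨⟨h1, h2⟩, h3⟩ := he₂ s hs0 hs1
      have e : p + h + s • e₂ = p + s • e₂ + h := by abel
      rw [e]
      exact ⟨⟨h2, by simpa using h1⟩, by simp only [add_neg_cancel_right]; linarith⟩
    · intro s hs0 hs1
      obtain ⟨⟨h1, h2⟩, h3⟩ := he₁ s hs0 hs1
      have e : p + h + s • e₁ = p + s • e₁ + h := by abel
      rw [e]
      exact ⟨⟨h2, by simpa using h1⟩, by simp only [add_neg_cancel_right]; linarith⟩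
  · have hne : (Dh κ w L h).Nonempty := ⟨_, (he₁ 1 one_ne_zero (by simp)).1⟩
    obtain ⟨l1, l2⟩ := hs.level_conn (h := h) hk hη hne (u (p + h) - u p)
    exact no_saddle (isOpen_Dh κ w L h) (cont _) l1 l2 (p := p) rfl hdet he₁ he₂

end Sch

/-! ### Equal gradients force equal Hessians: transversal translations -/

lemma HasPd.shift {F : ℝ × ℝ → ℝ} {x h : ℝ × ℝ} {a b : ℝ} (hF : HasPd F (x + h) a b) :
    HasPd (fun y => F (y + h)) x a b :=
  (hasFDerivAt_comp_add_right (f := F) h).2 hF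

lemma HasPd.neg {F : ℝ × ℝ → ℝ} {x : ℝ × ℝ} {a b : ℝ} (hF : HasPd F x a b) :
    HasPd (fun y => -F y) x (-a) (-b) :=
  HasFDerivAt.congr_fderiv (HasFDerivAt.neg hF) (by ext <;> simp)

lemma HasPd.line {F : ℝ × ℝ → ℝ} {p e : ℝ × ℝ} {s a b : ℝ} (hF : HasPd F (p + s • e) a b) :
    HasDerivAt (fun s : ℝ => F (p + s • e)) (e.1 * a + e.2 * b) s := by
  have h1 : HasDerivAt (fun s : ℝ => p + s • e) e s := by
    simpa using ((hasDerivAt_id s).smul_const e).const_add p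
  have hF' : HasFDerivAt F (a • ContinuousLinearMap.fst ℝ ℝ ℝ + b • ContinuousLinearMap.snd ℝ ℝ ℝ)
    ((fun s : ℝ => p + s • e) s) := hF
  exact (hF'.comp_hasDerivAt s h1).congr_deriv (by simp; ring)

/-- Strict local minimum along a line on which the Hessian is positive. -/
lemma line_strict_min {D : Set (ℝ × ℝ)} (hD : IsOpen D) {f f₁ f₂ : ℝ × ℝ → ℝ} {p e : ℝ × ℝ}
    {a b c : ℝ} (hp : p ∈ D) (hf : ∀ x ∈ D, HasPd f x (f₁ x) (f₂ x)) (h1 : HasPd f₁ p a b)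
    (h2 : HasPd f₂ p b c) (z1 : f₁ p = 0) (z2 : f₂ p = 0)
    (hpos : 0 < e.1 ^ 2 * a + 2 * e.1 * e.2 * b + e.2 ^ 2 * c) :
    ∃ ε > 0, ∀ s : ℝ, s ≠ 0 → |s| ≤ ε → p + s • e ∈ D ∧ f p < f (p + s • e) := by
  set l : ℝ → ℝ := fun s => e.1 * f₁ (p + s • e) + e.2 * f₂ (p + s • e) with hl
  have hl0 : l 0 = 0 := by simp [hl, z1, z2]
  have hld : HasDerivAt l (e.1 ^ 2 * a + 2 * e.1 * e.2 * b + e.2 ^ 2 * c) 0 := by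
    have g1 : HasDerivAt (fun s : ℝ => f₁ (p + s • e)) (e.1 * a + e.2 * b) 0 :=
      HasPd.line (by simpa using h1)
    have g2 : HasDerivAt (fun s : ℝ => f₂ (p + s • e)) (e.1 * b + e.2 * c) 0 :=
      HasPd.line (by simpa using h2)
    exact ((g1.const_mul e.1).add (g2.const_mul e.2)).congr_deriv (by ring)
  have hslope : ∀ᶠ s in nhdsWithin (0 : ℝ) {0}ᶜ, 0 < s * l s := by
    have := (hasDerivAt_iff_tendsto_slope.1 hld).eventually_const_lt hpos
    filter_upwards [this, self_mem_nhdsWithin] with s hs hs0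
    rw [slope_def_field, hl0, sub_zero, sub_zero] at hs
    have hs2 : 0 < s ^ 2 := by have : s ≠ 0 := hs0; positivity
    have := mul_pos hs hs2
    have hs0' : s ≠ 0 := hs0
    field_simp at this
    linarith
  have hmem : ∀ᶠ s in nhds (0 : ℝ), p + s • e ∈ D := by
    have : Continuous (fun s : ℝ => p + s • e) := by fun_prop
    exact this.continuousAt.eventually (by simpa using hD.mem_nhds hp)
  obtain ⟨ε, hε, hball⟩ := Metric.eventually_nhds_iff.1
    (hmem.and (eventually_nhdsWithin_iff.1 hslope))
  refine ⟨ε / 2, by positivity, fun s hs0 hs => ?_⟩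
  have hin : ∀ σ : ℝ, |σ| ≤ |s| → p + σ • e ∈ D ∧ (σ ≠ 0 → 0 < σ * l σ) := fun σ hσ => by
    have := @hball σ (by simp; linarith)
    exact this
  refine ⟨(hin s le_rfl).1, ?_⟩
  have hder : ∀ σ : ℝ, |σ| ≤ |s| → HasDerivAt (fun s : ℝ => f (p + s • e)) (l σ) σ := fun σ hσ =>
    HasPd.line (hf _ (hin σ hσ).1)
  rcases lt_or_gt_of_ne hs0 with hneg | hpos'
  · have hab : ∀ σ ∈ Icc s 0, |σ| ≤ |s| := fun σ hσ => by
      rw [abs_of_nonpos hσ.2, abs_of_neg hneg]; linarith [hσ.1]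
    obtain ⟨σ, hσ, hσe⟩ := exists_hasDerivAt_eq_slope (fun s : ℝ => f (p + s • e)) l hneg
      (fun σ hσ => (hder σ (hab σ hσ)).continuousAt.continuousWithinAt)
      (fun σ hσ => hder σ (hab σ (Ioo_subset_Icc_self hσ)))
    have h3 := (hin σ (hab σ (Ioo_subset_Icc_self hσ))).2 hσ.2.ne
    have h4 : l σ < 0 := by nlinarith [hσ.2]
    rw [hσe] at h4
    simp only [zero_smul, add_zero, zero_sub] at h4
    rw [div_neg_iff] at h4
    rcases h4 with h4 | h4 <;> linarith
  · have hab : ∀ σ ∈ Icc 0 s, |σ| ≤ |s| := fun σ hσ => by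
      rw [abs_of_nonneg hσ.1, abs_of_pos hpos']; linarith [hσ.2]
    obtain ⟨σ, hσ, hσe⟩ := exists_hasDerivAt_eq_slope (fun s : ℝ => f (p + s • e)) l hpos'
      (fun σ hσ => (hder σ (hab σ hσ)).continuousAt.continuousWithinAt)
      (fun σ hσ => hder σ (hab σ (Ioo_subset_Icc_self hσ)))
    have h3 := (hin σ (hab σ (Ioo_subset_Icc_self hσ))).2 hσ.1.ne'
    have h4 : 0 < l σ := by nlinarith [hσ.1]
    rw [hσe] at h4
    simp only [zero_smul, add_zero, sub_zero] at h4
    rw [div_pos_iff] at h4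
    rcases h4 with h4 | h4 <;> linarith

/-- A nonzero symmetric form with vanishing trace against a positive definite one has negative
determinant. -/
lemma det_neg_of_trace {p q a b c : ℝ}
    (h : (1 + q ^ 2) * a - 2 * p * q * b + (1 + p ^ 2) * c = 0)
    (hne : ¬ (a = 0 ∧ b = 0 ∧ c = 0)) : a * c - b ^ 2 < 0 := by
  by_contra hcon
  push Not at hcon
  apply hne
  have h1 : a ^ 2 + b ^ 2 + (q * a - p * b) ^ 2 ≤ 0 := by
    have e : (1 + q ^ 2) * a ^ 2 - 2 * p * q * a * b + (1 + p ^ 2) * (a * c) = 0 := by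
      linear_combination a * h
    nlinarith [mul_nonneg (by positivity : 0 ≤ 1 + p ^ 2) hcon]
  have ha : a = 0 := by
    have : a ^ 2 = 0 := by nlinarith [sq_nonneg a, sq_nonneg b, sq_nonneg (q * a - p * b)]
    exact pow_eq_zero_iff two_ne_zero |>.1 this
  have hb : b = 0 := by
    have : b ^ 2 = 0 := by nlinarith [sq_nonneg a, sq_nonneg b, sq_nonneg (q * a - p * b)]
    exact pow_eq_zero_iff two_ne_zero |>.1 this
  refine ⟨ha, hb, ?_⟩
  rw [ha, hb] at h
  have : (1 + p ^ 2) * c = 0 := by linarith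
  exact (mul_eq_zero.1 this).resolve_left (by positivity)

/-- A symmetric form of negative determinant takes both signs, on linearly independent vectors. -/
lemma exists_indefinite {a b c : ℝ} (h : a * c - b ^ 2 < 0) :
    ∃ e₁ e₂ : ℝ × ℝ, e₁.1 * e₂.2 - e₁.2 * e₂.1 ≠ 0 ∧
      0 < e₁.1 ^ 2 * a + 2 * e₁.1 * e₁.2 * b + e₁.2 ^ 2 * c ∧
      e₂.1 ^ 2 * a + 2 * e₂.1 * e₂.2 * b + e₂.2 ^ 2 * c < 0 := by
  rcases lt_trichotomy a 0 with ha | ha | ha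
  · refine ⟨(-b, a), (1, 0), ?_, ?_, ?_⟩ <;> simp <;> nlinarith [mul_pos_of_neg_of_neg ha h]
  · subst ha
    have hb : b ≠ 0 := by rintro rfl; simp at h
    -- on vectors `(x, b)` the form equals `b² (2 x + c)`
    refine ⟨((1 - c) / 2, b), ((-1 - c) / 2, b), ?_, ?_, ?_⟩
    · simp only
      rw [show (1 - c) / 2 * b - b * ((-1 - c) / 2) = b by ring]; exact hb
    · simp only
      have : 0 < b ^ 2 := by positivity
      nlinarith
    · simp only
      have : 0 < b ^ 2 := by positivity
      nlinarith
  · refine ⟨(1, 0), (-b, a), ?_, ?_, ?_⟩ <;> simp <;> nlinarith [mul_pos_of_neg_of_neg (neg_neg_of_pos ha) h]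

namespace Sch
variable {κ w L : ℝ} {u : ℝ × ℝ → ℝ}

lemma hasPd (hs : Sch κ w L u) {x} (hx : x ∈ Pk κ w L) : HasPd u x (pdx u x) (pdy u x) :=
  hasPd_of_contDiffOn (isOpen_Pk κ w L) hs.tr.1 hx

lemma hasPd_x (hs : Sch κ w L u) {x} (hx : x ∈ Pk κ w L) :
    HasPd (pdx u) x (pdx (pdx u) x) (pdy (pdx u) x) :=
  hasPd_of_contDiffOn (isOpen_Pk κ w L) (contDiffOn_pdx (isOpen_Pk κ w L) hs.tr.1) hx

lemma hasPd_y (hs : Sch κ w L u) {x} (hx : x ∈ Pk κ w L) :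
    HasPd (pdy u) x (pdy (pdx u) x) (pdy (pdy u) x) := by
  rw [← pd_symm (isOpen_Pk κ w L) hs.tr.1 hx]
  exact hasPd_of_contDiffOn (isOpen_Pk κ w L) (contDiffOn_pdy (isOpen_Pk κ w L) hs.tr.1) hx

/-- Where two gradients agree, the translator equations have the same coefficients, so the difference
of the Hessians is trace free with respect to a positive definite form. -/
lemma trace_zero (hs : Sch κ w L u) {x y} (hx : x ∈ Pk κ w L) (hy : y ∈ Pk κ w L)
    (h1 : pdx u y = pdx u x) (h2 : pdy u y = pdy u x) :
    (1 + pdy u x ^ 2) * (pdx (pdx u) y - pdx (pdx u) x)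
      - 2 * pdx u x * pdy u x * (pdy (pdx u) y - pdy (pdx u) x)
      + (1 + pdx u x ^ 2) * (pdy (pdy u) y - pdy (pdy u) x) = 0 := by
  have ex := hs.tr.2 x hx
  have ey := hs.tr.2 y hy
  rw [h1, h2] at ey
  linear_combination ey - ex

/-- For transversal `h`, equal gradients at `p` and `p + h` force equal Hessians. -/
lemma hess_eq_generic (hs : Sch κ w L u) {h : ℝ × ℝ} (hk : h.2 ≠ 0) (hη : h.1 - κ * h.2 ≠ 0)
    {p : ℝ × ℝ} (hp : p ∈ Pk κ w L) (hph : p + h ∈ Pk κ w L)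
    (h1 : pdx u (p + h) = pdx u p) (h2 : pdy u (p + h) = pdy u p) :
    pdx (pdx u) (p + h) - pdx (pdx u) p = 0 ∧ pdy (pdx u) (p + h) - pdy (pdx u) p = 0 ∧
      pdy (pdy u) (p + h) - pdy (pdy u) p = 0 := by
  by_contra hne
  obtain ⟨e₁, e₂, hdet, hpos, hneg⟩ :=
    exists_indefinite (det_neg_of_trace (hs.trace_zero hp hph h1 h2) hne)
  have hf : ∀ x ∈ Dh κ w L h, HasPd (fun x => u (x + h) - u x) x (pdx u (x + h) - pdx u x)
      (pdy u (x + h) - pdy u x) := fun x hx => (HasPd.shift (hs.hasPd hx.2)).sub (hs.hasPd hx.1)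
  have g1 := (HasPd.shift (hs.hasPd_x hph)).sub (hs.hasPd_x hp)
  have g2 := (HasPd.shift (hs.hasPd_y hph)).sub (hs.hasPd_y hp)
  obtain ⟨ε₁, hε₁, H1⟩ := line_strict_min (isOpen_Dh κ w L h) (e := e₁) ⟨hp, hph⟩ hf g1 g2
    (by simp [h1]) (by simp [h2]) hpos
  obtain ⟨ε₂, hε₂, H2⟩ := line_strict_min (isOpen_Dh κ w L h) (e := e₂) ⟨hp, hph⟩
    (fun x hx => (hf x hx).neg) g1.neg g2.neg (by simp [h1]) (by simp [h2]) (by linarith)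
  have hscale : ∀ ε > 0, ∀ s : ℝ, s ≠ 0 → |s| ≤ 1 → s * ε ≠ 0 ∧ |s * ε| ≤ ε := fun ε hε s h0 h1 => by
    refine ⟨mul_ne_zero h0 hε.ne', ?_⟩
    rw [abs_mul, abs_of_pos hε]; nlinarith
  refine hs.no_saddle_generic hk hη (p := p) (e₁ := ε₁ • e₁) (e₂ := ε₂ • e₂) ?_ ?_ ?_
  · simp only [Prod.smul_fst, Prod.smul_snd, smul_eq_mul]
    rw [show ε₁ * e₁.1 * (ε₂ * e₂.2) - ε₁ * e₁.2 * (ε₂ * e₂.1) =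
      ε₁ * ε₂ * (e₁.1 * e₂.2 - e₁.2 * e₂.1) by ring]
    exact mul_ne_zero (by positivity) hdet
  · intro s s0 s1
    rw [smul_smul]
    exact H1 _ (hscale ε₁ hε₁ s s0 s1).1 (hscale ε₁ hε₁ s s0 s1).2
  · intro s s0 s1
    rw [smul_smul]
    obtain ⟨h1, h2⟩ := H2 _ (hscale ε₂ hε₂ s s0 s1).1 (hscale ε₂ hε₂ s s0 s1).2
    exact ⟨h1, by linarith⟩

end Sch

/-! ### Equal gradients force equal Hessians: arbitrary translations -/

open Metric in
/-- Quantitative persistence of a nondegenerate zero. -/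
lemma zero_persists (M : (ℝ × ℝ) →L[ℝ] (ℝ × ℝ)) (hM : M.range = ⊤) :
    ∃ ε > 0, ∀ (F : ℝ × ℝ → ℝ × ℝ) (z : ℝ × ℝ) (δ : ℝ), 0 ≤ δ →
      (∀ x ∈ closedBall z δ, ∀ y ∈ closedBall z δ, ‖F x - F y - M (x - y)‖ ≤ ε * ‖x - y‖) →
      ‖F z‖ ≤ ε * δ → ∃ x ∈ closedBall z δ, F x = 0 := by
  have hN : 0 < (M.nonlinearRightInverseOfSurjective hM).nnnorm :=
    M.nonlinearRightInverseOfSurjective_nnnorm_pos hM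
  set N := (M.nonlinearRightInverseOfSurjective hM).nnnorm with hNd
  have hN' : (0 : ℝ) < N := hN
  refine ⟨(N : ℝ)⁻¹ / 2, by positivity, fun F z δ hδ hF hz => ?_⟩
  have happ : ApproximatesLinearOn F M (closedBall z δ) (N⁻¹ / 2) := by
    apply LipschitzOnWith.approximatesLinearOn
    apply LipschitzOnWith.of_dist_le_mul
    intro x hx y hy
    have := hF x hx y hy
    rw [dist_eq_norm, dist_eq_norm]
    simpa [sub_sub_sub_comm] using this
  have hsurj := happ.surjOn_closedBall_of_nonlinearRightInverse
    (M.nonlinearRightInverseOfSurjective hM) hδ subset_rfl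
  rw [← hNd] at hsurj
  obtain ⟨x, hx, hx0⟩ := hsurj (show (0 : ℝ × ℝ) ∈ _ by
    rw [mem_closedBall, dist_comm, dist_zero_right]
    refine hz.trans (le_of_eq ?_)
    push_cast
    ring)
  exact ⟨x, hx, hx0⟩

/-- The linear map with symmetric matrix `(a, b; b, c)`. -/
def symL (a b c : ℝ) : (ℝ × ℝ) →L[ℝ] (ℝ × ℝ) :=
  (a • ContinuousLinearMap.fst ℝ ℝ ℝ + b • ContinuousLinearMap.snd ℝ ℝ ℝ).prod
    (b • ContinuousLinearMap.fst ℝ ℝ ℝ + c • ContinuousLinearMap.snd ℝ ℝ ℝ)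

@[simp] lemma symL_apply (a b c : ℝ) (v : ℝ × ℝ) :
    symL a b c v = (a * v.1 + b * v.2, b * v.1 + c * v.2) := by simp [symL]

lemma symL_range {a b c : ℝ} (h : a * c - b ^ 2 ≠ 0) : (symL a b c).range = ⊤ := by
  rw [LinearMap.range_eq_top]
  intro v
  refine ⟨((c * v.1 - b * v.2) / (a * c - b ^ 2), (a * v.2 - b * v.1) / (a * c - b ^ 2)), ?_⟩
  ext
  · simp only [ContinuousLinearMap.coe_coe, symL_apply]
    rw [← mul_div_assoc, ← mul_div_assoc, ← add_div, div_eq_iff h]; ring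
  · simp only [ContinuousLinearMap.coe_coe, symL_apply]
    rw [← mul_div_assoc, ← mul_div_assoc, ← add_div, div_eq_iff h]; ring

lemma hasFDerivAt_of_hasPd {F G : ℝ × ℝ → ℝ} {x : ℝ × ℝ} {a b c : ℝ} (h1 : HasPd F x a b)
    (h2 : HasPd G x b c) : HasFDerivAt (fun y => (F y, G y)) (symL a b c) x :=
  HasFDerivAt.prodMk h1 h2

namespace Sch
variable {κ w L : ℝ} {u : ℝ × ℝ → ℝ}
open Topology Metric

lemma smooth_x (hs : Sch κ w L u) : ContDiffOn ℝ (⊤ : ℕ∞) (pdx u) (Pk κ w L) :=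
  contDiffOn_pdx (isOpen_Pk κ w L) hs.tr.1
lemma smooth_y (hs : Sch κ w L u) : ContDiffOn ℝ (⊤ : ℕ∞) (pdy u) (Pk κ w L) :=
  contDiffOn_pdy (isOpen_Pk κ w L) hs.tr.1
lemma smooth_xx (hs : Sch κ w L u) : ContDiffOn ℝ (⊤ : ℕ∞) (pdx (pdx u)) (Pk κ w L) :=
  contDiffOn_pdx (isOpen_Pk κ w L) hs.smooth_x
lemma smooth_xy (hs : Sch κ w L u) : ContDiffOn ℝ (⊤ : ℕ∞) (pdy (pdx u)) (Pk κ w L) :=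
  contDiffOn_pdy (isOpen_Pk κ w L) hs.smooth_x
lemma smooth_yy (hs : Sch κ w L u) : ContDiffOn ℝ (⊤ : ℕ∞) (pdy (pdy u)) (Pk κ w L) :=
  contDiffOn_pdy (isOpen_Pk κ w L) hs.smooth_y

lemma strict_G (hs : Sch κ w L u) {x} (hx : x ∈ Pk κ w L) :
    HasStrictFDerivAt (fun y => (pdx u y, pdy u y))
      (symL (pdx (pdx u) x) (pdy (pdx u) x) (pdy (pdy u) x)) x :=
  (((hs.smooth_x.prodMk hs.smooth_y).contDiffAt ((isOpen_Pk κ w L).mem_nhds hx))).hasStrictFDerivAt'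
    (hasFDerivAt_of_hasPd (hs.hasPd_x hx) (hs.hasPd_y hx)) (by simp)

lemma _root_.HasStrictFDerivAt.exists_ball {F : ℝ × ℝ → ℝ × ℝ} {M : (ℝ × ℝ) →L[ℝ] (ℝ × ℝ)}
    {z : ℝ × ℝ} (h : HasStrictFDerivAt F M z) {ε : ℝ} (hε : 0 < ε) :
    ∃ ρ > 0, ∀ x ∈ ball z ρ, ∀ y ∈ ball z ρ, ‖F x - F y - M (x - y)‖ ≤ ε * ‖x - y‖ := by
  have h1 := h.isLittleO.def hε
  rw [nhds_prod_eq] at h1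
  obtain ⟨ρ, hρ, H⟩ := (nhds_basis_ball (x := z)).prod_self.eventually_iff.1 h1
  exact ⟨ρ, hρ, fun x hx y hy => H (x := (x, y)) ⟨hx, hy⟩⟩

/-- Equal gradients at two points force equal Hessians. -/
lemma hess_eq (hs : Sch κ w L u) {h : ℝ × ℝ} {p : ℝ × ℝ} (hp : p ∈ Pk κ w L)
    (hph : p + h ∈ Pk κ w L) (h1 : pdx u (p + h) = pdx u p) (h2 : pdy u (p + h) = pdy u p) :
    pdx (pdx u) (p + h) - pdx (pdx u) p = 0 ∧ pdy (pdx u) (p + h) - pdy (pdx u) p = 0 ∧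
      pdy (pdy u) (p + h) - pdy (pdy u) p = 0 := by
  by_contra hne
  have hdet := det_neg_of_trace (hs.trace_zero hp hph h1 h2) hne
  obtain ⟨ε, hε, hzero⟩ := zero_persists _ (symL_range hdet.ne)
  obtain ⟨ρ₁, hρ₁, H1⟩ := (hs.strict_G hp).exists_ball (half_pos hε)
  obtain ⟨ρ₂, hρ₂, H2⟩ := (hs.strict_G hph).exists_ball (half_pos hε)
  set G : ℝ × ℝ → ℝ × ℝ := fun y => (pdx u y, pdy u y) with hG
  have hnb := fun {x} (hx : x ∈ Pk κ w L) => (isOpen_Pk κ w L).mem_nhds hx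
  -- the Hessians stay different near `p + h` and `p`
  set Hs : ℝ × ℝ → ℝ × ℝ × ℝ := fun y => (pdx (pdx u) y, pdy (pdx u) y, pdy (pdy u) y) with hHs
  have hHc : ∀ x ∈ Pk κ w L, ContinuousAt Hs x := fun x hx =>
    (hs.smooth_xx.continuousOn.continuousAt (hnb hx)).prodMk
      ((hs.smooth_xy.continuousOn.continuousAt (hnb hx)).prodMk
        (hs.smooth_yy.continuousOn.continuousAt (hnb hx)))
  have hHne : ∀ᶠ z in 𝓝 (p + h) ×ˢ 𝓝 p, Hs z.1 - Hs z.2 ≠ 0 := by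
    have hc : Tendsto (fun z : (ℝ × ℝ) × (ℝ × ℝ) => Hs z.1 - Hs z.2) (𝓝 (p + h) ×ˢ 𝓝 p)
        (𝓝 (Hs (p + h) - Hs p)) :=
      ((hHc _ hph).tendsto.comp tendsto_fst).sub ((hHc _ hp).tendsto.comp tendsto_snd)
    refine hc.eventually_ne ?_
    intro h0
    apply hne
    simpa [hHs, Prod.ext_iff] using h0
  have hmem : ∀ᶠ z in 𝓝 (p + h) ×ˢ 𝓝 p, z.1 ∈ Pk κ w L ∧ z.2 ∈ Pk κ w L :=
    (tendsto_fst.eventually (hnb hph)).and (tendsto_snd.eventually (hnb hp))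
  obtain ⟨⟨ρ₃, ρ₄⟩, ⟨hρ₃, hρ₄⟩, H3⟩ := ((nhds_basis_ball (x := p + h)).prod
    (nhds_basis_ball (x := p))).eventually_iff.1 (hHne.and hmem)
  simp only at hρ₃ hρ₄ H3
  obtain ⟨ρ, hρ, l1, l2, l3, l4⟩ : ∃ ρ > 0, ρ ≤ ρ₁ ∧ ρ ≤ ρ₂ ∧ ρ ≤ ρ₃ ∧ ρ ≤ ρ₄ :=
    ⟨min (min ρ₁ ρ₂) (min ρ₃ ρ₄), by positivity, by simp, by simp, by simp, by simp⟩
  -- a transversal translation vector close to `h`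
  set hh : ℝ → ℝ × ℝ := fun t => h + t • (κ + 1, 1) with hhd
  have hhc : Continuous hh := by fun_prop
  have hh0 : hh 0 = h := by simp [hhd]
  have E1 : ∀ᶠ t in 𝓝 (0 : ℝ), ‖hh t - h‖ < ρ / 2 := by
    have : Tendsto (fun t => ‖hh t - h‖) (𝓝 0) (𝓝 ‖hh 0 - h‖) := by
      exact ((hhc.sub continuous_const).norm).tendsto 0
    exact this.eventually_lt_const (by rw [hh0]; simpa using hρ)
  have E2 : ∀ᶠ t in 𝓝 (0 : ℝ), ‖G (p + hh t) - G p‖ < ε * (ρ / 2) := by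
    have hGc : ContinuousAt G (p + hh 0) := by
      rw [hh0]; exact (hs.strict_G hph).continuousAt
    have : ContinuousAt (fun t => ‖G (p + hh t) - G p‖) 0 := by
      have h3 : ContinuousAt (fun t => p + hh t) 0 := (continuous_const.add hhc).continuousAt
      exact ((ContinuousAt.comp (f := fun t => p + hh t) hGc h3).sub continuousAt_const).norm
    refine this.tendsto.eventually_lt_const ?_
    simp only [hh0]
    rw [show G (p + h) = G p by simp [hG, h1, h2]]
    simpa using by positivity
  have E3 : ∀ᶠ t in 𝓝[≠] (0 : ℝ), (hh t).2 ≠ 0 ∧ (hh t).1 - κ * (hh t).2 ≠ 0 := by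
    have aux : ∀ c : ℝ, ∀ᶠ t in 𝓝[≠] (0 : ℝ), c + t ≠ 0 := by
      intro c
      by_cases hc : c = 0
      · subst hc
        filter_upwards [self_mem_nhdsWithin] with t ht
        simpa using ht
      · refine nhdsWithin_le_nhds ?_
        have : Tendsto (fun t : ℝ => c + t) (𝓝 0) (𝓝 (c + 0)) :=
          (continuous_const.add continuous_id).tendsto 0
        exact this.eventually_ne (by simpa using hc)
    filter_upwards [aux h.2, aux (h.1 - κ * h.2)] with t ht1 ht2
    refine ⟨by simpa [hhd] using ht1, ?_⟩
    simp only [hhd, Prod.fst_add, Prod.snd_add, Prod.smul_fst, Prod.smul_snd, smul_eq_mul]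
    intro h0; apply ht2; linarith
  have E12 := (E1.and E2).filter_mono (nhdsWithin_le_nhds (s := {(0 : ℝ)}ᶜ))
  obtain ⟨t, ⟨ht1, ht2⟩, ht3, ht4⟩ := (E12.and E3).exists
  set h' := hh t
  have hb1 : ∀ x ∈ closedBall p (ρ / 2), x ∈ ball p ρ := fun x hx =>
    closedBall_subset_ball (by linarith) hx
  have hb2 : ∀ x ∈ closedBall p (ρ / 2), x + h' ∈ ball (p + h) ρ := fun x hx => by
    rw [mem_closedBall, dist_eq_norm] at hx
    rw [mem_ball, dist_eq_norm]
    calc ‖x + h' - (p + h)‖ = ‖(x - p) + (h' - h)‖ := by congr 1; abel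
      _ ≤ ‖x - p‖ + ‖h' - h‖ := norm_add_le _ _
      _ < ρ := by linarith
  obtain ⟨x, hx, hx0⟩ := hzero (fun x => G (x + h') - G x) p (ρ / 2) (by positivity) (by
    intro x hx y hy
    have g1 := H1 x (ball_subset_ball l1 (hb1 x hx)) y (ball_subset_ball l1 (hb1 y hy))
    have g2 := H2 _ (ball_subset_ball l2 (hb2 x hx)) _ (ball_subset_ball l2 (hb2 y hy))
    rw [add_sub_add_right_eq_sub] at g2
    refine le_trans (le_of_eq ?_) ((norm_sub_le _ _).trans (add_le_add g2 g1 |>.trans ?_))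
    · congr 1
      ext
      · simp only [symL_apply, Prod.fst_sub, Prod.snd_sub]; ring
      · simp only [symL_apply, Prod.fst_sub, Prod.snd_sub]; ring
    · apply le_of_eq; ring) ht2.le
  obtain ⟨hx1, hx2, hx3⟩ := H3 (x := (x + h', x))
    ⟨ball_subset_ball l3 (hb2 x hx), ball_subset_ball l4 (hb1 x hx)⟩
  simp only [hG, Prod.mk_sub_mk, Prod.mk_eq_zero, sub_eq_zero] at hx0
  obtain ⟨k1, k2, k3⟩ := hs.hess_eq_generic ht3 ht4 hx3 hx2 hx0.1 hx0.2
  exact hx1 (by simp [hHs, k1, k2, k3])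

end Sch

/-! ### The kernel of the Hessian and the third derivatives -/

namespace Sch
variable {κ w L : ℝ} {u : ℝ × ℝ → ℝ}
open Topology Metric

lemma hasPd_xx (hs : Sch κ w L u) {x} (hx : x ∈ Pk κ w L) :
    HasPd (pdx (pdx u)) x (pdx (pdx (pdx u)) x) (pdy (pdx (pdx u)) x) :=
  hasPd_of_contDiffOn (isOpen_Pk κ w L) hs.smooth_xx hx

lemma hasPd_xy (hs : Sch κ w L u) {x} (hx : x ∈ Pk κ w L) :
    HasPd (pdy (pdx u)) x (pdy (pdx (pdx u)) x) (pdy (pdy (pdx u)) x) := by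
  rw [← pd_symm (isOpen_Pk κ w L) hs.smooth_x hx]
  exact hasPd_of_contDiffOn (isOpen_Pk κ w L) hs.smooth_xy hx

lemma hasPd_yy (hs : Sch κ w L u) {x} (hx : x ∈ Pk κ w L) :
    HasPd (pdy (pdy u)) x (pdy (pdy (pdx u)) x) (pdy (pdy (pdy u)) x) := by
  have h1 : pdx (pdy (pdy u)) x = pdy (pdy (pdx u)) x := by
    rw [pd_symm (isOpen_Pk κ w L) hs.smooth_y hx]
    have : pdx (pdy u) =ᶠ[𝓝 x] pdy (pdx u) := by
      filter_upwards [(isOpen_Pk κ w L).mem_nhds hx] with y hy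
      exact pd_symm (isOpen_Pk κ w L) hs.tr.1 hy
    simp only [pdy, this.fderiv_eq]
  rw [← h1]
  exact hasPd_of_contDiffOn (isOpen_Pk κ w L) hs.smooth_yy hx

lemma _root_.HasPd.unique {F : ℝ × ℝ → ℝ} {x : ℝ × ℝ} {a b a' b' : ℝ} (h : HasPd F x a b)
    (h' : HasPd F x a' b') : a = a' ∧ b = b' :=
  ⟨by rw [← h.pdx_eq, h'.pdx_eq], by rw [← h.pdy_eq, h'.pdy_eq]⟩

/-- The translator equation differentiated once in each variable. -/
lemma eq_diff (hs : Sch κ w L u) {x} (hx : x ∈ Pk κ w L) :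
    ((1 + pdy u x ^ 2) * pdx (pdx (pdx u)) x - 2 * pdx u x * pdy u x * pdy (pdx (pdx u)) x
      + (1 + pdx u x ^ 2) * pdy (pdy (pdx u)) x
      + 2 * pdy u x * pdy (pdx u) x * pdx (pdx u) x
      - 2 * (pdx (pdx u) x * pdy u x + pdx u x * pdy (pdx u) x) * pdy (pdx u) x
      + 2 * pdx u x * pdx (pdx u) x * pdy (pdy u) x
      - 2 * pdx u x * pdx (pdx u) x - 2 * pdy u x * pdy (pdx u) x = 0) ∧
    ((1 + pdy u x ^ 2) * pdy (pdx (pdx u)) x - 2 * pdx u x * pdy u x * pdy (pdy (pdx u)) x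
      + (1 + pdx u x ^ 2) * pdy (pdy (pdy u)) x
      + 2 * pdy u x * pdy (pdy u) x * pdx (pdx u) x
      - 2 * (pdy (pdx u) x * pdy u x + pdx u x * pdy (pdy u) x) * pdy (pdx u) x
      + 2 * pdx u x * pdy (pdx u) x * pdy (pdy u) x
      - 2 * pdx u x * pdy (pdx u) x - 2 * pdy u x * pdy (pdy u) x = 0) := by
  have p := hs.hasPd_x hx
  have q := hs.hasPd_y hx
  have r := hs.hasPd_xx hx
  have s := hs.hasPd_xy hx
  have t := hs.hasPd_yy hx
  have c1 : HasPd (fun _ : ℝ × ℝ => (1 : ℝ)) x 0 0 := HasPd.const 1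
  have c2 : HasPd (fun _ : ℝ × ℝ => (2 : ℝ)) x 0 0 := HasPd.const 2
  have E := (((c1.add (q.mul q)).mul r).sub ((c2.mul (p.mul q)).mul s)).add
    ((c1.add (p.mul p)).mul t) |>.sub ((c1.add (p.mul p)).add (q.mul q))
  have Z : HasPd (fun y => ((1 + pdy u y * pdy u y) * pdx (pdx u) y
      - 2 * (pdx u y * pdy u y) * pdy (pdx u) y + (1 + pdx u y * pdx u y) * pdy (pdy u) y)
      - (1 + pdx u y * pdx u y + pdy u y * pdy u y)) x 0 0 := by
    refine (HasPd.const 0).congr_of_eventuallyEq ?_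
    filter_upwards [(isOpen_Pk κ w L).mem_nhds hx] with y hy
    linear_combination hs.tr.2 y hy
  obtain ⟨e1, e2⟩ := E.unique Z
  exact ⟨by linear_combination e1, by linear_combination e2⟩

/-- Rolle theorem on a segment in direction `θ`. -/
lemma ne_of_line_deriv_ne {F F₁ F₂ : ℝ × ℝ → ℝ} {x θ : ℝ × ℝ} {t : ℝ} (ht : 0 < t)
    (hF : ∀ σ ∈ Icc 0 t, HasPd F (x + σ • θ) (F₁ (x + σ • θ)) (F₂ (x + σ • θ)))
    (hne : ∀ σ ∈ Icc 0 t, θ.1 * F₁ (x + σ • θ) + θ.2 * F₂ (x + σ • θ) ≠ 0) :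
    F (x + t • θ) - F x ≠ 0 := by
  intro h0
  have hd := fun σ hσ => HasPd.line (hF σ hσ)
  obtain ⟨σ, hσ, hσ0⟩ := exists_hasDerivAt_eq_zero ht
    (fun σ hσ => (hd σ hσ).continuousAt.continuousWithinAt)
    (by simp; linarith) (fun σ hσ => hd σ (Ioo_subset_Icc_self hσ))
  exact hne σ (Ioo_subset_Icc_self hσ) hσ0

/-- If `θ` is in the kernel of the Hessian at `z`, it is in the kernel of the third derivative. This
is the infinitesimal form of `hess_eq`: otherwise `z` is a nondegenerate zero of the `θ`-derivative
of the gradient, which persists as a zero of `∇u(x + tθ) - ∇u(x)` for small `t`, where the Hessians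
agree; by Rolle no entry of the `θ`-derivative of the Hessian is then bounded away from zero. -/
lemma third_kernel (hs : Sch κ w L u) {z : ℝ × ℝ} (hz : z ∈ Pk κ w L) (θ : ℝ × ℝ)
    (k1 : θ.1 * pdx (pdx u) z + θ.2 * pdy (pdx u) z = 0)
    (k2 : θ.1 * pdy (pdx u) z + θ.2 * pdy (pdy u) z = 0) :
    θ.1 * pdx (pdx (pdx u)) z + θ.2 * pdy (pdx (pdx u)) z = 0 ∧
    θ.1 * pdy (pdx (pdx u)) z + θ.2 * pdy (pdy (pdx u)) z = 0 ∧
    θ.1 * pdy (pdy (pdx u)) z + θ.2 * pdy (pdy (pdy u)) z = 0 := by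
  by_contra hne
  obtain ⟨e1, e2⟩ := hs.eq_diff hz
  have htr : (1 + pdy u z ^ 2) * (θ.1 * pdx (pdx (pdx u)) z + θ.2 * pdy (pdx (pdx u)) z)
      - 2 * pdx u z * pdy u z * (θ.1 * pdy (pdx (pdx u)) z + θ.2 * pdy (pdy (pdx u)) z)
      + (1 + pdx u z ^ 2) * (θ.1 * pdy (pdy (pdx u)) z + θ.2 * pdy (pdy (pdy u)) z) = 0 := by
    linear_combination θ.1 * e1 + θ.2 * e2
      + (2 * pdy u z * pdy (pdx u) z - 2 * pdx u z * pdy (pdy u) z + 2 * pdx u z) * k1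
      + (-2 * pdy u z * pdx (pdx u) z + 2 * pdx u z * pdy (pdx u) z + 2 * pdy u z) * k2
  have hdet := det_neg_of_trace htr hne
  obtain ⟨ε, hε, hzero⟩ := zero_persists _ (symL_range hdet.ne)
  set G : ℝ × ℝ → ℝ × ℝ := fun y => (pdx u y, pdy u y) with hG
  set ψ : ℝ × ℝ → ℝ × ℝ := fun y => (θ.1 * pdx (pdx u) y + θ.2 * pdy (pdx u) y,
    θ.1 * pdy (pdx u) y + θ.2 * pdy (pdy u) y) with hψ
  have hnb := fun {x} (hx : x ∈ Pk κ w L) => (isOpen_Pk κ w L).mem_nhds hx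
  have hψs : HasStrictFDerivAt ψ
      (symL (θ.1 * pdx (pdx (pdx u)) z + θ.2 * pdy (pdx (pdx u)) z)
        (θ.1 * pdy (pdx (pdx u)) z + θ.2 * pdy (pdy (pdx u)) z)
        (θ.1 * pdy (pdy (pdx u)) z + θ.2 * pdy (pdy (pdy u)) z)) z := by
    have r := hs.hasPd_xx hz
    have s := hs.hasPd_xy hz
    have t := hs.hasPd_yy hz
    have c1 : HasPd (fun _ : ℝ × ℝ => θ.1) z 0 0 := HasPd.const _
    have c2 : HasPd (fun _ : ℝ × ℝ => θ.2) z 0 0 := HasPd.const _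
    have hd := hasFDerivAt_of_hasPd
      (((c1.mul r).add (c2.mul s)).congr_vals (a' := θ.1 * pdx (pdx (pdx u)) z
        + θ.2 * pdy (pdx (pdx u)) z) (b' := θ.1 * pdy (pdx (pdx u)) z + θ.2 * pdy (pdy (pdx u)) z)
        (by ring) (by ring))
      (((c1.mul s).add (c2.mul t)).congr_vals
        (b' := θ.1 * pdy (pdy (pdx u)) z + θ.2 * pdy (pdy (pdy u)) z) (by ring) (by ring))
    refine ContDiffAt.hasStrictFDerivAt' (n := (⊤ : ℕ∞)) ?_ hd (by simp)
    have r' := hs.smooth_xx.contDiffAt (hnb hz)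
    have s' := hs.smooth_xy.contDiffAt (hnb hz)
    have t' := hs.smooth_yy.contDiffAt (hnb hz)
    exact ((contDiffAt_const.mul r').add (contDiffAt_const.mul s')).prodMk
      ((contDiffAt_const.mul s').add (contDiffAt_const.mul t'))
  obtain ⟨ρ₁, hρ₁, H1⟩ := hψs.exists_ball hε
  set Ts : ℝ × ℝ → ℝ × ℝ × ℝ := fun z =>
    (θ.1 * pdx (pdx (pdx u)) z + θ.2 * pdy (pdx (pdx u)) z,
    θ.1 * pdy (pdx (pdx u)) z + θ.2 * pdy (pdy (pdx u)) z,
    θ.1 * pdy (pdy (pdx u)) z + θ.2 * pdy (pdy (pdy u)) z) with hTs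
  have cT0 := (contDiffOn_pdx (isOpen_Pk κ w L) hs.smooth_xx).continuousOn.continuousAt (hnb hz)
  have cT1 := (contDiffOn_pdy (isOpen_Pk κ w L) hs.smooth_xx).continuousOn.continuousAt (hnb hz)
  have cT2 := (contDiffOn_pdy (isOpen_Pk κ w L) hs.smooth_xy).continuousOn.continuousAt (hnb hz)
  have cT3 := (contDiffOn_pdy (isOpen_Pk κ w L) hs.smooth_yy).continuousOn.continuousAt (hnb hz)
  -- one of the three entries stays nonzero near `z`
  have hev : (∀ᶠ y in 𝓝 z, (Ts y).1 ≠ 0) ∨ (∀ᶠ y in 𝓝 z, (Ts y).2.1 ≠ 0) ∨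
      (∀ᶠ y in 𝓝 z, (Ts y).2.2 ≠ 0) := by
    by_cases n1 : (Ts z).1 = 0
    · by_cases n2 : (Ts z).2.1 = 0
      · by_cases n3 : (Ts z).2.2 = 0
        · exact (hne ⟨n1, n2, n3⟩).elim
        · exact Or.inr (Or.inr (((continuousAt_const.mul cT2).add
            (continuousAt_const.mul cT3)).eventually_ne n3))
      · exact Or.inr (Or.inl (((continuousAt_const.mul cT1).add
            (continuousAt_const.mul cT2)).eventually_ne n2))
    · exact Or.inl (((continuousAt_const.mul cT0).add
            (continuousAt_const.mul cT1)).eventually_ne n1)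
  obtain ⟨ρ₂, hρ₂, H2⟩ := Metric.isOpen_iff.1 (isOpen_Pk κ w L) z hz
  obtain ⟨ρ₃, hρ₃, H3⟩ : ∃ ρ > 0, (∀ y ∈ ball z ρ, (Ts y).1 ≠ 0) ∨ (∀ y ∈ ball z ρ, (Ts y).2.1 ≠ 0) ∨
      (∀ y ∈ ball z ρ, (Ts y).2.2 ≠ 0) := by
    rcases hev with h | h | h <;> obtain ⟨ρ, hρ, h⟩ := Metric.eventually_nhds_iff.1 h
    · exact ⟨ρ, hρ, Or.inl fun y hy => h hy⟩
    · exact ⟨ρ, hρ, Or.inr (Or.inl fun y hy => h hy)⟩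
    · exact ⟨ρ, hρ, Or.inr (Or.inr fun y hy => h hy)⟩
  obtain ⟨ρ, hρ, l1, l2, l3⟩ : ∃ ρ > 0, ρ ≤ ρ₁ ∧ ρ ≤ ρ₂ ∧ ρ ≤ ρ₃ :=
    ⟨min ρ₁ (min ρ₂ ρ₃), by positivity, by simp, by simp, by simp⟩
  have hGd : ∀ x : ℝ × ℝ, ∀ σ : ℝ, x + σ • θ ∈ Pk κ w L →
      HasDerivAt (fun σ : ℝ => G (x + σ • θ)) (ψ (x + σ • θ)) σ := fun x σ hx =>
    (HasPd.line (hs.hasPd_x hx)).prodMk (HasPd.line (hs.hasPd_y hx))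
  have E1 : ∀ᶠ t in 𝓝[>] (0 : ℝ), ‖t • θ‖ < ρ / 2 := by
    refine nhdsWithin_le_nhds ?_
    have : Tendsto (fun t : ℝ => ‖t • θ‖) (𝓝 0) (𝓝 ‖(0 : ℝ) • θ‖) :=
      ((continuous_id.smul continuous_const).norm).tendsto 0
    exact this.eventually_lt_const (by simpa using hρ)
  have E2 : ∀ᶠ t in 𝓝[>] (0 : ℝ), ‖t⁻¹ • (G (z + t • θ) - G z)‖ < ε * (ρ / 2) := by
    have h1 := (hGd z 0 (by simpa using hz)).tendsto_slope_zero_right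
    have h2 : ψ (z + (0 : ℝ) • θ) = 0 := by simp [hψ, k1, k2]
    rw [h2] at h1
    have h3 := h1.norm.eventually_lt_const (u := ε * (ρ / 2)) (by simpa using by positivity)
    simpa using h3
  obtain ⟨t, ⟨ht1, ht2⟩, ht⟩ := ((E1.and E2).and self_mem_nhdsWithin).exists
  have ht : 0 < t := ht
  have hb : ∀ x ∈ closedBall z (ρ / 2), ∀ σ ∈ Icc 0 t, x + σ • θ ∈ ball z ρ := fun x hx σ hσ => by
    rw [mem_closedBall, dist_eq_norm] at hx
    rw [mem_ball, dist_eq_norm]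
    have : ‖σ • θ‖ ≤ ‖t • θ‖ := by
      rw [norm_smul, norm_smul, norm_of_nonneg hσ.1, norm_of_nonneg ht.le]
      exact mul_le_mul_of_nonneg_right hσ.2 (norm_nonneg _)
    calc ‖x + σ • θ - z‖ = ‖(x - z) + σ • θ‖ := by congr 1; abel
      _ ≤ ‖x - z‖ + ‖σ • θ‖ := norm_add_le _ _
      _ < ρ := by linarith
  obtain ⟨x, hx, hx0⟩ := hzero (fun x => t⁻¹ • (G (x + t • θ) - G x)) z (ρ / 2) (by positivity) (by
    intro x hx y hy
    set M := symL (θ.1 * pdx (pdx (pdx u)) z + θ.2 * pdy (pdx (pdx u)) z)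
        (θ.1 * pdy (pdx (pdx u)) z + θ.2 * pdy (pdy (pdx u)) z)
        (θ.1 * pdy (pdy (pdx u)) z + θ.2 * pdy (pdy (pdy u)) z)
    have hmv := norm_image_sub_le_of_norm_deriv_le_segment' (a := 0) (b := t)
      (f := fun σ : ℝ => G (x + σ • θ) - G (y + σ • θ) - σ • M (x - y))
      (f' := fun σ => ψ (x + σ • θ) - ψ (y + σ • θ) - M (x - y)) (C := ε * ‖x - y‖)
      (fun σ hσ => (((hGd x σ (H2 (ball_subset_ball l2 (hb x hx σ hσ)))).sub
        (hGd y σ (H2 (ball_subset_ball l2 (hb y hy σ hσ))))).sub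
          (((hasDerivAt_id σ).smul_const (M (x - y))).congr_deriv (by simp))).hasDerivWithinAt)
      (fun σ hσ => by
        have := H1 _ (ball_subset_ball l1 (hb x hx σ (Ico_subset_Icc_self hσ))) _
          (ball_subset_ball l1 (hb y hy σ (Ico_subset_Icc_self hσ)))
        rwa [add_sub_add_right_eq_sub] at this) t ⟨ht.le, le_rfl⟩
    have e : t⁻¹ • (G (x + t • θ) - G x) - t⁻¹ • (G (y + t • θ) - G y) - M (x - y)
        = t⁻¹ • ((G (x + t • θ) - G (y + t • θ) - t • M (x - y)) -
          (G (x + (0 : ℝ) • θ) - G (y + (0 : ℝ) • θ) - (0 : ℝ) • M (x - y))) := by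
      have : M (x - y) = t⁻¹ • t • M (x - y) := by rw [smul_smul, inv_mul_cancel₀ ht.ne', one_smul]
      conv_lhs => rw [this]
      simp only [zero_smul, add_zero, sub_zero]
      rw [← smul_sub, ← smul_sub]
      congr 1
      abel
    rw [e, norm_smul, norm_inv, norm_of_nonneg ht.le, inv_mul_le_iff₀ ht]
    refine hmv.trans (le_of_eq ?_)
    rw [sub_zero]; ring) ht2.le
  have hx1 : G (x + t • θ) = G x := by
    rcases smul_eq_zero.1 hx0 with h | h
    · exact absurd h (inv_ne_zero ht.ne')
    · exact sub_eq_zero.1 h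
  have hxin : ∀ σ ∈ Icc 0 t, x + σ • θ ∈ Pk κ w L := fun σ hσ =>
    H2 (ball_subset_ball l2 (hb x hx σ hσ))
  simp only [hG, Prod.mk.injEq] at hx1
  obtain ⟨m1, m2, m3⟩ := hs.hess_eq (by simpa using hxin 0 ⟨le_rfl, ht.le⟩) (hxin t ⟨ht.le, le_rfl⟩)
    hx1.1 hx1.2
  rcases H3 with h | h | h
  · exact ne_of_line_deriv_ne ht (fun σ hσ => hs.hasPd_xx (hxin σ hσ))
      (fun σ hσ => h _ (ball_subset_ball l3 (hb x hx σ hσ))) m1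
  · exact ne_of_line_deriv_ne ht (fun σ hσ => hs.hasPd_xy (hxin σ hσ))
      (fun σ hσ => h _ (ball_subset_ball l3 (hb x hx σ hσ))) m2
  · exact ne_of_line_deriv_ne ht (fun σ hσ => hs.hasPd_yy (hxin σ hσ))
      (fun σ hσ => h _ (ball_subset_ball l3 (hb x hx σ hσ))) m3

end Sch

/-! ### The Hopf lemma and zero sets -/

/-- The squared Euclidean distance. -/
def nq (x y : ℝ × ℝ) : ℝ := (x.1 - y.1) ^ 2 + (x.2 - y.2) ^ 2

lemma nq_continuous (y : ℝ × ℝ) : Continuous (fun x => nq x y) := by unfold nq; fun_prop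

lemma nq_comm (x y : ℝ × ℝ) : nq x y = nq y x := by unfold nq; ring

lemma nq_triangle {x y z : ℝ × ℝ} {a b : ℝ} (ha : 0 ≤ a) (hb : 0 ≤ b) (h1 : nq x y ≤ a ^ 2)
    (h2 : nq y z ≤ b ^ 2) : nq x z ≤ (a + b) ^ 2 := by
  unfold nq at *
  set X := x.1 - y.1; set Y := x.2 - y.2; set X' := y.1 - z.1; set Y' := y.2 - z.2
  have e1 : x.1 - z.1 = X + X' := by simp [X, X']
  have e2 : x.2 - z.2 = Y + Y' := by simp [Y, Y']
  rw [e1, e2]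
  have hab := mul_nonneg ha hb
  have h4 : (X * X' + Y * Y') ^ 2 ≤ (a * b) ^ 2 := by
    have : (X * X' + Y * Y') ^ 2 ≤ (X ^ 2 + Y ^ 2) * (X' ^ 2 + Y' ^ 2) := by
      nlinarith [sq_nonneg (X * Y' - Y * X')]
    have h5 : (X ^ 2 + Y ^ 2) * (X' ^ 2 + Y' ^ 2) ≤ a ^ 2 * b ^ 2 :=
      mul_le_mul h1 h2 (by positivity) (by positivity)
    nlinarith
  have h5 := abs_le_of_sq_le_sq' h4 hab
  nlinarith [h5.2]

lemma isCompact_nq_le (y : ℝ × ℝ) (R : ℝ) : IsCompact {x | nq x y ≤ R ^ 2} := by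
  refine (isCompact_closedBall y |R|).of_isClosed_subset
    (isClosed_le (nq_continuous y) continuous_const) ?_
  intro x hx
  have hx : (x.1 - y.1) ^ 2 + (x.2 - y.2) ^ 2 ≤ R ^ 2 := hx
  rw [Metric.mem_closedBall, dist_eq_norm, Prod.norm_def, max_le_iff]
  simp only [Prod.fst_sub, Prod.snd_sub, Real.norm_eq_abs]
  exact ⟨sq_le_sq.1 (by nlinarith [sq_nonneg (x.2 - y.2)]),
    sq_le_sq.1 (by nlinarith [sq_nonneg (x.1 - y.1)])⟩

/-- Second derivative test: at a critical point `x` minimizing `f` on the open set `N`, the trace of the Hessian against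
`I + v ⊗ v`, `v = (q, -p)`, is nonnegative. -/
lemma trace_nonneg_of_min {N : Set (ℝ × ℝ)} (hN : IsOpen N) {f f₁ f₂ : ℝ × ℝ → ℝ} {x : ℝ × ℝ}
    {a b c : ℝ} (hx : x ∈ N) (hf : ∀ y ∈ N, HasPd f y (f₁ y) (f₂ y)) (h1 : HasPd f₁ x a b)
    (h2 : HasPd f₂ x b c) (z1 : f₁ x = 0) (z2 : f₂ x = 0) (hmin : ∀ y ∈ N, f x ≤ f y) (p q : ℝ) :
    0 ≤ (1 + q ^ 2) * a - 2 * p * q * b + (1 + p ^ 2) * c := by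
  have key : ∀ e : ℝ × ℝ, 0 ≤ e.1 ^ 2 * a + 2 * e.1 * e.2 * b + e.2 ^ 2 * c := by
    intro e
    by_contra hcon
    push Not at hcon
    obtain ⟨ε, hε, H⟩ := line_strict_min hN hx (fun y hy => (hf y hy).neg) h1.neg h2.neg
      (by simp [z1]) (by simp [z2]) (e := e) (by linarith)
    obtain ⟨m1, m2⟩ := H ε hε.ne' (abs_of_pos hε).le
    have := hmin _ m1
    linarith
  have k1 := key (1, 0)
  have k2 := key (0, 1)
  have k3 := key (q, -p)
  simp only at k1 k2 k3
  nlinarith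

lemma pos_first_deriv {g : ℝ → ℝ} {g' : ℝ} (hg : HasDerivAt g g' 0) (h0 : g 0 = 0)
    {c : ℝ} (hc : 0 < c) (hpos : ∀ s, 0 < s → s < c → 0 ≤ g s) : 0 ≤ g' := by
  refine ge_of_tendsto hg.tendsto_slope_zero_right ?_
  filter_upwards [Ioo_mem_nhdsGT hc] with s hs
  simp only [zero_add, h0, sub_zero, smul_eq_mul]
  exact mul_nonneg (inv_nonneg.2 hs.1.le) (hpos s hs.1 hs.2)

/-- First derivatives of the Hopf barrier `exp (-k |x - y|²)`. -/
lemma barrier_hasPd (k : ℝ) (y x : ℝ × ℝ) :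
    HasPd (fun x => Real.exp (-k * nq x y)) x
      (-2 * k * (x.1 - y.1) * Real.exp (-k * nq x y))
      (-2 * k * (x.2 - y.2) * Real.exp (-k * nq x y)) := by
  have f1 : HasPd (fun x : ℝ × ℝ => x.1 - y.1) x (1 - 0) (0 - 0) := HasPd.fst.sub (HasPd.const _)
  have f2 : HasPd (fun x : ℝ × ℝ => x.2 - y.2) x (0 - 0) (1 - 0) := HasPd.snd.sub (HasPd.const _)
  have h1 := (HasPd.const (x := x) (-k)).mul ((f1.mul f1).add (f2.mul f2))
  have h2 := HasPd.comp_real (Real.hasDerivAt_exp _) h1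
  have : (fun x => Real.exp (-k * nq x y)) = fun x : ℝ × ℝ =>
      Real.exp (-k * ((x.1 - y.1) * (x.1 - y.1) + (x.2 - y.2) * (x.2 - y.2))) := by
    ext x; simp only [nq, pow_two]
  rw [this]
  refine h2.congr_vals ?_ ?_ <;> simp only [nq, pow_two] <;> ring

lemma barrier_hasPd2 (k : ℝ) (y x : ℝ × ℝ) :
    HasPd (fun x => -2 * k * (x.1 - y.1) * Real.exp (-k * nq x y)) x
      ((4 * k ^ 2 * (x.1 - y.1) ^ 2 - 2 * k) * Real.exp (-k * nq x y))
      (4 * k ^ 2 * (x.1 - y.1) * (x.2 - y.2) * Real.exp (-k * nq x y)) ∧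
    HasPd (fun x => -2 * k * (x.2 - y.2) * Real.exp (-k * nq x y)) x
      (4 * k ^ 2 * (x.1 - y.1) * (x.2 - y.2) * Real.exp (-k * nq x y))
      ((4 * k ^ 2 * (x.2 - y.2) ^ 2 - 2 * k) * Real.exp (-k * nq x y)) := by
  have f1 : HasPd (fun x : ℝ × ℝ => x.1 - y.1) x (1 - 0) (0 - 0) := HasPd.fst.sub (HasPd.const _)
  have f2 : HasPd (fun x : ℝ × ℝ => x.2 - y.2) x (0 - 0) (1 - 0) := HasPd.snd.sub (HasPd.const _)
  have hb := barrier_hasPd k y x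
  exact ⟨(((HasPd.const (-2 * k)).mul f1).mul hb).congr_vals (by ring) (by ring),
    (((HasPd.const (-2 * k)).mul f2).mul hb).congr_vals (by ring) (by ring)⟩

set_option maxHeartbeats 1000000 in
/-- Hopf boundary point lemma in the form needed here: on a disc where `d > 0`, contact with
`d = 0`, `∇d = 0` at a boundary point `z₁` is impossible. -/
lemma hopf {d d₁ d₂ d₁₁ d₁₂ d₂₂ p q : ℝ × ℝ → ℝ} {N : Set (ℝ × ℝ)} {C Λ R : ℝ}
    (hd : ∀ x ∈ N, HasPd d x (d₁ x) (d₂ x)) (hd1 : ∀ x ∈ N, HasPd d₁ x (d₁₁ x) (d₁₂ x))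
    (hd2 : ∀ x ∈ N, HasPd d₂ x (d₁₂ x) (d₂₂ x)) (hC0 : 0 ≤ C)
    (hL : ∀ x ∈ N, (1 + q x ^ 2) * d₁₁ x - 2 * p x * q x * d₁₂ x + (1 + p x ^ 2) * d₂₂ x
      ≤ C * (|d x| + |d₁ x| + |d₂ x|)) (hΛ : ∀ x ∈ N, 2 + p x ^ 2 + q x ^ 2 ≤ Λ)
    {y z₁ : ℝ × ℝ} (hR : 0 < R) (hyN : ∀ x, nq x y ≤ R ^ 2 → x ∈ N)
    (hpos : ∀ x, nq x y < R ^ 2 → 0 < d x) (hz : nq z₁ y = R ^ 2) (z0 : d z₁ = 0)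
    (z1 : d₁ z₁ = 0) (z2 : d₂ z₁ = 0) : False := by
  have hΛ0 : 0 ≤ Λ := le_trans (by positivity) (hΛ z₁ (hyN _ hz.le))
  -- a large exponent for the barrier
  obtain ⟨k, hk, hkbig⟩ : ∃ k > 0, C * (1 + 4 * k * R) + 2 * k * Λ < k ^ 2 * R ^ 2 := by
    set B := 4 * C * R + 2 * Λ + C with hB
    have hB0 : 0 ≤ B := by positivity
    refine ⟨(B + 1) / R ^ 2 + 1, by positivity, ?_⟩
    set k := (B + 1) / R ^ 2 + 1 with hk
    have h1 : 1 ≤ k := by rw [hk]; have : 0 ≤ (B + 1) / R ^ 2 := by positivity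
                          linarith
    have h2 : B + 1 ≤ k * R ^ 2 := by
      rw [hk, add_mul, div_mul_cancel₀ _ (by positivity)]; nlinarith [sq_nonneg R]
    have h3 : k * (B + 1) ≤ k * (k * R ^ 2) := mul_le_mul_of_nonneg_left h2 (by linarith)
    nlinarith
  set ex : ℝ × ℝ → ℝ := fun x => Real.exp (-k * nq x y) with hex
  have hexc : Continuous ex := by
    have := nq_continuous y
    exact Real.continuous_exp.comp (continuous_const.mul this)
  set eR := Real.exp (-k * R ^ 2) with heR
  have hex1 : ∀ x, ex x ≤ 1 := fun x => by
    rw [hex]; simp only; rw [Real.exp_le_one_iff]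
    have : 0 ≤ nq x y := by unfold nq; positivity
    nlinarith
  -- lower bound for `d` on the inner disc
  obtain ⟨m, hm, hmd⟩ : ∃ m > 0, ∀ x, nq x y ≤ (R / 2) ^ 2 → m ≤ d x := by
    have hne : ({x | nq x y ≤ (R / 2) ^ 2}).Nonempty := ⟨y, by simp [nq]; positivity⟩
    have hsub : ∀ x, nq x y ≤ (R / 2) ^ 2 → nq x y < R ^ 2 := fun x hx => by nlinarith
    obtain ⟨x0, hx0, hmin⟩ := (isCompact_nq_le y (R / 2)).exists_isMinOn hne (f := d)
      (fun x hx => (HasFDerivAt.continuousAt (hd x (hyN x (hsub x hx).le))).continuousWithinAt)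
    exact ⟨d x0, hpos _ (hsub _ hx0), fun x hx => hmin hx⟩
  -- comparison on the annulus
  have hcomp : ∀ x, (R / 2) ^ 2 ≤ nq x y → nq x y ≤ R ^ 2 → m * (ex x - eR) ≤ d x := by
    by_contra hcon
    push Not at hcon
    obtain ⟨xb, hb1, hb2, hb3⟩ := hcon
    set K := {x | (R / 2) ^ 2 ≤ nq x y ∧ nq x y ≤ R ^ 2} with hK
    have hKc : IsCompact K := (isCompact_nq_le y R).inter_left
      (isClosed_le continuous_const (nq_continuous y))
    obtain ⟨x0, hx0, hmin⟩ := hKc.exists_isMinOn ⟨xb, hb1, hb2⟩ (f := fun x => d x - m * (ex x - eR))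
      (fun x hx => ((HasFDerivAt.continuousAt (hd x (hyN x hx.2))).sub
        (continuousAt_const.mul (hexc.continuousAt.sub continuousAt_const))).continuousWithinAt)
    have hneg : d x0 < m * (ex x0 - eR) := by
      have : d x0 - m * (ex x0 - eR) ≤ d xb - m * (ex xb - eR) := hmin (show xb ∈ K from ⟨hb1, hb2⟩)
      linarith
    have eRpos : 0 < eR := Real.exp_pos _
    have hi1 : (R / 2) ^ 2 < nq x0 y := by
      refine lt_of_le_of_ne hx0.1 fun h => ?_
      have := hmd x0 h.symm.le
      nlinarith [hex1 x0]
    have hi2 : nq x0 y < R ^ 2 := by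
      refine lt_of_le_of_ne hx0.2 fun h => ?_
      have h1 : ex x0 = eR := by simp only [hex, heR, h]
      rw [h1, sub_self, mul_zero] at hneg
      -- on the boundary circle `d ≥ 0` by continuity
      have hc : Tendsto (fun s : ℝ => d (y + s • (x0 - y))) (𝓝[<] 1) (𝓝 (d x0)) := by
        have hg : ContinuousAt (fun s : ℝ => y + s • (x0 - y)) 1 := by fun_prop
        have hdc : ContinuousAt d (y + (1 : ℝ) • (x0 - y)) := by
          have : y + (1 : ℝ) • (x0 - y) = x0 := by simp
          rw [this]; exact HasFDerivAt.continuousAt (hd x0 (hyN x0 hx0.2))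
        have := (ContinuousAt.comp (f := fun s : ℝ => y + s • (x0 - y)) hdc hg).tendsto
        simp only [Function.comp_def, one_smul, add_sub_cancel] at this
        exact this.mono_left nhdsWithin_le_nhds
      have : 0 ≤ d x0 := by
        refine ge_of_tendsto hc ?_
        filter_upwards [Ioo_mem_nhdsLT (show (0 : ℝ) < 1 by norm_num)] with s hs
        refine (hpos _ ?_).le
        have : nq (y + s • (x0 - y)) y = s ^ 2 * nq x0 y := by simp [nq]; ring
        rw [this, h]
        have : s ^ 2 < 1 := by nlinarith [hs.1, hs.2]
        nlinarith [sq_pos_of_pos hR]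
      linarith
    set V := {x | (R / 2) ^ 2 < nq x y ∧ nq x y < R ^ 2} with hV
    have hVo : IsOpen V := (isOpen_lt continuous_const (nq_continuous y)).inter
      (isOpen_lt (nq_continuous y) continuous_const)
    have hVN : ∀ x ∈ V, x ∈ N := fun x hx => hyN x hx.2.le
    have hg : ∀ x ∈ V, HasPd (fun x => d x - m * (ex x - eR)) x
        (d₁ x - m * (-2 * k * (x.1 - y.1) * ex x)) (d₂ x - m * (-2 * k * (x.2 - y.2) * ex x)) :=
      fun x hx => ((hd x (hVN x hx)).sub ((HasPd.const m).mul
        ((barrier_hasPd k y x).sub (HasPd.const eR)))).congr_vals (by simp only [hex]; ring)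
          (by simp only [hex]; ring)
    have hVx : x0 ∈ V := ⟨hi1, hi2⟩
    have hNx := hVN x0 hVx
    have hlm : IsLocalMin (fun x => d x - m * (ex x - eR)) x0 := by
      filter_upwards [hVo.mem_nhds hVx] with x hx
      exact hmin (show x ∈ K from ⟨hx.1.le, hx.2.le⟩)
    have hz0 := hlm.hasFDerivAt_eq_zero (hg x0 hVx)
    have c1 : d₁ x0 - m * (-2 * k * (x0.1 - y.1) * ex x0) = 0 := by
      have := congrArg (fun A : (ℝ × ℝ) →L[ℝ] ℝ => A (1, 0)) hz0; simpa using this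
    have c2 : d₂ x0 - m * (-2 * k * (x0.2 - y.2) * ex x0) = 0 := by
      have := congrArg (fun A : (ℝ × ℝ) →L[ℝ] ℝ => A (0, 1)) hz0; simpa using this
    obtain ⟨b1, b2⟩ := barrier_hasPd2 k y x0
    have g1 : HasPd (fun x => d₁ x - m * (-2 * k * (x.1 - y.1) * ex x)) x0
        (d₁₁ x0 - m * ((4 * k ^ 2 * (x0.1 - y.1) ^ 2 - 2 * k) * ex x0))
        (d₁₂ x0 - m * (4 * k ^ 2 * (x0.1 - y.1) * (x0.2 - y.2) * ex x0)) :=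
      ((hd1 x0 hNx).sub ((HasPd.const m).mul b1)).congr_vals (by simp only [hex]; ring)
        (by simp only [hex]; ring)
    have g2 : HasPd (fun x => d₂ x - m * (-2 * k * (x.2 - y.2) * ex x)) x0
        (d₁₂ x0 - m * (4 * k ^ 2 * (x0.1 - y.1) * (x0.2 - y.2) * ex x0))
        (d₂₂ x0 - m * ((4 * k ^ 2 * (x0.2 - y.2) ^ 2 - 2 * k) * ex x0)) :=
      ((hd2 x0 hNx).sub ((HasPd.const m).mul b2)).congr_vals (by simp only [hex]; ring)
        (by simp only [hex]; ring)
    have htr := trace_nonneg_of_min hVo hVx hg g1 g2 c1 c2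
      (fun x hx => hmin (show x ∈ K from ⟨hx.1.le, hx.2.le⟩)) (p x0) (q x0)
    have hLx := hL x0 hNx
    have hΛx := hΛ x0 hNx
    have hdp := hpos x0 hi2
    have E := Real.exp_pos (-k * nq x0 y)
    change 0 < ex x0 at E
    set e := ex x0
    set X := x0.1 - y.1 with hX
    set Y := x0.2 - y.2 with hY
    have hnq : nq x0 y = X ^ 2 + Y ^ 2 := rfl
    rw [hnq] at hi1 hi2
    have aX : |X| ≤ R := abs_le_of_sq_le_sq (by nlinarith [sq_nonneg Y]) hR.le
    have aY : |Y| ≤ R := abs_le_of_sq_le_sq (by nlinarith [sq_nonneg X]) hR.le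
    have me : 0 < m * e := mul_pos hm E
    have ad : |d x0| ≤ m * e := by rw [abs_of_pos hdp]; nlinarith
    have ad1 : |d₁ x0| ≤ m * e * (2 * k * R) := by
      rw [show d₁ x0 = (m * e) * (-(2 * k)) * X by linarith, abs_mul, abs_mul, abs_of_pos me, abs_neg,
        abs_of_pos (by positivity : 0 < 2 * k)]
      rw [mul_assoc]
      exact mul_le_mul_of_nonneg_left (mul_le_mul_of_nonneg_left aX (by positivity)) me.le
    have ad2 : |d₂ x0| ≤ m * e * (2 * k * R) := by
      rw [show d₂ x0 = (m * e) * (-(2 * k)) * Y by linarith, abs_mul, abs_mul, abs_of_pos me, abs_neg,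
        abs_of_pos (by positivity : 0 < 2 * k)]
      rw [mul_assoc]
      exact mul_le_mul_of_nonneg_left (mul_le_mul_of_nonneg_left aY (by positivity)) me.le
    have up : C * (|d x0| + |d₁ x0| + |d₂ x0|) ≤ C * (m * e * (1 + 4 * k * R)) :=
      mul_le_mul_of_nonneg_left (by linarith) hC0
    have hXY : k ^ 2 * R ^ 2 ≤ 4 * k ^ 2 * (X ^ 2 + Y ^ 2 + (q x0 * X - p x0 * Y) ^ 2) := by
      have : R ^ 2 ≤ 4 * (X ^ 2 + Y ^ 2 + (q x0 * X - p x0 * Y) ^ 2) := by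
        nlinarith [sq_nonneg (q x0 * X - p x0 * Y)]
      nlinarith [sq_nonneg k]
    have low : m * e * (k ^ 2 * R ^ 2 - 2 * k * Λ) ≤
        (1 + q x0 ^ 2) * d₁₁ x0 - 2 * p x0 * q x0 * d₁₂ x0 + (1 + p x0 ^ 2) * d₂₂ x0 := by
      have h1 : m * e * (k ^ 2 * R ^ 2 - 2 * k * Λ) ≤ m * e *
          (4 * k ^ 2 * (X ^ 2 + Y ^ 2 + (q x0 * X - p x0 * Y) ^ 2)
            - 2 * k * (2 + p x0 ^ 2 + q x0 ^ 2)) := by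
        refine mul_le_mul_of_nonneg_left ?_ me.le
        have := mul_le_mul_of_nonneg_left hΛx (by positivity : 0 ≤ 2 * k)
        linarith
      linarith
    have := mul_lt_mul_of_pos_left hkbig me
    linarith
  -- contradiction along the inner normal at `z₁`
  set e := y - z₁ with he
  have hzN := hyN z₁ hz.le
  have hder : HasDerivAt (fun s : ℝ => d (z₁ + s • e) - m * (ex (z₁ + s • e) - eR))
      (-(m * (2 * k * R ^ 2 * eR))) 0 := by
    have g1 : HasDerivAt (fun s : ℝ => d (z₁ + s • e)) (e.1 * d₁ z₁ + e.2 * d₂ z₁) 0 :=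
      HasPd.line (by simpa using hd z₁ hzN)
    have g2 : HasDerivAt (fun s : ℝ => ex (z₁ + s • e))
        (e.1 * (-2 * k * (z₁.1 - y.1) * Real.exp (-k * nq z₁ y))
          + e.2 * (-2 * k * (z₁.2 - y.2) * Real.exp (-k * nq z₁ y))) 0 :=
      HasPd.line (by rw [zero_smul, add_zero]; exact barrier_hasPd k y z₁)
    refine (g1.sub ((g2.sub_const eR).const_mul m)).congr_deriv ?_
    rw [z1, z2, hz, ← heR, ← hz]
    simp only [he, nq, Prod.fst_sub, Prod.snd_sub]
    ring
  have hnql : ∀ s : ℝ, nq (z₁ + s • e) y = (1 - s) ^ 2 * R ^ 2 := fun s => by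
    rw [← hz]; simp [nq, he]; ring
  have := pos_first_deriv hder (by
    have h1 : ex z₁ = eR := by simp only [hex, heR, hz]
    simp [z0, h1]) (c := 1 / 2) (by norm_num) (fun s s0 s1 => by
    have h2 := hcomp (z₁ + s • e)
      (by rw [hnql, ← mul_pow]; exact pow_le_pow_left₀ (by positivity) (by nlinarith) 2)
      (by rw [hnql, ← mul_pow]; exact pow_le_pow_left₀ (by nlinarith) (by nlinarith) 2)
    linarith)
  have : 0 < m * (2 * k * R ^ 2 * eR) := by have := Real.exp_pos (-k * R ^ 2); positivity
  linarith

/-- If `d` solves an elliptic inequality near `z` and its gradient vanishes on its zero set, then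
a zero at `z` forces `d = 0` near `z`. -/
lemma vanish_near {d d₁ d₂ d₁₁ d₁₂ d₂₂ p q : ℝ × ℝ → ℝ} {C Λ : ℝ} {z : ℝ × ℝ} {N : Set (ℝ × ℝ)}
    (hN : N ∈ 𝓝 z)
    (hd : ∀ x ∈ N, HasPd d x (d₁ x) (d₂ x)) (hd1 : ∀ x ∈ N, HasPd d₁ x (d₁₁ x) (d₁₂ x))
    (hd2 : ∀ x ∈ N, HasPd d₂ x (d₁₂ x) (d₂₂ x)) (hC0 : 0 ≤ C)
    (hL : ∀ x ∈ N, |(1 + q x ^ 2) * d₁₁ x - 2 * p x * q x * d₁₂ x + (1 + p x ^ 2) * d₂₂ x|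
      ≤ C * (|d x| + |d₁ x| + |d₂ x|)) (hΛ : ∀ x ∈ N, 2 + p x ^ 2 + q x ^ 2 ≤ Λ)
    (hz : d z = 0) (hgrad : ∀ x ∈ N, d x = 0 → d₁ x = 0 ∧ d₂ x = 0) :
    ∀ᶠ x in 𝓝 z, d x = 0 := by
  obtain ⟨ρ, hρ, hball⟩ := Metric.mem_nhds_iff.1 hN
  have hin : ∀ x, nq x z ≤ (ρ / 2) ^ 2 → x ∈ N := fun x hx => hball (by
    have hx : (x.1 - z.1) ^ 2 + (x.2 - z.2) ^ 2 ≤ (ρ / 2) ^ 2 := hx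
    rw [Metric.mem_ball, dist_eq_norm, Prod.norm_def, max_lt_iff]
    simp only [Prod.fst_sub, Prod.snd_sub, Real.norm_eq_abs]
    exact ⟨lt_of_le_of_lt (abs_le_of_sq_le_sq (by nlinarith [sq_nonneg (x.2 - z.2)])
      (by positivity : 0 ≤ ρ / 2)) (by linarith), lt_of_le_of_lt
      (abs_le_of_sq_le_sq (by nlinarith [sq_nonneg (x.1 - z.1)])
      (by positivity : 0 ≤ ρ / 2)) (by linarith)⟩)
  have hnear : ∀ᶠ y in 𝓝 z, nq y z < (ρ / 4) ^ 2 := by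
    refine (nq_continuous z).continuousAt.eventually_lt_const ?_
    simp [nq]; positivity
  filter_upwards [hnear] with y hy
  by_contra hy0
  have hdc : ∀ x ∈ N, ContinuousAt d x := fun x hx => HasFDerivAt.continuousAt (hd x hx)
  set Z := {x | nq x z ≤ (ρ / 2) ^ 2} ∩ d ⁻¹' {0} with hZ
  have hK := isCompact_nq_le z (ρ / 2)
  have hZc : IsCompact Z := by
    have : IsClosed Z := ContinuousOn.preimage_isClosed_of_isClosed
      (fun x hx => (hdc x (hin x hx)).continuousWithinAt) hK.isClosed isClosed_singleton
    exact hK.of_isClosed_subset this inter_subset_left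
  have hzZ : z ∈ Z := ⟨by simp [nq]; positivity, hz⟩
  obtain ⟨z₁, hz1, hmin⟩ := hZc.exists_isMinOn ⟨z, hzZ⟩ (nq_continuous y).continuousOn
  have hmin : ∀ x ∈ Z, nq z₁ y ≤ nq x y := fun x hx => hmin hx
  set R := √(nq z₁ y) with hR
  have hnn : ∀ a b, 0 ≤ nq a b := fun a b => by unfold nq; positivity
  have hR2 : R ^ 2 = nq z₁ y := Real.sq_sqrt (hnn _ _)
  have hRle : R ≤ ρ / 4 := by
    apply abs_le_of_sq_le_sq' _ (by positivity) |>.2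
    rw [hR2]; exact (hmin z hzZ).trans (by rw [nq_comm]; exact hy.le)
  have hR0 : 0 < R := by
    refine Real.sqrt_pos.2 (lt_of_le_of_ne (hnn _ _) fun h => hy0 ?_)
    unfold nq at h
    have e1 : z₁.1 - y.1 = 0 := by nlinarith [sq_nonneg (z₁.1 - y.1), sq_nonneg (z₁.2 - y.2)]
    have e2 : z₁.2 - y.2 = 0 := by nlinarith [sq_nonneg (z₁.1 - y.1), sq_nonneg (z₁.2 - y.2)]
    have : y = z₁ := by ext <;> linarith
    rw [this]; exact hz1.2
  have hyin : ∀ x, nq x y ≤ R ^ 2 → nq x z ≤ (ρ / 2) ^ 2 := fun x hx => by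
    refine (nq_triangle hR0.le (by positivity : 0 ≤ ρ / 4) hx hy.le).trans ?_
    exact pow_le_pow_left₀ (by positivity) (by linarith) 2
  have hne : ∀ x, nq x y < R ^ 2 → d x ≠ 0 := fun x hx h0 => by
    have := hmin x ⟨hyin x hx.le, h0⟩
    linarith
  have hz1N : z₁ ∈ N := hin _ hz1.1
  obtain ⟨g1, g2⟩ := hgrad z₁ hz1N hz1.2
  -- `d` keeps one sign on the disc
  have hline : ∀ x, nq x y < R ^ 2 → 0 < d y * d x := by
    intro x hx
    have hseg : ∀ s ∈ Icc (0 : ℝ) 1, nq (y + s • (x - y)) y < R ^ 2 := fun s hs => by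
      have : nq (y + s • (x - y)) y = s ^ 2 * nq x y := by simp [nq]; ring
      rw [this]
      have : s ^ 2 ≤ 1 := by nlinarith [hs.1, hs.2]
      nlinarith [hnn x y]
    by_contra hcon
    push Not at hcon
    have hcont : ContinuousOn (fun s : ℝ => d y * d (y + s • (x - y))) (Icc 0 1) := fun s hs =>
      (continuousAt_const.mul (ContinuousAt.comp (f := fun s : ℝ => y + s • (x - y))
        (hdc _ (hin _ (hyin _ (hseg s hs).le))) (by fun_prop))).continuousWithinAt
    have := intermediate_value_Icc' zero_le_one hcont
    obtain ⟨s, hs, hs0⟩ := this (show (0 : ℝ) ∈ _ from ⟨by simpa using hcon, by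
      simpa using mul_self_nonneg (d y)⟩)
    exact hne _ (hseg s hs) ((mul_eq_zero.1 hs0).resolve_left hy0)
  rcases lt_or_gt_of_ne hy0 with hneg | hpos
  · refine hopf (d := fun x => -d x) (d₁ := fun x => -d₁ x) (d₂ := fun x => -d₂ x)
      (d₁₁ := fun x => -d₁₁ x) (d₁₂ := fun x => -d₁₂ x) (d₂₂ := fun x => -d₂₂ x) (p := p) (q := q)
      (N := N) (C := C) (Λ := Λ) (fun x hx => (hd x hx).neg) (fun x hx => (hd1 x hx).neg)
      (fun x hx => (hd2 x hx).neg) hC0 (fun x hx => ?_) hΛ hR0 (fun x hx => hin x (hyin x hx))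
      (fun x hx => ?_) hR2.symm (by simpa using hz1.2) (by simp [g1]) (by simp [g2])
    · simp only [abs_neg]
      have := (neg_le_abs _).trans (hL x hx)
      linarith
    · have := hline x hx
      nlinarith
  · exact hopf hd hd1 hd2 hC0 (fun x hx => (le_abs_self _).trans (hL x hx)) hΛ hR0
      (fun x hx => hin x (hyin x hx)) (fun x hx => by have := hline x hx; nlinarith) hR2.symm hz1.2 g1 g2

/-! ### The elliptic equation for the Hessian determinant -/

section coef
variable (p q r s t T1 T2 T3 : ℝ)

/-- Coefficient of `∂ₓD / t` in the quadratic third-order terms of the equation for `D = det D²u`;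
`u` has first derivatives `p, q`, second `r, s, t` and third `T0, …, T3`. -/
def coef0 : ℝ := (1 + q ^ 2) * ((T2 - s / t * T3) + T2) - p * q * T3

/-- Coefficient of `∂ᵧD / t` in the same expression. -/
def coef1 : ℝ := (T2 - s / t * T3) * ((1 + q ^ 2) * (s / t) - 2 * (p * q))
  + (1 + q ^ 2) * (-(s / t) * (T2 - s / t * T3) - T1 + s / t * T2)
  - p * q * (-(T2 - s / t * T3) + s / t * T3) + (1 + p ^ 2) * T3

/-- Zeroth-order coefficient in the equation for `D`. -/
def coefA : ℝ := 2 * (-coef0 p q s t T2 T3 * T2 / t ^ 2 - coef1 p q s t T1 T2 T3 * T3 / t ^ 2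
    + (T2 - s / t * T3) * (2 * p * t - 2 * q * s - 2 * p) / t)
  - (4 * (r * t) - 4 * s ^ 2 - 2 * r - 2 * t)

/-- Coefficient of `∂ₓD` in the equation for `D`. -/
def coefX : ℝ := 2 * coef0 p q s t T2 T3 / t - (-2 * q * s + 2 * p * t - 2 * p)

/-- Coefficient of `∂ᵧD` in the equation for `D`. -/
def coefY : ℝ := 2 * coef1 p q s t T1 T2 T3 / t - (2 * q * r - 2 * p * s - 2 * q)
end coef

/-- The linear elliptic equation satisfied by the Hessian determinant, where `u_yy ≠ 0`. -/
lemma det_equation {p q r s t T0 T1 T2 T3 F0 F1 F2 F3 F4 : ℝ} (ht : t ≠ 0)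
    (ex : (1 + q ^ 2) * T0 - 2 * (p * q) * T1 + (1 + p ^ 2) * T2
      + 2 * p * (r * t - s ^ 2) - 2 * p * r - 2 * q * s = 0)
    (ey : (1 + q ^ 2) * T1 - 2 * (p * q) * T2 + (1 + p ^ 2) * T3
      + 2 * q * (r * t - s ^ 2) - 2 * p * s - 2 * q * t = 0)
    (exx : (1 + q ^ 2) * F0 - 2 * (p * q) * F1 + (1 + p ^ 2) * F2
      + 2 * q * s * T0 - 2 * (r * q + p * s) * T1 + 2 * p * r * T2 + 2 * r * (r * t - s ^ 2)
      + 2 * p * (T0 * t + r * T2 - 2 * s * T1) - 2 * r ^ 2 - 2 * p * T0 - 2 * s ^ 2 - 2 * q * T1 = 0)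
    (exy : (1 + q ^ 2) * F1 - 2 * (p * q) * F2 + (1 + p ^ 2) * F3
      + 2 * q * t * T0 - 2 * (s * q + p * t) * T1 + 2 * p * s * T2 + 2 * s * (r * t - s ^ 2)
      + 2 * p * (T1 * t + r * T3 - 2 * s * T2) - 2 * s * r - 2 * p * T1 - 2 * t * s - 2 * q * T2 = 0)
    (eyy : (1 + q ^ 2) * F2 - 2 * (p * q) * F3 + (1 + p ^ 2) * F4
      + 2 * q * t * T1 - 2 * (s * q + p * t) * T2 + 2 * p * s * T3 + 2 * t * (r * t - s ^ 2)
      + 2 * q * (T1 * t + r * T3 - 2 * s * T2) - 2 * s ^ 2 - 2 * p * T2 - 2 * t ^ 2 - 2 * q * T3 = 0) :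
    (1 + q ^ 2) * (F0 * t + 2 * (T0 * T2) + r * F2 - 2 * T1 ^ 2 - 2 * s * F1)
      - 2 * p * q * (F1 * t + T0 * T3 - T1 * T2 + r * F3 - 2 * s * F2)
      + (1 + p ^ 2) * (F2 * t + 2 * (T1 * T3) + r * F4 - 2 * T2 ^ 2 - 2 * s * F3)
    = coefA p q r s t T1 T2 T3 * (r * t - s ^ 2)
      + coefX p q s t T2 T3 * (T0 * t + r * T2 - 2 * s * T1)
      + coefY p q r s t T1 T2 T3 * (T1 * t + r * T3 - 2 * s * T2) := by
  -- the quadratic third-order part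
  have hR : (1 + q ^ 2) * (T0 * T2 - T1 ^ 2) - p * q * (T0 * T3 - T1 * T2)
      + (1 + p ^ 2) * (T1 * T3 - T2 ^ 2)
      = coef0 p q s t T2 T3 * ((T0 * t + r * T2 - 2 * s * T1) / t - (r * t - s ^ 2) * T2 / t ^ 2)
      + coef1 p q s t T1 T2 T3 * ((T1 * t + r * T3 - 2 * s * T2) / t - (r * t - s ^ 2) * T3 / t ^ 2)
      + (T2 - s / t * T3) * (2 * p * t - 2 * q * s - 2 * p) * ((r * t - s ^ 2) / t) := by
    obtain ⟨m, rfl⟩ : ∃ m, s = m * t := ⟨s / t, by field_simp⟩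
    obtain ⟨δ, rfl⟩ : ∃ δ, r = m ^ 2 * t + δ := ⟨r - m ^ 2 * t, by ring⟩
    have h1 : m * t / t = m := by field_simp
    have h2 : ((m ^ 2 * t + δ) * t - (m * t) ^ 2) / t = δ := by field_simp; ring
    have h3 : ((T0 * t + (m ^ 2 * t + δ) * T2 - 2 * (m * t) * T1) / t
        - ((m ^ 2 * t + δ) * t - (m * t) ^ 2) * T2 / t ^ 2) = T0 + m ^ 2 * T2 - 2 * m * T1 := by
      field_simp; ring
    have h4 : ((T1 * t + (m ^ 2 * t + δ) * T3 - 2 * (m * t) * T2) / t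
        - ((m ^ 2 * t + δ) * t - (m * t) ^ 2) * T3 / t ^ 2) = T1 + m ^ 2 * T3 - 2 * m * T2 := by
      field_simp; ring
    rw [h3, h4, h2]
    simp only [coef0, coef1, h1]
    linear_combination (-(T2 - m * T3)) * (ex - m * ey)
  simp only [coefA, coefX, coefY]
  linear_combination 2 * hR + t * exx - 2 * s * exy + r * eyy

lemma HasPd.continuousAt {F : ℝ × ℝ → ℝ} {x : ℝ × ℝ} {a b : ℝ} (h : HasPd F x a b) :
    ContinuousAt F x := HasFDerivAt.continuousAt h

/-- For an abstract jet `p, q; r, s, t; T0, …, T3; F0, …, F4` solving the differentiated translator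
equation, the zero set of `rt - s²` is open as soon as the gradient of `rt - s²` vanishes on it. -/
lemma det_vanish {Ω : Set (ℝ × ℝ)} (hΩ : IsOpen Ω)
    {p q r s t T0 T1 T2 T3 F0 F1 F2 F3 F4 : ℝ × ℝ → ℝ}
    (hp : ∀ x ∈ Ω, HasPd p x (r x) (s x)) (hq : ∀ x ∈ Ω, HasPd q x (s x) (t x))
    (hr : ∀ x ∈ Ω, HasPd r x (T0 x) (T1 x)) (hs : ∀ x ∈ Ω, HasPd s x (T1 x) (T2 x))
    (ht : ∀ x ∈ Ω, HasPd t x (T2 x) (T3 x))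
    (h0 : ∀ x ∈ Ω, HasPd T0 x (F0 x) (F1 x)) (h1 : ∀ x ∈ Ω, HasPd T1 x (F1 x) (F2 x))
    (h2 : ∀ x ∈ Ω, HasPd T2 x (F2 x) (F3 x)) (h3 : ∀ x ∈ Ω, HasPd T3 x (F3 x) (F4 x))
    (ex : ∀ x ∈ Ω, (1 + q x ^ 2) * T0 x - 2 * (p x * q x) * T1 x + (1 + p x ^ 2) * T2 x
      + 2 * p x * (r x * t x - s x ^ 2) - 2 * p x * r x - 2 * q x * s x = 0)
    (ey : ∀ x ∈ Ω, (1 + q x ^ 2) * T1 x - 2 * (p x * q x) * T2 x + (1 + p x ^ 2) * T3 x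
      + 2 * q x * (r x * t x - s x ^ 2) - 2 * p x * s x - 2 * q x * t x = 0)
    (hgrad : ∀ x ∈ Ω, r x * t x - s x ^ 2 = 0 → T0 x * t x + r x * T2 x - 2 * s x * T1 x = 0 ∧
      T1 x * t x + r x * T3 x - 2 * s x * T2 x = 0)
    {z : ℝ × ℝ} (hz : z ∈ Ω) (hz0 : r z * t z - s z ^ 2 = 0) (hrt : t z ≠ 0 ∨ r z ≠ 0) :
    ∀ᶠ x in 𝓝 z, r x * t x - s x ^ 2 = 0 := by
  have c1 : ∀ x : ℝ × ℝ, HasPd (fun _ : ℝ × ℝ => (1 : ℝ)) x 0 0 := fun x => HasPd.const 1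
  have c2 : ∀ x : ℝ × ℝ, HasPd (fun _ : ℝ × ℝ => (2 : ℝ)) x 0 0 := fun x => HasPd.const 2
  -- twice differentiated equation
  have Zx : ∀ x ∈ Ω, HasPd (fun x => (1 + q x * q x) * T0 x - 2 * (p x * q x) * T1 x
      + (1 + p x * p x) * T2 x + 2 * p x * (r x * t x - s x * s x) - 2 * p x * r x
      - 2 * q x * s x) x 0 0 := fun x hx => by
    refine (HasPd.const 0).congr_of_eventuallyEq ?_
    filter_upwards [hΩ.mem_nhds hx] with y hy
    linear_combination ex y hy
  have Zy : ∀ x ∈ Ω, HasPd (fun x => (1 + q x * q x) * T1 x - 2 * (p x * q x) * T2 x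
      + (1 + p x * p x) * T3 x + 2 * q x * (r x * t x - s x * s x) - 2 * p x * s x
      - 2 * q x * t x) x 0 0 := fun x hx => by
    refine (HasPd.const 0).congr_of_eventuallyEq ?_
    filter_upwards [hΩ.mem_nhds hx] with y hy
    linear_combination ey y hy
  have hEx := fun x hx => ((((((((c1 x).add ((hq x hx).mul (hq x hx))).mul (h0 x hx)).sub
    (((c2 x).mul ((hp x hx).mul (hq x hx))).mul (h1 x hx))).add
    (((c1 x).add ((hp x hx).mul (hp x hx))).mul (h2 x hx))).add
    (((c2 x).mul (hp x hx)).mul (((hr x hx).mul (ht x hx)).sub ((hs x hx).mul (hs x hx))))).sub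
    (((c2 x).mul (hp x hx)).mul (hr x hx))).sub (((c2 x).mul (hq x hx)).mul (hs x hx))).unique
      (Zx x hx)
  have hEy := fun x hx => ((((((((c1 x).add ((hq x hx).mul (hq x hx))).mul (h1 x hx)).sub
    (((c2 x).mul ((hp x hx).mul (hq x hx))).mul (h2 x hx))).add
    (((c1 x).add ((hp x hx).mul (hp x hx))).mul (h3 x hx))).add
    (((c2 x).mul (hq x hx)).mul (((hr x hx).mul (ht x hx)).sub ((hs x hx).mul (hs x hx))))).sub
    (((c2 x).mul (hp x hx)).mul (hs x hx))).sub (((c2 x).mul (hq x hx)).mul (ht x hx))).unique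
      (Zy x hx)
  set d₁₁ : ℝ × ℝ → ℝ := fun x =>
    F0 x * t x + 2 * (T0 x * T2 x) + r x * F2 x - 2 * T1 x ^ 2 - 2 * s x * F1 x with hd11
  set d₁₂ : ℝ × ℝ → ℝ := fun x =>
    F1 x * t x + T0 x * T3 x - T1 x * T2 x + r x * F3 x - 2 * s x * F2 x with hd12
  set d₂₂ : ℝ × ℝ → ℝ := fun x =>
    F2 x * t x + 2 * (T1 x * T3 x) + r x * F4 x - 2 * T2 x ^ 2 - 2 * s x * F3 x with hd22
  have hd : ∀ x ∈ Ω, HasPd (fun x => r x * t x - s x ^ 2) x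
      (T0 x * t x + r x * T2 x - 2 * s x * T1 x) (T1 x * t x + r x * T3 x - 2 * s x * T2 x) :=
    fun x hx => by
      simp only [pow_two]
      exact (((hr x hx).mul (ht x hx)).sub ((hs x hx).mul (hs x hx))).congr_vals (by ring) (by ring)
  have hd1 : ∀ x ∈ Ω, HasPd (fun x => T0 x * t x + r x * T2 x - 2 * s x * T1 x) x (d₁₁ x) (d₁₂ x) :=
    fun x hx => ((((h0 x hx).mul (ht x hx)).add ((hr x hx).mul (h2 x hx))).sub
      (((c2 x).mul (hs x hx)).mul (h1 x hx))).congr_vals (by simp only [hd11]; ring)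
        (by simp only [hd12]; ring)
  have hd2 : ∀ x ∈ Ω, HasPd (fun x => T1 x * t x + r x * T3 x - 2 * s x * T2 x) x (d₁₂ x) (d₂₂ x) :=
    fun x hx => ((((h1 x hx).mul (ht x hx)).add ((hr x hx).mul (h3 x hx))).sub
      (((c2 x).mul (hs x hx)).mul (h2 x hx))).congr_vals (by simp only [hd12]; ring)
        (by simp only [hd22]; ring)
  have kp := (hp z hz).continuousAt
  have kq := (hq z hz).continuousAt
  have kr := (hr z hz).continuousAt
  have ks := (hs z hz).continuousAt
  have kt := (ht z hz).continuousAt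
  have k0 := (h0 z hz).continuousAt
  have k1 := (h1 z hz).continuousAt
  have k2 := (h2 z hz).continuousAt
  have k3 := (h3 z hz).continuousAt
  -- the equation with coefficients continuous at `z`
  obtain ⟨A, B, B', cA, cB, cB', hEq⟩ : ∃ A B B' : ℝ × ℝ → ℝ, ContinuousAt A z ∧
      ContinuousAt B z ∧ ContinuousAt B' z ∧ ∀ᶠ x in 𝓝 z,
      (1 + q x ^ 2) * d₁₁ x - 2 * p x * q x * d₁₂ x + (1 + p x ^ 2) * d₂₂ x
      = A x * (r x * t x - s x ^ 2) + B x * (T0 x * t x + r x * T2 x - 2 * s x * T1 x)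
        + B' x * (T1 x * t x + r x * T3 x - 2 * s x * T2 x) := by
    rcases hrt with htz | hrz
    · refine ⟨fun x => coefA (p x) (q x) (r x) (s x) (t x) (T1 x) (T2 x) (T3 x),
        fun x => coefX (p x) (q x) (s x) (t x) (T2 x) (T3 x),
        fun x => coefY (p x) (q x) (r x) (s x) (t x) (T1 x) (T2 x) (T3 x), ?_, ?_, ?_, ?_⟩
      · unfold coefA coef0 coef1
        fun_prop (disch := first | assumption | exact pow_ne_zero 2 htz)
      · unfold coefX coef0
        fun_prop (disch := first | assumption | exact pow_ne_zero 2 htz)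
      · unfold coefY coef1
        fun_prop (disch := first | assumption | exact pow_ne_zero 2 htz)
      · filter_upwards [hΩ.mem_nhds hz, kt.eventually_ne htz] with x hx htx
        exact det_equation htx (ex x hx) (ey x hx)
          (by linear_combination (hEx x hx).1) (by linear_combination (hEx x hx).2)
          (by linear_combination (hEy x hx).2)
    · refine ⟨fun x => coefA (q x) (p x) (t x) (s x) (r x) (T2 x) (T1 x) (T0 x),
        fun x => coefY (q x) (p x) (t x) (s x) (r x) (T2 x) (T1 x) (T0 x),
        fun x => coefX (q x) (p x) (s x) (r x) (T1 x) (T0 x), ?_, ?_, ?_, ?_⟩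
      · unfold coefA coef0 coef1
        fun_prop (disch := first | assumption | exact pow_ne_zero 2 hrz)
      · unfold coefY coef1
        fun_prop (disch := first | assumption | exact pow_ne_zero 2 hrz)
      · unfold coefX coef0
        fun_prop (disch := first | assumption | exact pow_ne_zero 2 hrz)
      · filter_upwards [hΩ.mem_nhds hz, kr.eventually_ne hrz] with x hx hrx
        have := det_equation (p := q x) (q := p x) (r := t x) (s := s x) (t := r x) (T0 := T3 x)
          (T1 := T2 x) (T2 := T1 x) (T3 := T0 x) (F0 := F4 x) (F1 := F3 x) (F2 := F2 x)
          (F3 := F1 x) (F4 := F0 x) hrx (by linear_combination ey x hx)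
          (by linear_combination ex x hx)
          (by linear_combination (hEy x hx).2) (by linear_combination (hEy x hx).1)
          (by linear_combination (hEx x hx).1)
        simp only [hd11, hd12, hd22]
        linear_combination this
  have bd : ∀ {f : ℝ × ℝ → ℝ}, ContinuousAt f z → ∀ᶠ x in 𝓝 z, |f x| < |f z| + 1 := fun hf =>
    hf.abs.eventually_lt_const (by linarith)
  have bΛ : ∀ᶠ x in 𝓝 z, 2 + p x ^ 2 + q x ^ 2 < 2 + p z ^ 2 + q z ^ 2 + 1 := by
    have : ContinuousAt (fun x => 2 + p x ^ 2 + q x ^ 2) z := by fun_prop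
    exact this.eventually_lt_const (by linarith)
  set C := (|A z| + 1) + (|B z| + 1) + (|B' z| + 1) with hC
  refine vanish_near (d := fun x => r x * t x - s x ^ 2) (p := p) (q := q) (C := C)
    (N := Ω ∩ {x | (2 + p x ^ 2 + q x ^ 2 < 2 + p z ^ 2 + q z ^ 2 + 1) ∧
      ((1 + q x ^ 2) * d₁₁ x - 2 * p x * q x * d₁₂ x + (1 + p x ^ 2) * d₂₂ x
      = A x * (r x * t x - s x ^ 2) + B x * (T0 x * t x + r x * T2 x - 2 * s x * T1 x)
        + B' x * (T1 x * t x + r x * T3 x - 2 * s x * T2 x)) ∧ |A x| < |A z| + 1 ∧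
        |B x| < |B z| + 1 ∧ |B' x| < |B' z| + 1})
    (inter_mem (hΩ.mem_nhds hz) ?_) (fun x hx => hd x hx.1) (fun x hx => hd1 x hx.1)
    (fun x hx => hd2 x hx.1) (by positivity) (fun x hx => ?_) (fun x hx => hx.2.1.le) hz0
    (fun x hx h => hgrad x hx.1 h)
  · filter_upwards [bΛ, hEq, bd cA, bd cB, bd cB'] with x g1 g2 g3 g4 g5
    exact ⟨g1, g2, g3, g4, g5⟩
  · obtain ⟨-, g2, g3, g4, g5⟩ := hx.2
    rw [g2]
    set X := r x * t x - s x ^ 2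
    set Y := T0 x * t x + r x * T2 x - 2 * s x * T1 x
    set Z := T1 x * t x + r x * T3 x - 2 * s x * T2 x
    have e := (abs_add_le (A x * X + B x * Y) (B' x * Z)).trans
      (add_le_add_left (abs_add_le (A x * X) (B x * Y)) _)
    refine e.trans ?_
    rw [abs_mul, abs_mul, abs_mul]
    have f1 : |A x| * |X| ≤ C * |X| := mul_le_mul_of_nonneg_right
      (by rw [hC]; linarith [abs_nonneg (B z), abs_nonneg (B' z)]) (abs_nonneg _)
    have f2 : |B x| * |Y| ≤ C * |Y| := mul_le_mul_of_nonneg_right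
      (by rw [hC]; linarith [abs_nonneg (A z), abs_nonneg (B' z)]) (abs_nonneg _)
    have f3 : |B' x| * |Z| ≤ C * |Z| := mul_le_mul_of_nonneg_right
      (by rw [hC]; linarith [abs_nonneg (B z), abs_nonneg (A z)]) (abs_nonneg _)
    linarith

/-! ### Vanishing of the Hessian determinant and nonconstant differences -/

/-- A property open and closed in a connected set `P` that holds at one point holds on `P`. -/
lemma clopen_all {P : Set (ℝ × ℝ)} (hP : IsPreconnected P) (S : ℝ × ℝ → Prop)
    (hS : ∀ x ∈ P, S x → ∀ᶠ y in 𝓝 x, S y) (hc : ∀ x ∈ P, ¬ S x → ∀ᶠ y in 𝓝 x, ¬ S y)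
    {x₀ : ℝ × ℝ} (h0 : x₀ ∈ P) (h0S : S x₀) : ∀ x ∈ P, S x := by
  intro x hx
  by_contra hn
  obtain ⟨z, hz, hz1, hz2⟩ := hP (interior {y | S y}) (interior {y | ¬ S y}) isOpen_interior
    isOpen_interior (fun y hy => by
      by_cases h : S y
      · exact Or.inl (mem_interior_iff_mem_nhds.2 (hS y hy h))
      · exact Or.inr (mem_interior_iff_mem_nhds.2 (hc y hy h)))
    ⟨x₀, h0, mem_interior_iff_mem_nhds.2 (hS _ h0 h0S)⟩
    ⟨x, hx, mem_interior_iff_mem_nhds.2 (hc _ hx hn)⟩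
  exact interior_subset hz2 (interior_subset hz1)

lemma hasPd_pdy {Ω : Set (ℝ × ℝ)} (hΩ : IsOpen Ω) {v A : ℝ × ℝ → ℝ}
    (hv : ContDiffOn ℝ (⊤ : ℕ∞) v Ω) (hA : ∀ y ∈ Ω, pdx v y = A y) {x} (hx : x ∈ Ω) :
    HasPd (pdy v) x (pdy A x) (pdy (pdy v) x) := by
  have h1 : pdx (pdy v) x = pdy A x := by
    rw [pd_symm hΩ hv hx]
    have : pdx v =ᶠ[𝓝 x] A := by
      filter_upwards [hΩ.mem_nhds hx] with y hy using hA y hy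
    simp only [pdy, this.fderiv_eq]
  rw [← h1]
  exact hasPd_of_contDiffOn hΩ (contDiffOn_pdy hΩ hv) hx

lemma const_of_hasPd_zero {Ω : Set (ℝ × ℝ)} (hΩ : IsOpen Ω) (hc : IsPreconnected Ω)
    {F : ℝ × ℝ → ℝ} (h : ∀ x ∈ Ω, HasPd F x 0 0) {x y} (hx : x ∈ Ω) (hy : y ∈ Ω) :
    F x = F y := by
  refine hΩ.is_const_of_fderiv_eq_zero (𝕜 := ℝ) hc
    (fun z hz => (HasFDerivAt.differentiableAt (h z hz)).differentiableWithinAt) ?_ hx hy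
  intro z hz
  exact fderiv_eq_zero_of_pd (h z hz).pdx_eq (h z hz).pdy_eq

namespace Sch
variable {κ w L : ℝ} {u : ℝ × ℝ → ℝ}

/-- Where the Hessian is degenerate, `(u_yy, -u_xy)` and `(-u_xy, u_xx)` lie in its kernel, hence by
`third_kernel` in the kernel of the third derivative. In particular the gradient of the Hessian
determinant vanishes there. -/
lemma grad_det (hs : Sch κ w L u) {x} (hx : x ∈ Pk κ w L)
    (hD : pdx (pdx u) x * pdy (pdy u) x - pdy (pdx u) x ^ 2 = 0) :
    (pdy (pdy u) x * pdx (pdx (pdx u)) x - pdy (pdx u) x * pdy (pdx (pdx u)) x = 0 ∧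
     pdy (pdy u) x * pdy (pdx (pdx u)) x - pdy (pdx u) x * pdy (pdy (pdx u)) x = 0 ∧
     pdy (pdy u) x * pdy (pdy (pdx u)) x - pdy (pdx u) x * pdy (pdy (pdy u)) x = 0) ∧
    (pdx (pdx u) x * pdy (pdx (pdx u)) x - pdy (pdx u) x * pdx (pdx (pdx u)) x = 0 ∧
     pdx (pdx u) x * pdy (pdy (pdx u)) x - pdy (pdx u) x * pdy (pdx (pdx u)) x = 0 ∧
     pdx (pdx u) x * pdy (pdy (pdy u)) x - pdy (pdx u) x * pdy (pdy (pdx u)) x = 0) := by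
  obtain ⟨a1, a2, a3⟩ := hs.third_kernel hx (pdy (pdy u) x, - pdy (pdx u) x)
    (by simp only; linear_combination hD) (by simp only; ring)
  obtain ⟨b1, b2, b3⟩ := hs.third_kernel hx (- pdy (pdx u) x, pdx (pdx u) x)
    (by simp only; ring) (by simp only; linear_combination hD)
  simp only at a1 a2 a3 b1 b2 b3
  refine ⟨⟨?_, ?_, ?_⟩, ?_, ?_, ?_⟩ <;> linarith

/-- A degenerate Hessian has a nonzero diagonal entry, since the right side of the equation is positive. -/
lemma hess_ne (hs : Sch κ w L u) {x} (hx : x ∈ Pk κ w L)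
    (hD : pdx (pdx u) x * pdy (pdy u) x - pdy (pdx u) x ^ 2 = 0) :
    pdy (pdy u) x ≠ 0 ∨ pdx (pdx u) x ≠ 0 := by
  by_contra! h
  obtain ⟨ht, hr⟩ := h
  have hs0 : pdy (pdx u) x = 0 := by
    rw [ht, hr] at hD
    have : pdy (pdx u) x ^ 2 = 0 := by linarith
    exact pow_eq_zero_iff (two_ne_zero) |>.1 this
  have := hs.tr.2 x hx
  rw [ht, hr, hs0] at this
  nlinarith [sq_nonneg (pdx u x), sq_nonneg (pdy u x)]

/-- The zero set of the Hessian determinant is open; `det_vanish` with the variables interchanged if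
`u_yy = 0`. -/
lemma det_open (hs : Sch κ w L u) {z} (hz : z ∈ Pk κ w L)
    (hD : pdx (pdx u) z * pdy (pdy u) z - pdy (pdx u) z ^ 2 = 0) :
    ∀ᶠ x in 𝓝 z, pdx (pdx u) x * pdy (pdy u) x - pdy (pdx u) x ^ 2 = 0 := by
  have hO := isOpen_Pk κ w L
  refine det_vanish hO (p := pdx u) (q := pdy u) (T0 := pdx (pdx (pdx u)))
    (T1 := pdy (pdx (pdx u))) (T2 := pdy (pdy (pdx u))) (T3 := pdy (pdy (pdy u)))
    (F0 := pdx (pdx (pdx (pdx u)))) (F1 := pdy (pdx (pdx (pdx u))))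
    (F2 := pdy (pdy (pdx (pdx u)))) (F3 := pdy (pdy (pdy (pdx u))))
    (F4 := pdy (pdy (pdy (pdy u))))
    (fun x hx => hs.hasPd_x hx) (fun x hx => hs.hasPd_y hx) (fun x hx => hs.hasPd_xx hx)
    (fun x hx => hs.hasPd_xy hx) (fun x hx => hs.hasPd_yy hx)
    (fun x hx => hasPd_of_contDiffOn hO (contDiffOn_pdx hO hs.smooth_xx) hx)
    (fun x hx => hasPd_pdy hO hs.smooth_xx (fun y _ => rfl) hx)
    (fun x hx => hasPd_pdy hO hs.smooth_xy (fun y hy => (hs.hasPd_xy hy).pdx_eq) hx)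
    (fun x hx => hasPd_pdy hO hs.smooth_yy (fun y hy => (hs.hasPd_yy hy).pdx_eq) hx)
    ?_ ?_ ?_ hz hD (hs.hess_ne hz hD)
  · intro x hx
    linear_combination (hs.eq_diff hx).1
  · intro x hx
    linear_combination (hs.eq_diff hx).2
  · intro x hx h
    obtain ⟨⟨a1, a2, a3⟩, b1, b2, b3⟩ := hs.grad_det hx h
    exact ⟨by linear_combination a1 + b2, by linear_combination a2 + b3⟩

lemma cont_det (hs : Sch κ w L u) {z} (hz : z ∈ Pk κ w L) :
    ContinuousAt (fun x => pdx (pdx u) x * pdy (pdy u) x - pdy (pdx u) x ^ 2) z :=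
  ((hs.hasPd_xx hz).continuousAt.mul (hs.hasPd_yy hz).continuousAt).sub
    ((hs.hasPd_xy hz).continuousAt.pow 2)

/-- The Hessian determinant vanishes everywhere or nowhere. -/
lemma det_dichotomy (hs : Sch κ w L u) {z} (hz : z ∈ Pk κ w L)
    (hD : pdx (pdx u) z * pdy (pdy u) z - pdy (pdx u) z ^ 2 = 0) :
    ∀ x ∈ Pk κ w L, pdx (pdx u) x * pdy (pdy u) x - pdy (pdx u) x ^ 2 = 0 :=
  clopen_all (convex_Pk κ w L).isPreconnected _ (fun x hx h => hs.det_open hx h)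
    (fun x hx h => (hs.cont_det hx).eventually_ne h) hz hD

/-- A point `b` adheres to the nonempty set `Dh` if `b` and `b + h` are in the closed parallelogram. -/
lemma mem_closure_Dh {h b c : ℝ × ℝ} (hc : c ∈ Dh κ w L h)
    (hb : 0 ≤ b.2 ∧ b.2 ≤ w ∧ κ * b.2 ≤ b.1 ∧ b.1 ≤ L + κ * b.2)
    (hbh : 0 ≤ b.2 + h.2 ∧ b.2 + h.2 ≤ w ∧ κ * (b.2 + h.2) ≤ b.1 + h.1 ∧
      b.1 + h.1 ≤ L + κ * (b.2 + h.2)) : (𝓝[Dh κ w L h] b).NeBot := by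
  rw [← mem_closure_iff_nhdsWithin_neBot]
  have key : ∀ ε ∈ Ioo (0:ℝ) 1, b + ε • (c - b) ∈ Dh κ w L h := by
    rintro ε ⟨h0, h1⟩
    obtain ⟨⟨c1, c2, c3, c4⟩, d1, d2, d3, d4⟩ := hc
    obtain ⟨b1, b2, b3, b4⟩ := hb
    obtain ⟨e1, e2, e3, e4⟩ := hbh
    simp only [Prod.snd_add, Prod.fst_add] at d1 d2 d3 d4
    simp only [Dh, Pk, mem_ofPred_eq, Prod.snd_add, Prod.fst_add, Prod.smul_snd, Prod.smul_fst,
      smul_eq_mul, Prod.fst_sub, Prod.snd_sub]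
    refine ⟨⟨?_, ?_, ?_, ?_⟩, ?_, ?_, ?_, ?_⟩ <;> nlinarith
  have ht : Tendsto (fun ε : ℝ => b + ε • (c - b)) (𝓝[>] 0) (𝓝 b) := by
    have : Continuous (fun ε : ℝ => b + ε • (c - b)) := by fun_prop
    have h2 := this.tendsto 0
    simp only [zero_smul, add_zero] at h2
    exact h2.mono_left nhdsWithin_le_nhds
  exact mem_closure_of_tendsto ht (by
    filter_upwards [Ioo_mem_nhdsGT (zero_lt_one' ℝ)] with ε hε using key ε hε)

/-- A difference `u(x + h) - u(x)` with `h ≠ 0` is not constant: it is infinite at some boundary point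
of its domain. -/
lemma not_const_shift (hs : Sch κ w L u) {h c : ℝ × ℝ} (hh : h ≠ 0) (hc : c ∈ Dh κ w L h) {m : ℝ}
    (hm : ∀ x ∈ Dh κ w L h, u (x + h) - u x = m) : False := by
  have hcc := hc
  obtain ⟨⟨c1, c2, c3, c4⟩, d1, d2, d3, d4⟩ := hcc
  simp only [Prod.snd_add, Prod.fst_add] at d1 d2 d3 d4
  have hev : ∀ b, (fun x => u (x + h) - u x) =ᶠ[𝓝[Dh κ w L h] b] fun _ => m := fun b => by
    filter_upwards [self_mem_nhdsWithin] with x hx using hm x hx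
  have fin1 : ∀ b, (𝓝[Dh κ w L h] b).NeBot → 
      Tendsto (fun x => u (x + h) - u x) (𝓝[Dh κ w L h] b) atTop → False := by
    intro b hb ht
    exact not_tendsto_const_atTop _ _ (ht.congr' (hev b))
  have fin2 : ∀ b, (𝓝[Dh κ w L h] b).NeBot → 
      Tendsto (fun x => u (x + h) - u x) (𝓝[Dh κ w L h] b) atBot → False := by
    intro b hb ht
    exact not_tendsto_const_atBot _ _ (ht.congr' (hev b))
  have hw := hs.hw
  have hL := hs.hL
  rcases lt_trichotomy h.2 0 with hk | hk | hk
  · have hbc : 0 < c.1 - κ * c.2 := by linarith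
    refine fin1 (κ * w + (c.1 - κ * c.2), w) (mem_closure_Dh hc ?_ ?_) (top_of_bot h _ (hs.bot _ (Or.inr rfl) ?_ ?_) 
      (hs.lb ?_ ?_ ?_ ?_)) <;> simp only [Prod.snd_add, Prod.fst_add] <;> (try refine ⟨?_, ?_, ?_, ?_⟩) <;> linarith
  · by_cases hη : 0 < h.1
    · refine fin2 (κ * c.2, c.2) (mem_closure_Dh hc ?_ ?_) (bot_of_top h _ (hs.top _ ?_ ?_ (Or.inl rfl)) 
        (hs.ub ?_ ?_ ?_ ?_)) <;> simp only [Prod.snd_add, Prod.fst_add, hk, add_zero] at * <;> (try refine ⟨?_, ?_, ?_, ?_⟩) <;> linarith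
    · have h1 : h.1 ≠ 0 := fun h1 => hh (Prod.ext h1 hk)
      have h2 : h.1 < 0 := lt_of_le_of_ne (not_lt.1 hη) h1
      clear hη
      refine fin2 (L + κ * c.2, c.2) (mem_closure_Dh hc ?_ ?_) (bot_of_top h _ (hs.top _ ?_ ?_ (Or.inr rfl)) 
        (hs.ub ?_ ?_ ?_ ?_)) <;> simp only [Prod.snd_add, Prod.fst_add, hk, add_zero] at * <;> (try refine ⟨?_, ?_, ?_, ?_⟩) <;> linarith
  · refine fin1 ((c.1 - κ * c.2), 0) (mem_closure_Dh hc ?_ ?_) (top_of_bot h _ (hs.bot _ (Or.inl rfl) ?_ ?_) 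
      (hs.lb ?_ ?_ ?_ ?_)) <;> simp only [Prod.snd_add, Prod.fst_add] <;> (try refine ⟨?_, ?_, ?_, ?_⟩) <;> linarith

end Sch

/-! ### Nondegeneracy of the Hessian and injectivity of the gradient map -/

/-- If `t ∇s = s ∇t`, then `s / t` is locally constant where `t ≠ 0`. -/
lemma ratio_const {Ω : Set (ℝ × ℝ)} (hΩ : IsOpen Ω) {s t a b c d : ℝ × ℝ → ℝ}
    (hs : ∀ x ∈ Ω, HasPd s x (a x) (b x)) (ht : ∀ x ∈ Ω, HasPd t x (c x) (d x))
    (h1 : ∀ x ∈ Ω, t x * a x - s x * c x = 0) (h2 : ∀ x ∈ Ω, t x * b x - s x * d x = 0)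
    {x : ℝ × ℝ} (hx : x ∈ Ω) (htx : t x ≠ 0) :
    ∀ᶠ y in 𝓝 x, s y * t x = s x * t y := by
  obtain ⟨ε, hε, hball⟩ := Metric.eventually_nhds_iff_ball.1
    (((ht x hx).continuousAt.eventually_ne htx).and (hΩ.eventually_mem hx))
  filter_upwards [Metric.ball_mem_nhds x hε] with y hy
  have key := const_of_hasPd_zero (F := fun y => s y * (t y)⁻¹) Metric.isOpen_ball
    (convex_ball x ε).isPreconnected (fun z hz => by
      obtain ⟨hz1, hz2⟩ := hball z hz
      refine ((hs z hz2).mul (HasPd.comp_real (hasDerivAt_inv hz1) (ht z hz2))).congr_vals ?_ ?_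
      · have := h1 z hz2
        field_simp; linarith
      · have := h2 z hz2
        field_simp; linarith) hy (Metric.mem_ball_self hε)
  have hy1 := (hball y hy).1
  field_simp at key
  linarith

namespace Sch
variable {κ w L : ℝ} {u : ℝ × ℝ → ℝ}

/-- If the Hessian is degenerate everywhere, its kernel direction does not depend on the point. -/
lemma kernel_all (hs : Sch κ w L u) {z : ℝ × ℝ} (hz : z ∈ Pk κ w L)
    (hD : ∀ x ∈ Pk κ w L, pdx (pdx u) x * pdy (pdy u) x - pdy (pdx u) x ^ 2 = 0) (θ : ℝ × ℝ)
    (k1 : θ.1 * pdx (pdx u) z + θ.2 * pdy (pdx u) z = 0)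
    (k2 : θ.1 * pdy (pdx u) z + θ.2 * pdy (pdy u) z = 0) :
    ∀ x ∈ Pk κ w L, θ.1 * pdx (pdx u) x + θ.2 * pdy (pdx u) x = 0 ∧
      θ.1 * pdy (pdx u) x + θ.2 * pdy (pdy u) x = 0 := by
  have hO := isOpen_Pk κ w L
  refine clopen_all (convex_Pk κ w L).isPreconnected _ ?_ ?_ hz ⟨k1, k2⟩
  · rintro x hx ⟨e1, e2⟩
    rcases hs.hess_ne hx (hD x hx) with ht | hr
    · filter_upwards [ratio_const hO (fun x hx => hs.hasPd_xy hx) (fun x hx => hs.hasPd_yy hx)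
        (fun x hx => (hs.grad_det hx (hD x hx)).1.2.1) (fun x hx => (hs.grad_det hx (hD x hx)).1.2.2)
        hx ht, hO.mem_nhds hx, (hs.hasPd_yy hx).continuousAt.eventually_ne ht] with y hy hyP hty
      have g2 : θ.1 * pdy (pdx u) y + θ.2 * pdy (pdy u) y = 0 := by
        apply mul_left_cancel₀ ht
        linear_combination θ.1 * hy + pdy (pdy u) y * e2
      refine ⟨?_, g2⟩
      apply mul_left_cancel₀ hty
      linear_combination θ.1 * hD y hyP + pdy (pdx u) y * g2
    · filter_upwards [ratio_const hO (fun x hx => hs.hasPd_xy hx) (fun x hx => hs.hasPd_xx hx)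
        (fun x hx => (hs.grad_det hx (hD x hx)).2.1) (fun x hx => (hs.grad_det hx (hD x hx)).2.2.1)
        hx hr, hO.mem_nhds hx, (hs.hasPd_xx hx).continuousAt.eventually_ne hr] with y hy hyP hty
      have g2 : θ.1 * pdx (pdx u) y + θ.2 * pdy (pdx u) y = 0 := by
        apply mul_left_cancel₀ hr
        linear_combination θ.2 * hy + pdx (pdx u) y * e1
      refine ⟨g2, ?_⟩
      apply mul_left_cancel₀ hty
      linear_combination θ.2 * hD y hyP + pdy (pdx u) y * g2
  · intro x hx hn
    have r := (hs.hasPd_xx hx).continuousAt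
    have s := (hs.hasPd_xy hx).continuousAt
    have t := (hs.hasPd_yy hx).continuousAt
    rcases not_and_or.1 hn with h | h
    · filter_upwards [(((r.const_mul θ.1).add (s.const_mul θ.2))).eventually_ne h] with y hy hy'
      exact hy hy'.1
    · filter_upwards [(((s.const_mul θ.1).add (t.const_mul θ.2))).eventually_ne h] with y hy hy'
      exact hy hy'.2

/-- The Hessian determinant of a Scherk translator never vanishes. -/
lemma det_ne (hs : Sch κ w L u) {z : ℝ × ℝ} (hz : z ∈ Pk κ w L) :
    pdx (pdx u) z * pdy (pdy u) z - pdy (pdx u) z ^ 2 ≠ 0 := by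
  intro hD0
  have hD := hs.det_dichotomy hz hD0
  have hO := isOpen_Pk κ w L
  obtain ⟨θ, hθ, k1, k2⟩ : ∃ θ : ℝ × ℝ, θ ≠ 0 ∧ θ.1 * pdx (pdx u) z + θ.2 * pdy (pdx u) z = 0 ∧
      θ.1 * pdy (pdx u) z + θ.2 * pdy (pdy u) z = 0 := by
    rcases hs.hess_ne hz hD0 with ht | hr
    · exact ⟨(pdy (pdy u) z, - pdy (pdx u) z), fun h => ht (congrArg Prod.fst h),
        by simp only; linear_combination hD0, by simp only; ring⟩
    · exact ⟨(- pdy (pdx u) z, pdx (pdx u) z), fun h => hr (congrArg Prod.snd h),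
        by simp only; ring, by simp only; linear_combination hD0⟩
  have hk := hs.kernel_all hz hD θ k1 k2
  have hc : ∀ x ∈ Pk κ w L, θ.1 * pdx u x + θ.2 * pdy u x = θ.1 * pdx u z + θ.2 * pdy u z := by
    intro x hx
    refine const_of_hasPd_zero (F := fun x => θ.1 * pdx u x + θ.2 * pdy u x) hO
      (convex_Pk κ w L).isPreconnected (fun y hy => ?_) hx hz
    refine (((HasPd.const θ.1).mul (hs.hasPd_x hy)).add
      ((HasPd.const θ.2).mul (hs.hasPd_y hy))).congr_vals ?_ ?_
    · linear_combination (hk y hy).1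
    · linear_combination (hk y hy).2
  obtain ⟨σ, hσ, hσz⟩ : ∃ σ : ℝ, σ ≠ 0 ∧ z + σ • θ ∈ Pk κ w L := by
    have hcont : Tendsto (fun σ : ℝ => z + σ • θ) (𝓝[≠] 0) (𝓝 z) := by
      have h1 : Continuous (fun σ : ℝ => z + σ • θ) := by fun_prop
      have h2 := h1.tendsto 0
      simp only [zero_smul, add_zero] at h2
      exact h2.mono_left nhdsWithin_le_nhds
    obtain ⟨σ, h1, h2⟩ := ((hcont.eventually (hO.eventually_mem hz)).and
      self_mem_nhdsWithin).exists
    exact ⟨σ, h2, h1⟩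
  refine hs.not_const_shift (h := σ • θ) (smul_ne_zero hσ hθ) (c := z) ⟨hz, hσz⟩
    (m := σ * (θ.1 * pdx u z + θ.2 * pdy u z)) ?_
  rintro x ⟨hx, hxh⟩
  have hseg : ∀ τ ∈ Icc (0:ℝ) 1, x + τ • (σ • θ) ∈ Pk κ w L := by
    intro τ hτ
    have := (convex_Pk κ w L).add_smul_sub_mem hx hxh hτ
    simpa using this
  obtain ⟨τ, hτ, he⟩ := exists_hasDerivAt_eq_slope (fun τ : ℝ => u (x + τ • (σ • θ))) _
    (zero_lt_one' ℝ)
    (fun τ hτ => (HasPd.line (hs.hasPd (hseg τ hτ))).continuousAt.continuousWithinAt)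
    (fun τ hτ => HasPd.line (hs.hasPd (hseg τ (Ioo_subset_Icc_self hτ))))
  have h2 := hc _ (hseg τ (Ioo_subset_Icc_self hτ))
  simp only [Prod.smul_fst, Prod.smul_snd, smul_eq_mul, one_smul, zero_smul, add_zero, sub_zero,
    div_one] at he
  rw [← h2, ← he]
  ring

end Sch

/-- The linear isomorphism with symmetric matrix `(a, b; b, c)`. -/
def symE (a b c : ℝ) (h : a * c - b ^ 2 ≠ 0) : (ℝ × ℝ) ≃L[ℝ] (ℝ × ℝ) :=
  ContinuousLinearEquiv.equivOfInverse (symL a b c)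
    (symL (c / (a * c - b ^ 2)) (-b / (a * c - b ^ 2)) (a / (a * c - b ^ 2)))
    (fun v => by
      ext
      · simp only [symL_apply]; linear_combination v.1 * mul_inv_cancel₀ h
      · simp only [symL_apply]; linear_combination v.2 * mul_inv_cancel₀ h)
    (fun v => by
      ext
      · simp only [symL_apply]; linear_combination v.1 * mul_inv_cancel₀ h
      · simp only [symL_apply]; linear_combination v.2 * mul_inv_cancel₀ h)

lemma symE_coe (a b c : ℝ) (h : a * c - b ^ 2 ≠ 0) :
    ((symE a b c h : (ℝ × ℝ) ≃L[ℝ] (ℝ × ℝ)) : (ℝ × ℝ) →L[ℝ] (ℝ × ℝ)) = symL a b c := by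
  ext <;> rfl

/-- The gradient map. -/
def gradMap (u : ℝ × ℝ → ℝ) (x : ℝ × ℝ) : ℝ × ℝ := (pdx u x, pdy u x)

namespace Sch
variable {κ w L : ℝ} {u : ℝ × ℝ → ℝ}

lemma strict_E (hs : Sch κ w L u) {x} (hx : x ∈ Pk κ w L) :
    HasStrictFDerivAt (gradMap u) 
      ((symE _ _ _ (hs.det_ne hx) : (ℝ × ℝ) ≃L[ℝ] (ℝ × ℝ)) : (ℝ × ℝ) →L[ℝ] (ℝ × ℝ)) x := by
  rw [symE_coe]; exact hs.strict_G hx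

/-- The set where `∇u(x + h) = ∇u(x)` is open. By the inverse function theorem `y ↦ y + h` can be
compared with the local solution `ψ` of `∇u(ψ(y)) = ∇u(y)`; by `hess_eq` its derivative is the
identity. -/
lemma grad_shift_open (hs : Sch κ w L u) {x h : ℝ × ℝ} (hx : x ∈ Dh κ w L h)
    (he : gradMap u (x + h) = gradMap u x) :
    ∀ᶠ y in 𝓝 x, gradMap u (y + h) = gradMap u y := by
  have hO := isOpen_Pk κ w L
  set Φ := (hs.strict_E hx.2).toOpenPartialHomeomorph with hΦ
  have hΦc : (Φ : ℝ × ℝ → ℝ × ℝ) = gradMap u := rfl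
  have hsrc : x + h ∈ Φ.source := (hs.strict_E hx.2).mem_toOpenPartialHomeomorph_source
  have htgt : gradMap u x ∈ Φ.target := by
    rw [← he]; exact Φ.map_source hsrc
  have hinv : Φ.symm (gradMap u x) = x + h := by
    rw [← he]; exact Φ.left_inv hsrc
  have hGc : ∀ y ∈ Pk κ w L, ContinuousAt (gradMap u) y := fun y hy => (hs.strict_E hy).continuousAt
  have hcomp : ContinuousAt (fun y => Φ.symm (gradMap u y)) x :=
    ContinuousAt.comp (f := gradMap u) (g := Φ.symm) (Φ.continuousAt_symm htgt) (hGc x hx.1)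
  have E : ∀ᶠ y in 𝓝 x, y ∈ Pk κ w L ∧ gradMap u y ∈ Φ.target ∧
      Φ.symm (gradMap u y) ∈ Pk κ w L := by
    refine (hO.eventually_mem hx.1).and (((hGc x hx.1).eventually (Φ.open_target.eventually_mem htgt)).and ?_)
    exact hcomp.eventually (hO.eventually_mem (by simpa only [hinv] using hx.2))
  obtain ⟨ε, hε, hball⟩ := Metric.eventually_nhds_iff_ball.1 E
  have hder : ∀ y ∈ Metric.ball x ε,
      HasFDerivAt (fun y => Φ.symm (gradMap u y) - y) (0 : (ℝ × ℝ) →L[ℝ] (ℝ × ℝ)) y := by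
    intro y hy
    obtain ⟨h1, h2, h3⟩ := hball y hy
    have hG : gradMap u (Φ.symm (gradMap u y)) = gradMap u y := Φ.right_inv h2
    have hsh := hs.hess_eq (h := Φ.symm (gradMap u y) - y) h1 (by simpa using h3)
      (by simpa [gradMap] using congrArg Prod.fst hG) (by simpa [gradMap] using congrArg Prod.snd hG)
    simp only [add_sub_cancel, sub_eq_zero] at hsh
    have d1 : HasFDerivAt Φ.symm _ (gradMap u y) :=
      Φ.hasFDerivAt_symm h2 (f' := symE _ _ _ (hs.det_ne h3)) (hs.strict_E h3).hasFDerivAt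
    have d2 := d1.comp y (hs.strict_E h1).hasFDerivAt
    refine (d2.sub (hasFDerivAt_id y)).congr_fderiv ?_
    have heq : symE _ _ _ (hs.det_ne h3) = symE _ _ _ (hs.det_ne h1) := by
      simp only [hsh.1, hsh.2.1, hsh.2.2]
    rw [heq]
    ext <;> simp
  filter_upwards [Metric.ball_mem_nhds x hε] with y hy
  have hc := Metric.isOpen_ball.is_const_of_fderiv_eq_zero (𝕜 := ℝ) (convex_ball x ε).isPreconnected
    (fun z hz => (hder z hz).differentiableAt.differentiableWithinAt)
    (fun z hz => (hder z hz).fderiv) hy (Metric.mem_ball_self hε)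
  simp only [hinv, add_sub_cancel_left] at hc
  have : y + h = Φ.symm (gradMap u y) := by rw [← hc]; simp
  rw [this]
  exact Φ.right_inv (hball y hy).2.1

/-- If `∇u` agrees at two points differing by `h ≠ 0`, then `∇u(x + h) = ∇u(x)` on the whole of `Dh`,
so `u(x + h) - u(x)` is constant, which `not_const_shift` excludes. -/
lemma grad_inj (hs : Sch κ w L u) : InjOn (gradMap u) (Pk κ w L) := by
  intro p hp q hq hpq
  by_contra hne
  have hh : q - p ≠ 0 := fun h => hne (sub_eq_zero.1 h).symm
  have hpD : p ∈ Dh κ w L (q - p) := ⟨hp, by simpa using hq⟩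
  have hall : ∀ x ∈ Dh κ w L (q - p), gradMap u (x + (q - p)) = gradMap u x := by
    refine clopen_all (convex_Dh κ w L (q - p)).isPreconnected _
      (fun x hx he => hs.grad_shift_open hx he) ?_ hpD (by simpa using hpq.symm)
    intro x hx hn
    have c1 : ContinuousAt (gradMap u) x := (hs.strict_E hx.1).continuousAt
    have c2 : ContinuousAt (fun y => gradMap u (y + (q - p))) x :=
      ContinuousAt.comp (f := fun y => y + (q - p)) (g := gradMap u)
        (hs.strict_E hx.2).continuousAt (by fun_prop)
    have := (c2.sub c1).eventually_ne (sub_ne_zero.2 hn)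
    filter_upwards [this] with y hy using sub_ne_zero.1 hy
  refine hs.not_const_shift hh hpD (m := u (p + (q - p)) - u p) (fun x hx => ?_)
  refine const_of_hasPd_zero (F := fun x => u (x + (q - p)) - u x) (isOpen_Dh κ w L (q - p))
    (convex_Dh κ w L (q - p)).isPreconnected (fun y hy => ?_) hx hpD
  refine ((HasPd.shift (hs.hasPd hy.2)).sub (hs.hasPd hy.1)).congr_vals ?_ ?_
  · exact sub_eq_zero.2 (congrArg Prod.fst (hall y hy))
  · exact sub_eq_zero.2 (congrArg Prod.snd (hall y hy))

end Sch

/-! ### Finite Hessian energy where the gradient is bounded -/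

lemma symL_det (a b c : ℝ) : (symL a b c).det = a * c - b ^ 2 := by
  rw [ContinuousLinearMap.det, ← LinearMap.det_toMatrix (Module.Basis.finTwoProd ℝ), Matrix.det_fin_two]
  simp [LinearMap.toMatrix_apply]
  ring

/-- The sum of the absolute values of the second derivatives. -/
def hessSum (u : ℝ × ℝ → ℝ) (x : ℝ × ℝ) : ℝ :=
  |pdx (pdx u) x| + |pdy (pdx u) x| + |pdy (pdy u) x|

lemma hessSum_nonneg (u : ℝ × ℝ → ℝ) (x : ℝ × ℝ) : 0 ≤ hessSum u x := by
  unfold hessSum; positivity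

/-- The points of `P` whose gradient is within `1` of `A`. -/
def nearSet (κ w L : ℝ) (u : ℝ × ℝ → ℝ) (A : ℝ × ℝ) : Set (ℝ × ℝ) :=
  {x | x ∈ Pk κ w L ∧ ‖gradMap u x - A‖ < 1}

namespace Sch
variable {κ w L : ℝ} {u : ℝ × ℝ → ℝ}

/-- For bounded gradient the square of the Hessian is controlled by its determinant, because the
translator equation bounds its trace against a positive definite form. -/
lemma hessSum_sq_le (hs : Sch κ w L u) {x} (hx : x ∈ Pk κ w L) :
    hessSum u x ^ 2 ≤ 3 * (1 + pdx u x ^ 2 + pdy u x ^ 2) ^ 2 + 6 * (1 + pdx u x ^ 2 + pdy u x ^ 2)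
      * |pdx (pdx u) x * pdy (pdy u) x - pdy (pdx u) x ^ 2| := by
  have h := hs.tr.2 x hx
  unfold hessSum
  set p := pdx u x
  set q := pdy u x
  set r := pdx (pdx u) x
  set s := pdy (pdx u) x
  set t := pdy (pdy u) x
  have e1 : (|r| + |s| + |t|) ^ 2 ≤ 3 * (r ^ 2 + s ^ 2 + t ^ 2) := by
    rw [← sq_abs r, ← sq_abs s, ← sq_abs t]
    nlinarith [sq_nonneg (|r| - |s|), sq_nonneg (|r| - |t|), sq_nonneg (|s| - |t|)]
  have e2 : (1 + p ^ 2 + q ^ 2) ^ 2 - 2 * (1 + p ^ 2 + q ^ 2) * (r * t - s ^ 2) =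
      r ^ 2 + 2 * s ^ 2 + t ^ 2 + 2 * ((r * q - s * p) ^ 2 + (s * q - t * p) ^ 2)
        + (q ^ 2 * r - 2 * p * q * s + p ^ 2 * t) ^ 2 := by
    linear_combination (-((1 + q ^ 2) * r - 2 * p * q * s + (1 + p ^ 2) * t
      + (1 + p ^ 2 + q ^ 2))) * h
  have e3 := neg_abs_le (r * t - s ^ 2)
  have e4 : 0 < 1 + p ^ 2 + q ^ 2 := by positivity
  nlinarith [sq_nonneg s, sq_nonneg (r * q - s * p), sq_nonneg (s * q - t * p),
    sq_nonneg (q ^ 2 * r - 2 * p * q * s + p ^ 2 * t), mul_le_mul_of_nonneg_left e3 e4.le]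

lemma gradMap_cont (hs : Sch κ w L u) : ContinuousOn (gradMap u) (Pk κ w L) := fun _ hx =>
  (hs.strict_E hx).continuousAt.continuousWithinAt

lemma isOpen_nearSet (hs : Sch κ w L u) (A : ℝ × ℝ) : IsOpen (nearSet κ w L u A) := by
  have := (hs.gradMap_cont.sub (continuousOn_const (c := A))).norm.isOpen_inter_preimage
    (isOpen_Pk κ w L) (isOpen_Iio (a := (1:ℝ)))
  exact this

lemma gradMap_bound {A x : ℝ × ℝ} (hx : x ∈ nearSet κ w L u A) :
    |pdx u x| ≤ ‖A‖ + 1 ∧ |pdy u x| ≤ ‖A‖ + 1 := by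
  have h1 : ‖gradMap u x‖ ≤ ‖A‖ + 1 := by
    have := norm_add_le (gradMap u x - A) A
    rw [sub_add_cancel] at this
    linarith [hx.2]
  exact ⟨(norm_fst_le (gradMap u x)).trans h1, (norm_snd_le (gradMap u x)).trans h1⟩

/-- The Hessian is square integrable over the set where the gradient is close to a given vector:
its square is controlled by the determinant, whose integral is the area of the image. -/
lemma lintegral_hess_lt (hs : Sch κ w L u) (A : ℝ × ℝ) :
    ∫⁻ x in nearSet κ w L u A, ENNReal.ofReal (hessSum u x ^ 2) < ⊤ := by
  set U := nearSet κ w L u A with hU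
  have hUm : MeasurableSet U := (hs.isOpen_nearSet A).measurableSet
  have hUP : U ⊆ Pk κ w L := fun x hx => hx.1
  set K : ℝ := 1 + 2 * (‖A‖ + 1) ^ 2 with hK
  have hK0 : 0 ≤ K := by positivity
  have hle : ∀ x ∈ U, ENNReal.ofReal (hessSum u x ^ 2) ≤ ENNReal.ofReal (3 * K ^ 2) +
      ENNReal.ofReal (6 * K) * ENNReal.ofReal
        |(symL (pdx (pdx u) x) (pdy (pdx u) x) (pdy (pdy u) x)).det| := by
    intro x hx
    rw [symL_det, ← ENNReal.ofReal_mul (by positivity), ← ENNReal.ofReal_add (by positivity)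
      (by positivity)]
    refine ENNReal.ofReal_le_ofReal ((hs.hessSum_sq_le (hUP hx)).trans ?_)
    obtain ⟨b1, b2⟩ := gradMap_bound hx
    have hW : 1 + pdx u x ^ 2 + pdy u x ^ 2 ≤ K := by
      rw [← sq_abs (pdx u x), ← sq_abs (pdy u x)]
      have := pow_le_pow_left₀ (abs_nonneg _) b1 2
      have := pow_le_pow_left₀ (abs_nonneg _) b2 2
      linarith
    have hW0 : 0 ≤ 1 + pdx u x ^ 2 + pdy u x ^ 2 := by positivity
    gcongr
  have hdet : ∫⁻ x in U, ENNReal.ofReal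
        |(symL (pdx (pdx u) x) (pdy (pdx u) x) (pdy (pdy u) x)).det| < ⊤ := by
    rw [lintegral_abs_det_fderiv_eq_addHaar_image volume hUm (f := gradMap u)
      (fun x hx => (hs.strict_G (hUP hx)).hasFDerivAt.hasFDerivWithinAt) (hs.grad_inj.mono hUP)]
    refine lt_of_le_of_lt (measure_mono ?_) (measure_ball_lt_top (x := A) (r := 1))
    rintro _ ⟨x, hx, rfl⟩
    rw [mem_ball_iff_norm]; exact hx.2
  have hvol : volume U < ⊤ := by
    refine lt_of_le_of_lt (measure_mono ?_)
      (measure_closedBall_lt_top (x := (0 : ℝ × ℝ)) (r := w + |κ| * w + L))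
    intro x hx
    rw [mem_closedBall_zero_iff]; exact norm_Pk_le (hUP hx)
  calc ∫⁻ x in U, ENNReal.ofReal (hessSum u x ^ 2)
      ≤ ∫⁻ x in U, (ENNReal.ofReal (3 * K ^ 2) + ENNReal.ofReal (6 * K) * ENNReal.ofReal
        |(symL (pdx (pdx u) x) (pdy (pdx u) x) (pdy (pdy u) x)).det|) :=
        setLIntegral_mono' hUm hle
    _ = ENNReal.ofReal (3 * K ^ 2) * volume U + ENNReal.ofReal (6 * K) * ∫⁻ x in U, ENNReal.ofReal
        |(symL (pdx (pdx u) x) (pdy (pdx u) x) (pdy (pdy u) x)).det| := by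
        rw [lintegral_add_left measurable_const, setLIntegral_const,
          lintegral_const_mul' _ _ ENNReal.ofReal_ne_top]
    _ < ⊤ := ENNReal.add_lt_top.2 ⟨ENNReal.mul_lt_top ENNReal.ofReal_lt_top hvol,
        ENNReal.mul_lt_top ENNReal.ofReal_lt_top hdet⟩

lemma hessSum_cont (hs : Sch κ w L u) : ContinuousOn (hessSum u) (Pk κ w L) :=
  ((hs.smooth_xx.continuousOn.abs).add hs.smooth_xy.continuousOn.abs).add
    hs.smooth_yy.continuousOn.abs

end Sch

/-! ### Lower bounds along arcs leaving the parallelogram -/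

/-- First exit of a curve from an open set. -/
lemma exit_first {γ : ℝ → ℝ × ℝ} (hγ : Continuous γ) {U : Set (ℝ × ℝ)} (hU : IsOpen U) {a b : ℝ}
    (hab : a ≤ b) (ha : γ a ∈ U) (hb : γ b ∉ U) :
    ∃ s ∈ Ioc a b, (∀ θ ∈ Ico a s, γ θ ∈ U) ∧ γ s ∉ U := by
  set Z : Set ℝ := Icc a b ∩ γ ⁻¹' Uᶜ with hZ
  have hZc : IsCompact Z := isCompact_Icc.inter_right (hU.isClosed_compl.preimage hγ)
  have hZn : Z.Nonempty := ⟨b, ⟨hab, le_rfl⟩, hb⟩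
  have hm : sInf Z ∈ Z := hZc.sInf_mem hZn
  refine ⟨sInf Z, ⟨lt_of_le_of_ne hm.1.1 ?_, hm.1.2⟩, ?_, hm.2⟩
  · intro h
    exact hm.2 (h ▸ ha)
  · intro θ hθ
    by_contra hn
    have : sInf Z ≤ θ := csInf_le hZc.bddBelow ⟨⟨hθ.1, hθ.2.le.trans hm.1.2⟩, hn⟩
    linarith [hθ.2]

lemma symL_norm_le (a b c r : ℝ) (v : ℝ × ℝ) (hv : ‖v‖ ≤ r) :
    ‖symL a b c v‖ ≤ r * (|a| + |b| + |c|) := by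
  have h1 : |v.1| ≤ r := (norm_fst_le v).trans hv
  have h2 : |v.2| ≤ r := (norm_snd_le v).trans hv
  rw [symL_apply, Prod.norm_def]
  have ha := abs_nonneg a
  have hb := abs_nonneg b
  have hc := abs_nonneg c
  refine max_le ?_ ?_
  · refine (abs_add_le _ _).trans ?_
    rw [abs_mul, abs_mul]
    nlinarith [mul_le_mul_of_nonneg_left h1 ha, mul_le_mul_of_nonneg_left h2 hb, abs_nonneg v.1]
  · refine (abs_add_le _ _).trans ?_
    rw [abs_mul, abs_mul]
    nlinarith [mul_le_mul_of_nonneg_left h1 hb, mul_le_mul_of_nonneg_left h2 hc, abs_nonneg v.1]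

namespace Sch
variable {κ w L : ℝ} {u : ℝ × ℝ → ℝ}

/-- A finite arc along which the gradient stays bounded cannot end at an infinite boundary value. -/
lemma no_infinite_end {γ γ' : ℝ → ℝ × ℝ} {r M : ℝ} (hs : Sch κ w L u)
    (hγ : ∀ θ, HasDerivAt γ (γ' θ) θ) (hγ' : ∀ θ, ‖γ' θ‖ ≤ r) {a s : ℝ} (has : a < s)
    (hP : ∀ θ ∈ Ico a s, γ θ ∈ Pk κ w L)
    (hM : ∀ θ ∈ Ico a s, |pdx u (γ θ)| ≤ M ∧ |pdy u (γ θ)| ≤ M)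
    (hend : Tendsto u (𝓝[Pk κ w L] (γ s)) atTop ∨ Tendsto u (𝓝[Pk κ w L] (γ s)) atBot) : False := by
  have hder : ∀ θ ∈ Ico a s, HasDerivWithinAt (fun θ => u (γ θ))
      ((γ' θ).1 * pdx u (γ θ) + (γ' θ).2 * pdy u (γ θ)) (Ico a s) θ := by
    intro θ hθ
    have h1 : HasFDerivAt u (pdx u (γ θ) • ContinuousLinearMap.fst ℝ ℝ ℝ
      + pdy u (γ θ) • ContinuousLinearMap.snd ℝ ℝ ℝ) (γ θ) := hs.hasPd (hP θ hθ)
    have h2 := h1.comp_hasDerivAt θ (hγ θ)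
    refine (h2.congr_deriv ?_).hasDerivWithinAt
    simp; ring
  have hbd : ∀ θ ∈ Ico a s, ‖(γ' θ).1 * pdx u (γ θ) + (γ' θ).2 * pdy u (γ θ)‖ ≤ 2 * (r * M) := by
    intro θ hθ
    obtain ⟨m1, m2⟩ := hM θ hθ
    have h1 : |(γ' θ).1| ≤ r := (norm_fst_le _).trans (hγ' θ)
    have h2 : |(γ' θ).2| ≤ r := (norm_snd_le _).trans (hγ' θ)
    refine (abs_add_le _ _).trans ?_
    rw [abs_mul, abs_mul]
    have := mul_le_mul h1 m1 (abs_nonneg _) ((abs_nonneg _).trans h1)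
    have := mul_le_mul h2 m2 (abs_nonneg _) ((abs_nonneg _).trans h1)
    linarith
  have hC0 : 0 ≤ 2 * (r * M) := (norm_nonneg _).trans (hbd a ⟨le_rfl, has⟩)
  have hlip : ∀ θ ∈ Ico a s, |u (γ θ) - u (γ a)| ≤ 2 * (r * M) * (s - a) := by
    intro θ hθ
    have := Convex.norm_image_sub_le_of_norm_hasDerivWithin_le hder hbd (convex_Ico a s)
      (left_mem_Ico.2 has) hθ
    refine this.trans ?_
    rw [Real.norm_eq_abs, abs_of_nonneg (by linarith [hθ.1])]
    have := hθ.2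
    gcongr
  have hin : ∀ᶠ θ in 𝓝[<] s, θ ∈ Ico a s := by
    filter_upwards [Ioo_mem_nhdsLT has] with θ hθ using Ioo_subset_Ico_self hθ
  have htend : Tendsto γ (𝓝[<] s) (𝓝[Pk κ w L] (γ s)) := by
    refine tendsto_nhdsWithin_iff.2 ⟨(hγ s).continuousAt.tendsto.mono_left nhdsWithin_le_nhds, ?_⟩
    filter_upwards [hin] with θ hθ using hP θ hθ
  rcases hend with h | h
  · obtain ⟨θ, h1, h2⟩ := (((h.comp htend).eventually_gt_atTop
      (u (γ a) + 2 * (r * M) * (s - a))).and hin).exists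
    have := (abs_le.1 (hlip θ h2)).2
    simp only [Function.comp] at h1
    linarith
  · obtain ⟨θ, h1, h2⟩ := (((h.comp htend).eventually_lt_atBot
      (u (γ a) - 2 * (r * M) * (s - a))).and hin).exists
    have := (abs_le.1 (hlip θ h2)).1
    simp only [Function.comp] at h1
    linarith

/-- Let an arc of speed at most `r` start at a point of `P` whose gradient is within `1/2` of `A`, and
leave `P`, meeting its boundary only where `u` is infinite. Then `r * hessSum` has integral at least
`1/2` over the part of the arc in `nearSet`: by `no_infinite_end` the arc leaves `nearSet` before it
leaves `P`, so the gradient moves by at least `1/2`. -/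
lemma arc_lower {γ γ' : ℝ → ℝ × ℝ} {r : ℝ} (hs : Sch κ w L u) (hr : 0 ≤ r)
    (hγ : ∀ θ, HasDerivAt γ (γ' θ) θ) (hγ' : ∀ θ, ‖γ' θ‖ ≤ r) (hγc : Continuous γ')
    (hside : ∀ θ, γ θ ∈ closure (Pk κ w L) → γ θ ∉ Pk κ w L →
      Tendsto u (𝓝[Pk κ w L] (γ θ)) atTop ∨ Tendsto u (𝓝[Pk κ w L] (γ θ)) atBot)
    {a b : ℝ} {A : ℝ × ℝ} (hab : a ≤ b) (haP : γ a ∈ Pk κ w L) (haA : ‖gradMap u (γ a) - A‖ < 1 / 2)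
    (hb : γ b ∉ Pk κ w L) :
    ENNReal.ofReal (1 / 2) ≤ ∫⁻ θ in Ioo a b, (nearSet κ w L u A).indicator
      (fun x => ENNReal.ofReal (r * hessSum u x)) (γ θ) := by
  have hγcont : Continuous γ := continuous_iff_continuousAt.2 fun θ => (hγ θ).continuousAt
  obtain ⟨s, hsab, hin, hout⟩ := exit_first hγcont (hs.isOpen_nearSet A) hab
    ⟨haP, by linarith⟩ (fun h => hb h.1)
  have hsP : γ s ∈ Pk κ w L := by
    by_contra hn
    refine hs.no_infinite_end hγ hγ' (M := ‖A‖ + 1) hsab.1 (fun θ hθ => (hin θ hθ).1)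
      (fun θ hθ => gradMap_bound (hin θ hθ)) (hside s ?_ hn)
    refine mem_closure_of_tendsto ((hγcont.tendsto s).mono_left
      (nhdsWithin_le_nhds (s := Iio s))) ?_
    filter_upwards [Ioo_mem_nhdsLT hsab.1] with θ hθ using (hin θ (Ioo_subset_Ico_self hθ)).1
  have hPs : ∀ θ ∈ Icc a s, γ θ ∈ Pk κ w L := by
    intro θ hθ
    rcases eq_or_lt_of_le hθ.2 with h | h
    · rw [h]; exact hsP
    · exact (hin θ ⟨hθ.1, h⟩).1
  have hge : 1 ≤ ‖gradMap u (γ s) - A‖ := by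
    by_contra! h
    exact hout ⟨hsP, h⟩
  have hdist : 1 / 2 ≤ ‖gradMap u (γ s) - gradMap u (γ a)‖ := by
    have := norm_sub_le_norm_sub_add_norm_sub (gradMap u (γ s)) (gradMap u (γ a)) A
    linarith
  set f' : ℝ → ℝ × ℝ := fun θ =>
    symL (pdx (pdx u) (γ θ)) (pdy (pdx u) (γ θ)) (pdy (pdy u) (γ θ)) (γ' θ) with hf'
  have hmaps : MapsTo γ (Icc a s) (Pk κ w L) := hPs
  have cr := hs.smooth_xx.continuousOn.comp hγcont.continuousOn hmaps
  have cs := hs.smooth_xy.continuousOn.comp hγcont.continuousOn hmaps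
  have ct := hs.smooth_yy.continuousOn.comp hγcont.continuousOn hmaps
  have hf'c : ContinuousOn f' (Icc a s) := by
    simp only [hf', symL_apply]
    have c1 : ContinuousOn (fun θ => (γ' θ).1) (Icc a s) := (by fun_prop)
    have c2 : ContinuousOn (fun θ => (γ' θ).2) (Icc a s) := (by fun_prop)
    exact ((cr.mul c1).add (cs.mul c2)).prodMk ((cs.mul c1).add (ct.mul c2))
  have hQc : ContinuousOn (fun θ => r * hessSum u (γ θ)) (Icc a s) :=
    continuousOn_const.mul (hs.hessSum_cont.comp hγcont.continuousOn hmaps)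
  have hus : uIcc a s = Icc a s := uIcc_of_le hsab.1.le
  have hftc := intervalIntegral.integral_eq_sub_of_hasDerivAt (f := fun θ => gradMap u (γ θ))
    (f' := f') (a := a) (b := s) (fun θ hθ => by
      rw [hus] at hθ
      exact (hs.strict_G (hPs θ hθ)).hasFDerivAt.comp_hasDerivAt θ (hγ θ))
    (by apply ContinuousOn.intervalIntegrable; rw [hus]; exact hf'c)
  have hQi : IntervalIntegrable (fun θ => r * hessSum u (γ θ)) volume a s := by
    apply ContinuousOn.intervalIntegrable; rw [hus]; exact hQc
  have hle : 1 / 2 ≤ ∫ θ in a..s, r * hessSum u (γ θ) := by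
    rw [← hftc] at hdist
    exact hdist.trans (intervalIntegral.norm_integral_le_of_norm_le hsab.1.le
      (Eventually.of_forall fun θ _ => symL_norm_le _ _ _ _ _ (hγ' θ)) hQi)
  rw [intervalIntegral.integral_of_le hsab.1.le] at hle
  have hQi' : IntegrableOn (fun θ => r * hessSum u (γ θ)) (Ioc a s) :=
    (intervalIntegrable_iff_integrableOn_Ioc_of_le hsab.1.le).1 hQi
  calc ENNReal.ofReal (1 / 2) ≤ ENNReal.ofReal (∫ θ in Ioc a s, r * hessSum u (γ θ)) :=
        ENNReal.ofReal_le_ofReal hle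
    _ = ∫⁻ θ in Ioc a s, ENNReal.ofReal (r * hessSum u (γ θ)) :=
        ofReal_integral_eq_lintegral_ofReal hQi'
          (Eventually.of_forall fun θ => mul_nonneg hr (hessSum_nonneg u _))
    _ = ∫⁻ θ in Ioo a s, ENNReal.ofReal (r * hessSum u (γ θ)) :=
        setLIntegral_congr Ioo_ae_eq_Ioc.symm
    _ ≤ ∫⁻ θ in Ioo a s, (nearSet κ w L u A).indicator
      (fun x => ENNReal.ofReal (r * hessSum u x)) (γ θ) := by
        refine setLIntegral_mono' measurableSet_Ioo fun θ hθ => ?_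
        rw [indicator_of_mem (hin θ (Ioo_subset_Ico_self hθ))]
    _ ≤ _ := lintegral_mono_set (Ioo_subset_Ioo le_rfl hsab.2)

end Sch

/-! ### Lower bounds on circles and divergence of the energy -/

/-- The circle of radius `r` about `e`. -/
def circ (e : ℝ × ℝ) (r θ : ℝ) : ℝ × ℝ := (e.1 + r * cos θ, e.2 + r * sin θ)

lemma hasDerivAt_circ (e : ℝ × ℝ) (r θ : ℝ) :
    HasDerivAt (circ e r) (-(r * sin θ), r * cos θ) θ := by
  have h1 := ((hasDerivAt_cos θ).const_mul r).const_add e.1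
  have h2 := ((hasDerivAt_sin θ).const_mul r).const_add e.2
  exact (h1.prodMk h2).congr_deriv (by simp)

lemma norm_circ_deriv {r : ℝ} (hr : 0 ≤ r) (θ : ℝ) : ‖((-(r * sin θ), r * cos θ) : ℝ × ℝ)‖ ≤ r := by
  rw [Prod.norm_def]
  refine max_le ?_ ?_
  · simp only [norm_neg, norm_mul, Real.norm_eq_abs, abs_of_nonneg hr]
    nlinarith [abs_sin_le_one θ]
  · simp only [norm_mul, Real.norm_eq_abs, abs_of_nonneg hr]
    nlinarith [abs_cos_le_one θ]

lemma setLIntegral_neg_symm (F : ℝ → ENNReal) :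
    ∫⁻ θ in Ioo (-π) π, F (-θ) = ∫⁻ θ in Ioo (-π) π, F θ := by
  have h := (Measure.measurePreserving_neg (volume : Measure ℝ)).setLIntegral_comp_preimage_emb
    (MeasurableEquiv.neg ℝ).measurableEmbedding F (Ioo (-π) π)
  have h2 : (Neg.neg : ℝ → ℝ) ⁻¹' Ioo (-π) π = Ioo (-π) π := by
    ext x; simp only [mem_preimage, mem_Ioo]; constructor <;> rintro ⟨h1, h2⟩ <;> constructor <;> linarith
  rw [h2] at h
  exact h

namespace Sch
variable {κ w L : ℝ} {u : ℝ × ℝ → ℝ}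

/-- `arc_lower` on a circle about a point outside `P`. The circle leaves `P`, on one side or the other
of the starting angle. -/
lemma circle_lower (hs : Sch κ w L u) {e A : ℝ × ℝ} {r : ℝ} (hr : 0 ≤ r) (he : e ∉ Pk κ w L)
    (hside : ∀ θ, circ e r θ ∈ closure (Pk κ w L) → circ e r θ ∉ Pk κ w L →
      Tendsto u (𝓝[Pk κ w L] (circ e r θ)) atTop ∨ Tendsto u (𝓝[Pk κ w L] (circ e r θ)) atBot)
    {θ₀ : ℝ} (hθ₀ : θ₀ ∈ Icc (-π) π) (h0P : circ e r θ₀ ∈ Pk κ w L)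
    (h0A : ‖gradMap u (circ e r θ₀) - A‖ < 1 / 2) :
    ENNReal.ofReal (1 / 2) ≤ ∫⁻ θ in Ioo (-π) π, (nearSet κ w L u A).indicator
      (fun x => ENNReal.ofReal (r * hessSum u x)) (circ e r θ) := by
  have hπ := pi_pos
  -- the centre is the midpoint of two antipodal points, so the circle leaves the convex set
  obtain ⟨θ₁, hθ₁, h1⟩ : ∃ θ₁ ∈ Icc (-π) π, circ e r θ₁ ∉ Pk κ w L := by
    by_contra! h
    have a := h 0 ⟨by linarith, by linarith⟩
    have b := h π ⟨by linarith, le_rfl⟩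
    apply he
    have := (convex_Pk κ w L) a b (a := 1 / 2) (b := 1 / 2) (by norm_num) (by norm_num) (by norm_num)
    convert this using 1
    ext <;> simp [circ] <;> ring
  rcases le_total θ₀ θ₁ with hle | hle
  · refine (hs.arc_lower hr (hasDerivAt_circ e r) (norm_circ_deriv hr) (by fun_prop) hside hle h0P
      h0A h1).trans (lintegral_mono_set (Ioo_subset_Ioo hθ₀.1 hθ₁.2))
  · rw [← setLIntegral_neg_symm]
    refine (hs.arc_lower (γ := fun θ => circ e r (-θ)) (γ' := fun θ => (-(r * sin θ), -(r * cos θ)))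
      hr (fun θ => ?_) (fun θ => ?_) (by fun_prop) (fun θ => hside (-θ)) (neg_le_neg hle)
      (by simpa using h0P) (by simpa using h0A) (by simpa using h1)).trans 
      (lintegral_mono_set (Ioo_subset_Ioo (by linarith [hθ₀.2]) (by linarith [hθ₁.1])))
    · have := (hasDerivAt_circ e r (-θ)).scomp θ (hasDerivAt_neg θ)
      exact this.congr_deriv (by simp)
    · have := norm_circ_deriv hr θ
      rw [Prod.norm_def] at this ⊢
      simpa using this

/-- Cauchy–Schwarz on the circle of radius `r`. -/
lemma circle_energy (hs : Sch κ w L u) {e A : ℝ × ℝ} {r : ℝ} (hr : 0 < r)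
    (h : ENNReal.ofReal (1 / 2) ≤ ∫⁻ θ in Ioo (-π) π, (nearSet κ w L u A).indicator
      (fun x => ENNReal.ofReal (r * hessSum u x)) (circ e r θ)) :
    ENNReal.ofReal ((8 * π)⁻¹ * r⁻¹) ≤ ∫⁻ θ in Ioo (-π) π, ENNReal.ofReal r *
      (nearSet κ w L u A).indicator (fun x => ENNReal.ofReal (hessSum u x ^ 2)) (circ e r θ) := by
  have hπ := pi_pos
  set I := ∫⁻ θ in Ioo (-π) π,
      (nearSet κ w L u A).indicator (fun x => ENNReal.ofReal (hessSum u x ^ 2)) (circ e r θ) with hI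
  have key : ENNReal.ofReal (1 / 2) ≤ ENNReal.ofReal (2 * π * r ^ 2) * I + ENNReal.ofReal (1 / 4) := by
    refine h.trans ?_
    calc _ ≤ ∫⁻ θ in Ioo (-π) π, (ENNReal.ofReal (2 * π * r ^ 2) * (nearSet κ w L u A).indicator
          (fun x => ENNReal.ofReal (hessSum u x ^ 2)) (circ e r θ) + ENNReal.ofReal ((8 * π)⁻¹)) := by
          refine lintegral_mono fun θ => ?_
          by_cases hx : circ e r θ ∈ nearSet κ w L u A
          · simp only [indicator_of_mem hx]
            rw [← ENNReal.ofReal_mul (by positivity), ← ENNReal.ofReal_add (by positivity) (by positivity)]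
            refine ENNReal.ofReal_le_ofReal ?_
            set q := hessSum u (circ e r θ)
            have : 2 * π * r ^ 2 * q ^ 2 + (8 * π)⁻¹ - r * q
                = (8 * π)⁻¹ * (4 * π * (r * q) - 1) ^ 2 := by field_simp; ring
            have h2 : 0 ≤ (8 * π)⁻¹ * (4 * π * (r * q) - 1) ^ 2 := by positivity
            linarith
          · simp only [indicator_of_notMem hx]; exact zero_le
      _ = ENNReal.ofReal (2 * π * r ^ 2) * I + ENNReal.ofReal (1 / 4) := by
          rw [lintegral_add_right _ measurable_const, setLIntegral_const,
            lintegral_const_mul' _ _ ENNReal.ofReal_ne_top, Real.volume_Ioo,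
            ← ENNReal.ofReal_mul (by positivity)]
          congr 2
          field_simp; ring
  have key2 : ENNReal.ofReal (1 / 4) ≤ ENNReal.ofReal (2 * π * r ^ 2) * I := by
    rw [show (1 / 2 : ℝ) = 1 / 4 + 1 / 4 by norm_num, ENNReal.ofReal_add (by norm_num) (by norm_num)]
      at key
    exact (ENNReal.add_le_add_iff_right ENNReal.ofReal_ne_top).1 key
  rw [lintegral_const_mul' _ _ ENNReal.ofReal_ne_top, ← hI]
  calc ENNReal.ofReal ((8 * π)⁻¹ * r⁻¹)
      = ENNReal.ofReal ((2 * π * r)⁻¹) * ENNReal.ofReal (1 / 4) := by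
        rw [← ENNReal.ofReal_mul (by positivity)]; congr 1; field_simp; ring
    _ ≤ ENNReal.ofReal ((2 * π * r)⁻¹) * (ENNReal.ofReal (2 * π * r ^ 2) * I) := by gcongr
    _ = ENNReal.ofReal r * I := by
        rw [← mul_assoc, ← ENNReal.ofReal_mul (by positivity)]
        congr 2; field_simp

lemma measurable_ind (hs : Sch κ w L u) (A : ℝ × ℝ) : Measurable
    ((nearSet κ w L u A).indicator (fun x => ENNReal.ofReal (hessSum u x ^ 2))) := by
  classical
  have hUm : MeasurableSet (nearSet κ w L u A) := (hs.isOpen_nearSet A).measurableSet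
  have h1 : ContinuousOn (fun x => ENNReal.ofReal (hessSum u x ^ 2)) (nearSet κ w L u A) :=
    ENNReal.continuous_ofReal.comp_continuousOn
      ((hs.hessSum_cont.pow 2).mono fun x hx => hx.1)
  have := h1.measurable_piecewise (g := fun _ => (0 : ENNReal)) continuousOn_const hUm
  rw [← piecewise_eq_indicator]
  exact this

/-- The lower bound of `circle_lower` cannot hold on all small circles about a point: in polar
coordinates it would bound the finite energy on `nearSet` below by a multiple of `∫ dr / r = ∞`. -/
lemma energy_infinite (hs : Sch κ w L u) {e A : ℝ × ℝ} {d : ℝ} (hd : 0 < d)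
    (h : ∀ r ∈ Ioo 0 d, ENNReal.ofReal (1 / 2) ≤ ∫⁻ θ in Ioo (-π) π,
      (nearSet κ w L u A).indicator (fun x => ENNReal.ofReal (r * hessSum u x)) (circ e r θ)) :
    False := by
  have hπ := pi_pos
  have hfin := hs.lintegral_hess_lt A
  have hUm : MeasurableSet (nearSet κ w L u A) := (hs.isOpen_nearSet A).measurableSet
  rw [← lintegral_indicator hUm] at hfin
  set F := (nearSet κ w L u A).indicator (fun x => ENNReal.ofReal (hessSum u x ^ 2)) with hF
  have hFm : Measurable F := hs.measurable_ind A
  rw [← lintegral_add_left_eq_self _ e, ← lintegral_comp_polarCoord_symm, polarCoord_target,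
    Measure.volume_eq_prod, ← Measure.prod_restrict] at hfin
  have hcirc : ∀ p : ℝ × ℝ, e + polarCoord.symm p = circ e p.1 p.2 := by
    intro p; ext <;> simp [circ, polarCoord]
  simp only [hcirc, smul_eq_mul] at hfin
  have hm : Measurable (fun p : ℝ × ℝ => ENNReal.ofReal p.1 * F (circ e p.1 p.2)) := by
    have hc : Measurable (fun p : ℝ × ℝ => circ e p.1 p.2) := by
      unfold circ; fun_prop
    exact (ENNReal.measurable_ofReal.comp measurable_fst).mul (hFm.comp hc)
  rw [lintegral_prod _ hm.aemeasurable] at hfin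
  have hlow : ∫⁻ r in Ioo 0 d, ENNReal.ofReal ((8 * π)⁻¹ * r⁻¹) < ⊤ := by
    refine lt_of_le_of_lt ?_ hfin
    refine (setLIntegral_mono' measurableSet_Ioo fun r hr => hs.circle_energy hr.1 (h r hr)).trans ?_
    exact lintegral_mono_set Ioo_subset_Ioi_self
  have h_integ : IntegrableOn (fun r : ℝ => (8 * π)⁻¹ * r⁻¹) (Ioo 0 d) := by
    refine ⟨(by fun_prop : Measurable fun r : ℝ => (8 * π)⁻¹ * r⁻¹).aestronglyMeasurable, ?_⟩
    rw [hasFiniteIntegral_iff_ofReal]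
    · exact hlow
    · refine (ae_restrict_iff' measurableSet_Ioo).2 (Eventually.of_forall fun r hr => ?_)
      have := hr.1
      simp only [Pi.zero_apply]; positivity
  have hint2 : IntervalIntegrable (fun r : ℝ => r⁻¹) volume 0 d := by
    rw [intervalIntegrable_iff_integrableOn_Ioo_of_le hd.le]
    have := h_integ.const_mul (8 * π)
    refine this.congr (Eventually.of_forall fun r => ?_)
    simp only; rw [← mul_assoc, mul_inv_cancel₀ (by positivity), one_mul]
  rw [intervalIntegrable_inv_iff] at hint2
  rcases hint2 with h | h
  · exact hd.ne h
  · exact h left_mem_uIcc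

end Sch

/-! ### Surjectivity of the gradient map -/

namespace Sch
variable {κ w L : ℝ} {u : ℝ × ℝ → ℝ}

lemma closure_Pk_subset : closure (Pk κ w L) ⊆
    {p | 0 ≤ p.2 ∧ p.2 ≤ w ∧ κ * p.2 ≤ p.1 ∧ p.1 ≤ L + κ * p.2} := by
  apply closure_minimal
  · rintro p ⟨h1, h2, h3, h4⟩
    exact ⟨h1.le, h2.le, h3.le, h4.le⟩
  · have h1 : IsClosed {p : ℝ × ℝ | 0 ≤ p.2} := isClosed_le (by fun_prop) (by fun_prop)
    have h2 : IsClosed {p : ℝ × ℝ | p.2 ≤ w} := isClosed_le (by fun_prop) (by fun_prop)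
    have h3 : IsClosed {p : ℝ × ℝ | κ * p.2 ≤ p.1} := isClosed_le (by fun_prop) (by fun_prop)
    have h4 : IsClosed {p : ℝ × ℝ | p.1 ≤ L + κ * p.2} := isClosed_le (by fun_prop) (by fun_prop)
    exact h1.inter (h2.inter (h3.inter h4))

/-- The four corners. -/
def corners (κ w L : ℝ) : Set (ℝ × ℝ) := {(0, 0), (L, 0), (κ * w, w), (L + κ * w, w)}

/-- At a boundary point other than a corner, `u` tends to `+∞` or to `-∞`. -/
lemma side_limit (hs : Sch κ w L u) {b : ℝ × ℝ} (hb : b ∈ closure (Pk κ w L)) (hbP : b ∉ Pk κ w L)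
    (hc : b ∉ corners κ w L) :
    Tendsto u (𝓝[Pk κ w L] b) atTop ∨ Tendsto u (𝓝[Pk κ w L] b) atBot := by
  obtain ⟨h1, h2, h3, h4⟩ := closure_Pk_subset hb
  simp only [corners, mem_insert_iff, mem_singleton_iff, not_or] at hc
  obtain ⟨c1, c2, c3, c4⟩ := hc
  by_cases hy : b.2 = 0 ∨ b.2 = w
  · right
    refine hs.bot b hy (lt_of_le_of_ne h3 fun h => ?_) (lt_of_le_of_ne h4 fun h => ?_)
    · rcases hy with hy | hy
      · exact c1 (Prod.ext (by rw [← h, hy]; simp) hy)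
      · exact c3 (Prod.ext (by rw [← h, hy]) hy)
    · rcases hy with hy | hy
      · exact c2 (Prod.ext (by rw [h, hy]; simp) hy)
      · exact c4 (Prod.ext (by rw [h, hy]) hy)
  · left
    rw [not_or] at hy
    have g1 : 0 < b.2 := lt_of_le_of_ne h1 (Ne.symm hy.1)
    have g2 : b.2 < w := lt_of_le_of_ne h2 hy.2
    refine hs.top b g1 g2 ?_
    by_contra hx
    rw [not_or] at hx
    exact hbP ⟨g1, g2, lt_of_le_of_ne h3 (Ne.symm hx.1), lt_of_le_of_ne h4 hx.2⟩

/-- Small circles about any point `e` avoid the corners. -/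
lemma circ_no_corner (κ w L : ℝ) (e : ℝ × ℝ) :
    ∃ d > 0, ∀ r ∈ Ioo 0 d, ∀ θ, circ e r θ ∉ corners κ w L := by
  have hfin : (corners κ w L \ {e}).Finite := by
    refine Finite.subset ?_ sdiff_subset
    unfold corners
    exact ((((finite_singleton _).insert _).insert _).insert _)
  have hmem : (corners κ w L \ {e})ᶜ ∈ 𝓝 e :=
    hfin.isClosed.isOpen_compl.mem_nhds (by simp)
  obtain ⟨d, hd, hball⟩ := Metric.mem_nhds_iff.1 hmem
  refine ⟨d, hd, fun r hr θ hc => ?_⟩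
  refine hball (a := circ e r θ) ?_ ⟨hc, ?_⟩
  · rw [mem_ball_iff_norm, Prod.norm_def]
    simp only [circ, Prod.fst_sub, Prod.snd_sub, add_sub_cancel_left, norm_mul, Real.norm_eq_abs,
      abs_of_pos hr.1]
    refine max_lt ?_ ?_
    · nlinarith [abs_cos_le_one θ, hr.1, hr.2, abs_nonneg (cos θ)]
    · nlinarith [abs_sin_le_one θ, hr.1, hr.2, abs_nonneg (sin θ)]
  · intro h
    have h1 : r * cos θ = 0 := by simpa [circ] using congrArg Prod.fst h
    have h2 : r * sin θ = 0 := by simpa [circ] using congrArg Prod.snd h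
    have h3 : r ^ 2 = 0 := by
      linear_combination r * cos θ * h1 + r * sin θ * h2 - r ^ 2 * sin_sq_add_cos_sq θ
    exact (pow_pos hr.1 2).ne' h3

/-- Polar coordinates about `e`. -/
lemma exists_circ (e x : ℝ × ℝ) :
    ∃ θ ∈ Icc (-π) π, x = circ e (√((x.1 - e.1) ^ 2 + (x.2 - e.2) ^ 2)) θ := by
  set z : ℂ := ⟨x.1 - e.1, x.2 - e.2⟩ with hz
  have hn : √((x.1 - e.1) ^ 2 + (x.2 - e.2) ^ 2) = ‖z‖ := by
    rw [Complex.norm_def, Complex.normSq_apply]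
    simp only [hz]; congr 1; ring
  refine ⟨z.arg, ⟨(Complex.neg_pi_lt_arg z).le, Complex.arg_le_pi z⟩, ?_⟩
  rw [hn, circ, Complex.norm_mul_cos_arg, Complex.norm_mul_sin_arg]
  simp [hz]

/-- If the gradient map misses a value, there are `A` and `e ∉ P` such that every small circle about
`e` contains a point of `P` with gradient within `1/2` of `A`. On a segment from a value of `∇u` to
the missed one, let `A` be the first point outside the image; the preimage of the segment up to `A`
is a path in `P` accumulating at some `e ∉ P`, and it crosses all small circles about `e`. -/
lemma exists_bad_point (hs : Sch κ w L u) (hne : ∃ B, B ∉ gradMap u '' Pk κ w L) :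
    ∃ A e : ℝ × ℝ, e ∉ Pk κ w L ∧ ∃ d > 0, ∀ r ∈ Ioo 0 d, ∃ θ ∈ Icc (-π) π,
      circ e r θ ∈ Pk κ w L ∧ ‖gradMap u (circ e r θ) - A‖ < 1 / 2 := by
  obtain ⟨B, hB⟩ := hne
  set P := Pk κ w L with hP
  set Ω := gradMap u '' P with hΩ
  have hPo : IsOpen P := isOpen_Pk κ w L
  have hmap : ∀ x ∈ P, map (gradMap u) (𝓝 x) = 𝓝 (gradMap u x) := fun x hx =>
    (hs.strict_E hx).map_nhds_eq_of_equiv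
  have hΩo : IsOpen Ω := by
    rw [isOpen_iff_mem_nhds]
    rintro _ ⟨x, hx, rfl⟩
    rw [← hmap x hx]
    exact image_mem_map (hPo.mem_nhds hx)
  set g : ℝ × ℝ → ℝ × ℝ := Function.invFunOn (gradMap u) P with hg
  have hleft : ∀ x ∈ P, g (gradMap u x) = x := fun x hx => hs.grad_inj.leftInvOn_invFunOn hx
  have hright : ∀ y ∈ Ω, gradMap u (g y) = y := fun y hy => Function.invFunOn_eq hy
  have hgP : ∀ y ∈ Ω, g y ∈ P := fun y hy => Function.invFunOn_mem hy
  have hgc : ∀ y ∈ Ω, ContinuousAt g y := by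
    rintro _ ⟨x, hx, rfl⟩
    rw [ContinuousAt, hleft x hx, ← hmap x hx, tendsto_map'_iff]
    refine tendsto_id.congr' ?_
    filter_upwards [hPo.mem_nhds hx] with y hy using (hleft y hy).symm
  have hz0 : ((L + κ * w) / 2, w / 2) ∈ P := by
    have := hs.hw
    have := hs.hL
    simp only [hP, Pk, mem_ofPred_eq]
    refine ⟨?_, ?_, ?_, ?_⟩ <;> linarith
  set A₀ := gradMap u ((L + κ * w) / 2, w / 2) with hA₀
  have hA₀Ω : A₀ ∈ Ω := ⟨_, hz0, rfl⟩
  set l : ℝ → ℝ × ℝ := fun t => A₀ + t • (B - A₀) with hl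
  have hlc : Continuous l := by fun_prop
  obtain ⟨t₁, ht₁, hin, hout⟩ := exit_first hlc hΩo (zero_le_one' ℝ) (by simpa [hl] using hA₀Ω)
    (by simpa [hl] using hB)
  set A := l t₁ with hA
  -- a limit point of the preimage of the segment
  have hcpt : IsCompact (closure P) := by
    refine (Metric.isBounded_iff_subset_closedBall (0 : ℝ × ℝ)).2
      ⟨w + |κ| * w + L, fun x hx => ?_⟩ |>.isCompact_closure
    rw [mem_closedBall_zero_iff]; exact norm_Pk_le hx
  have hev : ∀ᶠ t in 𝓝[<] t₁, t ∈ Ico 0 t₁ := by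
    filter_upwards [Ioo_mem_nhdsLT ht₁.1] with t ht using Ioo_subset_Ico_self ht
  obtain ⟨e, he, hcl⟩ := hcpt.exists_mapClusterPt (f := 𝓝[<] t₁) (u := fun t => g (l t)) (by
    rw [le_principal_iff, mem_map]
    filter_upwards [hev] with t ht using subset_closure (hgP _ (hin t ht)))
  have heP : e ∉ P := by
    intro heP
    have h1 : MapClusterPt (gradMap u e) (𝓝[<] t₁) (fun t => gradMap u (g (l t))) :=
      hcl.continuousAt_comp (hs.strict_E heP).continuousAt
    have h2 : Tendsto (fun t => gradMap u (g (l t))) (𝓝[<] t₁) (𝓝 A) := by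
      refine ((hlc.tendsto t₁).mono_left nhdsWithin_le_nhds).congr' ?_
      filter_upwards [hev] with t ht using (hright _ (hin t ht)).symm
    have h3 : ClusterPt (gradMap u e) (𝓝 A) := ClusterPt.mono h1 h2
    have h4 : gradMap u e = A := eq_of_nhds_neBot h3
    exact hout ⟨e, heP, h4⟩
  refine ⟨A, e, heP, ?_⟩
  obtain ⟨t₀, ht₀, hclose⟩ : ∃ t₀ ∈ Ico 0 t₁, ∀ t ∈ Ico t₀ t₁, ‖l t - A‖ < 1 / 2 := by
    have : ∀ᶠ t in 𝓝[<] t₁, ‖l t - A‖ < 1 / 2 := by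
      have hc : Continuous (fun t => ‖l t - A‖) := by fun_prop
      refine (hc.continuousAt (x := t₁)).eventually_lt_const (by simp [hA]) |>.filter_mono
        nhdsWithin_le_nhds
    obtain ⟨c, hc, hsub⟩ := (mem_nhdsLT_iff_exists_Ioo_subset).1 this
    have hc' : c < t₁ := hc
    refine ⟨max 0 ((c + t₁) / 2), ⟨le_max_left _ _, max_lt ht₁.1 (by linarith)⟩, fun t ht => ?_⟩
    refine hsub ⟨?_, ht.2⟩
    have := (le_max_right 0 ((c + t₁) / 2)).trans ht.1
    linarith
  set δ : ℝ × ℝ → ℝ := fun x => √((x.1 - e.1) ^ 2 + (x.2 - e.2) ^ 2) with hδ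
  have hδc : Continuous δ := by fun_prop
  have hδe : δ e = 0 := by simp [hδ]
  have hδ0 : 0 < δ (g (l t₀)) := by
    refine Real.sqrt_pos.2 ?_
    by_contra hn
    have s1 := sq_nonneg ((g (l t₀)).1 - e.1)
    have s2 := sq_nonneg ((g (l t₀)).2 - e.2)
    have e1 : ((g (l t₀)).1 - e.1) = 0 := pow_eq_zero_iff two_ne_zero |>.1 (by linarith)
    have e2 : ((g (l t₀)).2 - e.2) = 0 := pow_eq_zero_iff two_ne_zero |>.1 (by linarith)
    have : g (l t₀) = e := Prod.ext (by linarith) (by linarith)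
    exact heP (this ▸ hgP _ (hin t₀ ht₀))
  refine ⟨δ (g (l t₀)), hδ0, fun r hr => ?_⟩
  have hfreq : ∃ᶠ t in 𝓝[<] t₁, δ (g (l t)) < r := by
    have := hcl.frequently (p := fun x => δ x < r)
      (hδc.continuousAt.eventually_lt_const (by rw [hδe]; exact hr.1))
    exact this
  obtain ⟨t₂, ht₂, ht₂'⟩ := (hfreq.and_eventually (Ioo_mem_nhdsLT ht₀.2)).exists
  have hsub : Icc t₀ t₂ ⊆ Ico t₀ t₁ := fun t ht => ⟨ht.1, ht.2.trans_lt ht₂'.2⟩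
  have hcont : ContinuousOn (fun t => δ (g (l t))) (Icc t₀ t₂) := by
    intro t ht
    have h1 := hgc _ (hin t ⟨ht₀.1.trans (hsub ht).1, (hsub ht).2⟩)
    have h2 : ContinuousAt (fun t => g (l t)) t := ContinuousAt.comp (f := l) h1 hlc.continuousAt
    exact (hδc.continuousAt.comp h2).continuousWithinAt
  obtain ⟨t, ht, htr⟩ := intermediate_value_Icc' ht₂'.1.le hcont ⟨ht₂.le, hr.2.le⟩
  have htΩ := hin t ⟨ht₀.1.trans (hsub ht).1, (hsub ht).2⟩
  obtain ⟨θ, hθ, hθe⟩ := exists_circ e (g (l t))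
  have htr' : √(((g (l t)).1 - e.1) ^ 2 + ((g (l t)).2 - e.2) ^ 2) = r := htr
  rw [htr'] at hθe
  refine ⟨θ, hθ, ?_, ?_⟩
  · rw [← hθe]; exact hgP _ htΩ
  · rw [← hθe, hright _ htΩ]; exact hclose t (hsub ht)

/-- A missed value would contradict the finiteness of the Hessian energy, by `exists_bad_point` and
`circle_lower`. -/
lemma grad_surj (hs : Sch κ w L u) (B : ℝ × ℝ) : B ∈ gradMap u '' Pk κ w L := by
  by_contra hB
  obtain ⟨A, e, heP, d, hd, hpath⟩ := hs.exists_bad_point ⟨B, hB⟩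
  obtain ⟨d', hd', hcorner⟩ := circ_no_corner κ w L e
  refine hs.energy_infinite (e := e) (A := A) (lt_min hd hd') fun r hr => ?_
  obtain ⟨θ, hθ, h1, h2⟩ := hpath r ⟨hr.1, hr.2.trans_le (min_le_left _ _)⟩
  exact hs.circle_lower hr.1.le heP (fun θ' h3 h4 => hs.side_limit h3 h4
    (hcorner r ⟨hr.1, hr.2.trans_le (min_le_right _ _)⟩ θ')) hθ h1 h2

end Sch

lemma Pgram_eq_Pk (α w L : ℝ) : Pgram α w L = Pk (cos α / sin α) w L := by
  ext p
  simp only [Pgram, Pk, mem_ofPred_eq, div_mul_eq_mul_div, mul_comm (cos α) p.2]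

lemma ScherkBVP.sch {α w L : ℝ} (hw : w ∈ Set.Ioo 0 π) (hL : 0 < L) {u : ℝ × ℝ → ℝ}
    (hu : ScherkBVP α w L u) : Sch (cos α / sin α) w L u := by
  obtain ⟨h0, h1, h2, h3, h4⟩ := hu
  rw [Pgram_eq_Pk] at h0 h1 h2 h3 h4
  have hk : ∀ y : ℝ, cos α / sin α * y = y * cos α / sin α := fun y => by
    rw [div_mul_eq_mul_div, mul_comm]
  refine ⟨hw.1, hL, h0, ?_, ?_⟩
  · rintro ⟨x, y⟩ hy hx hx'
    simp only [hk] at hy hx hx'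
    rcases hy with rfl | rfl
    · simp only [zero_mul, zero_div, add_zero] at hx hx'
      exact h1 x hx hx'
    · exact h2 x hx hx'
  · rintro ⟨x, y⟩ hy hy' hx
    simp only [hk] at hy hy' hx
    rcases hx with rfl | rfl
    · exact h3 y hy hy'
    · exact h4 y hy hy'

/-- the gradient map of a Scherk translator is a bijection from
`P(α,w,L)` onto all of `ℝ²`. -/
theorem scherk_gradient_bijective (α w L : ℝ) (hα : α ∈ Set.Ioo 0 π)
    (hw : w ∈ Set.Ioo 0 π) (hL : 0 < L) (u : ℝ × ℝ → ℝ) (hu : ScherkBVP α w L u) :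
    Set.BijOn (fun p => (pdx u p, pdy u p)) (Pgram α w L) Set.univ := by
  have hs := hu.sch hw hL
  rw [Pgram_eq_Pk]
  exact ⟨fun _ _ => mem_univ _, hs.grad_inj, fun B _ => hs.grad_surj B⟩
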